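/- arXiv:2203.12801 — 4 statements merged into one kernel-verified Lean document; each statement's English description precedes it below -/
import Mathlib

section
/- Let U be a finite set and 𝓕 a family of ℓ-element subsets of U with ℓ = O(1), considered along a sequence of instances with |𝓕| → ∞. Assume that for every k with 1 ≤ k ≤ ℓ−1 and every k-element subset R of U, the number of elements of 𝓕 that contain R is O(|𝓕|^{1−k/ℓ}). Then |𝓕|^{−1/ℓ} is a threshold function for the event Γ that the random subset X contains at least one element of 𝓕, as |𝓕| → ∞. -/
open Filter Asymptotics

noncomputable def prRandomSubset {α : Type*} (U : Finset α) (θ : ℝ)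
    (E : Finset α → Prop) : ℝ :=
  ∑ A ∈ U.powerset,
    @ite ℝ (E A) (Classical.propDecidable _)
      (θ ^ A.card * (1 - θ) ^ (U.card - A.card)) 0

/-!
Let `N` be the number of members of the family contained in the random subset, so that
`E N = |F| θ ^ ℓ = (θ / a) ^ ℓ` with `a = |F| ^ (-1 / ℓ)`. If `θ = o(a)`, Markov's inequality shows
that `N = 0` with high probability. If `a = o(θ)`, Chebyshev's inequality bounds `P(N = 0)` by
`E N² / (E N)² - 1`, and `E N² = θ ^ (2 ℓ) ∑ S, T, θ ^ (-|S ∩ T|)`. Bounding `θ ^ (-|S ∩ T|)` by the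
sum of `θ ^ (-|R|)` over all `R ⊆ S ∩ T` and summing over `T` first, the set `R = ∅` contributes
the main term, while the codegree hypothesis makes every other `R` contribute at most a constant
multiple of the main term times `(a / θ) ^ |R| ≤ a / θ`.
-/

open scoped Finset

section Expectation

variable {α : Type*} {U : Finset α} {θ : ℝ}

/-- The expectation of a function of the random subset of `U` that contains each element
independently with probability `θ`, as a linear functional on real functions of finite sets. -/
noncomputable def expRandomSubset (U : Finset α) (θ : ℝ) : (Finset α → ℝ) →ₗ[ℝ] ℝ :=
  ∑ A ∈ U.powerset, (θ ^ #A * (1 - θ) ^ (#U - #A)) • LinearMap.proj A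

lemma expRandomSubset_apply (U : Finset α) (θ : ℝ) (f : Finset α → ℝ) :
    expRandomSubset U θ f = ∑ A ∈ U.powerset, θ ^ #A * (1 - θ) ^ (#U - #A) * f A := by
  simp [expRandomSubset]

lemma prRandomSubset_eq_expRandomSubset_indicator (U : Finset α) (θ : ℝ) (E : Finset α → Prop) :
    prRandomSubset U θ E = expRandomSubset U θ ({A | E A}.indicator 1) := by
  classical
  simp [prRandomSubset, expRandomSubset_apply, Set.indicator_apply]

lemma expRandomSubset_mono (h0 : 0 ≤ θ) (h1 : θ ≤ 1) : Monotone (expRandomSubset U θ) := by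
  intro f g hfg
  have : 0 ≤ 1 - θ := sub_nonneg.2 h1
  simp only [expRandomSubset_apply]
  gcongr with A
  exact hfg A

/-- Expanding `∏ i ∈ U, (θ + (1 - θ))` with the factor `1 - θ` suppressed for `i ∈ S` leaves exactly
the terms of the supersets of `S`. -/
lemma expRandomSubset_indicator_Ici {S : Finset α} (hS : S ⊆ U) :
    expRandomSubset U θ ((Set.Ici S).indicator 1) = θ ^ #S := by
  classical
  have hprod : ∏ i ∈ U, (θ + if i ∉ S then 1 - θ else 0) = θ ^ #S := by
    have hfactor : ∀ i, (θ + if i ∉ S then 1 - θ else 0) = if i ∈ S then θ else 1 := fun i => by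
      by_cases hi : i ∈ S <;> simp [hi]
    simp only [hfactor, Finset.prod_ite_mem, Finset.inter_eq_right.2 hS, Finset.prod_const]
  rw [expRandomSubset_apply, ← hprod, Finset.prod_add]
  refine Finset.sum_congr rfl fun A hA => ?_
  have hmem : (∀ i ∈ U \ A, i ∉ S) ↔ S ≤ A :=
    ⟨fun h i hi => by_contra fun hiA => h i (Finset.mem_sdiff.2 ⟨hS hi, hiA⟩) hi,
      fun h i hi hiS => (Finset.mem_sdiff.1 hi).2 (h hiS)⟩
  simp only [Set.indicator_apply, Set.mem_Ici, Pi.one_apply, Finset.prod_ite_zero, hmem,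
    Finset.prod_const, Finset.card_sdiff_of_subset (Finset.mem_powerset.1 hA), mul_ite, mul_one,
    mul_zero]

lemma expRandomSubset_one (U : Finset α) (θ : ℝ) : expRandomSubset U θ 1 = 1 := by
  have hempty : Set.Ici (∅ : Finset α) = Set.univ := Set.Ici_bot
  simpa [hempty] using expRandomSubset_indicator_Ici (θ := θ) (Finset.empty_subset U)

lemma prRandomSubset_nonneg (h0 : 0 ≤ θ) (h1 : θ ≤ 1) (E : Finset α → Prop) :
    0 ≤ prRandomSubset U θ E := by
  rw [prRandomSubset_eq_expRandomSubset_indicator, ← map_zero (expRandomSubset U θ)]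
  exact expRandomSubset_mono h0 h1 (Set.indicator_nonneg fun _ _ => zero_le_one)

lemma one_sub_prRandomSubset_not (U : Finset α) (θ : ℝ) (E : Finset α → Prop) :
    1 - prRandomSubset U θ (fun A => ¬ E A) = prRandomSubset U θ E := by
  rw [sub_eq_iff_eq_add, prRandomSubset_eq_expRandomSubset_indicator,
    prRandomSubset_eq_expRandomSubset_indicator, ← map_add, ← Set.compl_ofPred,
    Set.indicator_self_add_compl, expRandomSubset_one]

lemma mul_prRandomSubset_le_expRandomSubset (h0 : 0 ≤ θ) (h1 : θ ≤ 1) {E : Finset α → Prop}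
    {f : Finset α → ℝ} {c : ℝ} (hf : 0 ≤ f) (hE : ∀ A, E A → c ≤ f A) :
    c * prRandomSubset U θ E ≤ expRandomSubset U θ f := by
  rw [prRandomSubset_eq_expRandomSubset_indicator, ← smul_eq_mul, ← map_smul]
  refine expRandomSubset_mono h0 h1 fun A => ?_
  by_cases hA : E A
  · simpa [hA] using hE A hA
  · simpa [hA] using hf A

lemma sq_mul_prRandomSubset_eq_zero_le (h0 : 0 ≤ θ) (h1 : θ ≤ 1) (f : Finset α → ℝ) :
    expRandomSubset U θ f ^ 2 * prRandomSubset U θ (fun A => f A = 0) ≤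
      expRandomSubset U θ (f ^ 2) - expRandomSubset U θ f ^ 2 := by
  set μ := expRandomSubset U θ f with hμ
  have hvar : expRandomSubset U θ (f ^ 2 - (2 * μ) • f + μ ^ 2 • 1) =
      expRandomSubset U θ (f ^ 2) - μ ^ 2 := by
    simp only [map_add, map_sub, map_smul, expRandomSubset_one, ← hμ, smul_eq_mul]
    ring
  have hsq : f ^ 2 - (2 * μ) • f + μ ^ 2 • 1 = fun A => (f A - μ) ^ 2 := by
    ext A
    simp only [Pi.add_apply, Pi.sub_apply, Pi.smul_apply, Pi.pow_apply, Pi.one_apply, smul_eq_mul]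
    ring
  rw [← hvar, hsq]
  exact mul_prRandomSubset_le_expRandomSubset h0 h1 (fun A => sq_nonneg _) fun A hA => by simp [hA]

end Expectation

section MemberCount

variable {α : Type*} {U : Finset α} {F : Finset (Finset α)} {θ : ℝ} {ℓ : ℕ}

/-- The number of members of `F` contained in a finite set, as a real function of that set; this is
the random variable to which the first and second moment methods are applied. -/
noncomputable def memberCount (F : Finset (Finset α)) : Finset α → ℝ :=
  ∑ S ∈ F, (Set.Ici S).indicator 1

lemma memberCount_nonneg (F : Finset (Finset α)) : 0 ≤ memberCount F :=
  Finset.sum_nonneg fun _ _ => Set.indicator_nonneg fun _ _ => zero_le_one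

lemma one_le_memberCount {A : Finset α} (h : ∃ S ∈ F, S ⊆ A) : 1 ≤ memberCount F A := by
  obtain ⟨S, hS, hSA⟩ := h
  have hle : (Set.Ici S).indicator 1 ≤ memberCount F :=
    Finset.single_le_sum (f := fun T : Finset α => (Set.Ici T).indicator (1 : Finset α → ℝ))
      (fun _ _ => Set.indicator_nonneg fun _ _ => zero_le_one) hS
  simpa [hSA] using hle A

lemma memberCount_eq_zero {A : Finset α} : memberCount F A = 0 ↔ ¬ ∃ S ∈ F, S ⊆ A := by
  refine ⟨fun h hA => by linarith [one_le_memberCount hA], fun h => ?_⟩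
  rw [memberCount, Finset.sum_apply]
  exact Finset.sum_eq_zero fun S hS => Set.indicator_of_notMem (fun hSA => h ⟨S, hS, hSA⟩) _

lemma expRandomSubset_memberCount (hF : F ⊆ U.powersetCard ℓ) :
    expRandomSubset U θ (memberCount F) = #F * θ ^ ℓ := by
  rw [memberCount, map_sum, Finset.sum_congr rfl fun S hS => ?_, Finset.sum_const, nsmul_eq_mul]
  obtain ⟨hSU, hSℓ⟩ := Finset.mem_powersetCard.1 (hF hS)
  rw [expRandomSubset_indicator_Ici hSU, hSℓ]

lemma expRandomSubset_memberCount_sq [DecidableEq α] (hF : F ⊆ U.powerset) :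
    expRandomSubset U θ (memberCount F ^ 2) = ∑ S ∈ F, ∑ T ∈ F, θ ^ #(S ∪ T) := by
  simp only [sq, memberCount, Finset.sum_mul_sum, map_sum, ← Set.inter_indicator_one,
    Set.Ici_inter_Ici, Finset.sup_eq_union]
  refine Finset.sum_congr rfl fun S hS => Finset.sum_congr rfl fun T hT => ?_
  exact expRandomSubset_indicator_Ici
    (Finset.union_subset (Finset.mem_powerset.1 (hF hS)) (Finset.mem_powerset.1 (hF hT)))

lemma prRandomSubset_exists_le (h0 : 0 ≤ θ) (h1 : θ ≤ 1) (hF : F ⊆ U.powersetCard ℓ) :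
    prRandomSubset U θ (fun A => ∃ S ∈ F, S ⊆ A) ≤ #F * θ ^ ℓ := by
  rw [← expRandomSubset_memberCount hF, ← one_mul (prRandomSubset _ _ _)]
  exact mul_prRandomSubset_le_expRandomSubset h0 h1 (memberCount_nonneg F)
    fun _ => one_le_memberCount

end MemberCount

section Spread

variable {α : Type*} [DecidableEq α] {U : Finset α} {F : Finset (Finset α)} {θ C a x : ℝ} {ℓ : ℕ}

/-- The family `F` is spread at scale `a` with constant `C`: the proportion of its members that
contain a given nonempty set `R` is at most `C * a ^ |R|`, as it would be up to the constant if
members contained each element independently with probability `a`. -/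
def IsSpread (F : Finset (Finset α)) (C a : ℝ) : Prop :=
  ∀ R : Finset α, R.Nonempty → (#{T ∈ F | R ⊆ T} : ℝ) ≤ C * (#F * a ^ #R)

lemma sum_pow_card_inter_le_sum_powerset (F : Finset (Finset α)) (S : Finset α) (hx : 0 ≤ x) :
    ∑ T ∈ F, x ^ #(S ∩ T) ≤ ∑ R ∈ S.powerset, #{T ∈ F | R ⊆ T} * x ^ #R := by
  calc ∑ T ∈ F, x ^ #(S ∩ T)
      ≤ ∑ T ∈ F, ∑ R ∈ S.powerset with R ⊆ T, x ^ #R := by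
        gcongr with T
        exact Finset.single_le_sum (f := fun R => x ^ #R) (fun _ _ => by positivity)
          (by simp [Finset.inter_subset_left, Finset.inter_subset_right])
    _ = ∑ R ∈ S.powerset, ∑ T ∈ F with R ⊆ T, x ^ #R := by
        simp only [Finset.sum_filter]
        exact Finset.sum_comm
    _ = ∑ R ∈ S.powerset, #{T ∈ F | R ⊆ T} * x ^ #R := by
        simp only [Finset.sum_const, nsmul_eq_mul]

lemma IsSpread.card_mul_pow_le (h : IsSpread F C a) (hC : 0 ≤ C) (hx : 0 ≤ x) (hax0 : 0 ≤ a * x)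
    (hax1 : a * x ≤ 1) {R : Finset α} (hR : R.Nonempty) :
    #{T ∈ F | R ⊆ T} * x ^ #R ≤ C * #F * (a * x) := by
  calc #{T ∈ F | R ⊆ T} * x ^ #R
      ≤ C * (#F * a ^ #R) * x ^ #R := by
        gcongr
        exact h R hR
    _ = C * #F * (a * x) ^ #R := by ring
    _ ≤ C * #F * (a * x) := by
        gcongr
        exact pow_le_of_le_one hax0 hax1 hR.card_ne_zero

lemma IsSpread.sum_pow_card_inter_le (h : IsSpread F C a) (hC : 0 ≤ C) (hx : 0 ≤ x)
    (hax0 : 0 ≤ a * x) (hax1 : a * x ≤ 1) (S : Finset α) :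
    ∑ T ∈ F, x ^ #(S ∩ T) ≤ #F * (1 + C * 2 ^ #S * (a * x)) := by
  calc ∑ T ∈ F, x ^ #(S ∩ T)
      ≤ ∑ R ∈ S.powerset, #{T ∈ F | R ⊆ T} * x ^ #R := sum_pow_card_inter_le_sum_powerset F S hx
    _ = #F + ∑ R ∈ S.powerset.erase ∅, #{T ∈ F | R ⊆ T} * x ^ #R := by
        rw [← Finset.add_sum_erase _ _ (Finset.empty_mem_powerset S)]
        simp
    _ ≤ #F + #(S.powerset.erase ∅) • (C * #F * (a * x)) := by
        gcongr
        refine Finset.sum_le_card_nsmul _ _ _ fun R hR => ?_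
        exact h.card_mul_pow_le hC hx hax0 hax1
          (Finset.nonempty_iff_ne_empty.2 (Finset.ne_of_mem_erase hR))
    _ ≤ #F + #S.powerset • (C * #F * (a * x)) := by
        gcongr
        exact Finset.erase_subset _ _
    _ = #F * (1 + C * 2 ^ #S * (a * x)) := by
        rw [Finset.card_powerset, nsmul_eq_mul]
        push_cast
        ring

lemma IsSpread.sum_pow_card_union_le (h : IsSpread F C a) (hC : 0 ≤ C) (ha : 0 ≤ a) (hθ : 0 < θ)
    (haθ : a ≤ θ) (hF : (F : Set (Finset α)).Sized ℓ) :
    ∑ S ∈ F, ∑ T ∈ F, θ ^ #(S ∪ T) ≤ (#F * θ ^ ℓ) ^ 2 * (1 + C * 2 ^ ℓ * (a / θ)) := by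
  have hunion : ∀ S ∈ F, ∀ T ∈ F, θ ^ #(S ∪ T) = θ ^ (2 * ℓ) * θ⁻¹ ^ #(S ∩ T) := by
    intro S hS T hT
    have hcard : #(S ∪ T) + #(S ∩ T) = 2 * ℓ := by
      rw [Finset.card_union_add_card_inter, hF hS, hF hT, two_mul]
    rw [← hcard, pow_add, inv_pow, mul_inv_cancel_right₀ (by positivity)]
  have hrow : ∀ S ∈ F, ∑ T ∈ F, θ⁻¹ ^ #(S ∩ T) ≤ #F * (1 + C * 2 ^ ℓ * (a / θ)) := by
    intro S hS
    rw [← hF hS, div_eq_mul_inv]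
    exact h.sum_pow_card_inter_le hC (by positivity) (by positivity)
      (mul_inv_le_one_of_le₀ haθ hθ.le) S
  calc ∑ S ∈ F, ∑ T ∈ F, θ ^ #(S ∪ T)
      = θ ^ (2 * ℓ) * ∑ S ∈ F, ∑ T ∈ F, θ⁻¹ ^ #(S ∩ T) := by
        simp only [Finset.mul_sum]
        exact Finset.sum_congr rfl fun S hS => Finset.sum_congr rfl (hunion S hS)
    _ ≤ θ ^ (2 * ℓ) * #F • (#F * (1 + C * 2 ^ ℓ * (a / θ))) := by
        gcongr
        exact Finset.sum_le_card_nsmul _ _ _ hrow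
    _ = (#F * θ ^ ℓ) ^ 2 * (1 + C * 2 ^ ℓ * (a / θ)) := by
        rw [nsmul_eq_mul]
        ring

lemma IsSpread.prRandomSubset_not_exists_le (h : IsSpread F C a) (hC : 0 ≤ C) (ha : 0 ≤ a)
    (hθ0 : 0 < θ) (hθ1 : θ ≤ 1) (haθ : a ≤ θ) (hne : F.Nonempty) (hF : F ⊆ U.powersetCard ℓ) :
    prRandomSubset U θ (fun A => ¬ ∃ S ∈ F, S ⊆ A) ≤ C * 2 ^ ℓ * (a / θ) := by
  have hFU : F ⊆ U.powerset := fun S hS =>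
    Finset.mem_powerset.2 (Finset.mem_powersetCard.1 (hF hS)).1
  have hsized : (F : Set (Finset α)).Sized ℓ := fun S hS => (Finset.mem_powersetCard.1 (hF hS)).2
  have hmean : 0 < (#F * θ ^ ℓ) ^ 2 := by
    have := hne.card_pos
    positivity
  have hchebyshev := sq_mul_prRandomSubset_eq_zero_le (U := U) hθ0.le hθ1 (memberCount F)
  simp only [memberCount_eq_zero, expRandomSubset_memberCount hF,
    expRandomSubset_memberCount_sq hFU] at hchebyshev
  refine le_of_mul_le_mul_left ?_ hmean
  linarith [h.sum_pow_card_union_le hC ha hθ0 haθ hsized]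

end Spread

section CriticalProbability

variable {α : Type*} {U : Finset α} {F : Finset (Finset α)} {θ C : ℝ} {ℓ : ℕ}

lemma mul_rpow_neg_one_div_pow {m : ℝ} (hm : 0 < m) (r : ℝ) (k : ℕ) :
    m * (m ^ (-(1 : ℝ) / r)) ^ k = m ^ (1 - k / r) := by
  rw [← Real.rpow_mul_natCast hm.le, sub_eq_add_neg, Real.rpow_add hm, Real.rpow_one]
  congr 2
  ring

lemma mul_rpow_neg_one_div_pow_self {m : ℝ} (hm : 0 < m) (hℓ : ℓ ≠ 0) :
    m * (m ^ (-(1 : ℝ) / ℓ)) ^ ℓ = 1 := by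
  rw [mul_rpow_neg_one_div_pow hm, div_self (Nat.cast_ne_zero.2 hℓ), sub_self, Real.rpow_zero]

lemma prRandomSubset_exists_le_div (hℓ : ℓ ≠ 0) (hF : F ⊆ U.powersetCard ℓ) (h0 : 0 ≤ θ)
    (h1 : θ ≤ 1) (hθ : θ ≤ (#F : ℝ) ^ (-(1 : ℝ) / ℓ)) :
    prRandomSubset U θ (fun A => ∃ S ∈ F, S ⊆ A) ≤ θ / (#F : ℝ) ^ (-(1 : ℝ) / ℓ) := by
  refine (prRandomSubset_exists_le h0 h1 hF).trans ?_
  rcases F.eq_empty_or_nonempty with rfl | hne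
  · rw [Finset.card_empty, Nat.cast_zero, zero_mul]
    positivity
  have hm : (0 : ℝ) < #F := Nat.cast_pos.2 hne.card_pos
  set a : ℝ := (#F : ℝ) ^ (-(1 : ℝ) / ℓ)
  have ha : 0 < a := Real.rpow_pos_of_pos hm _
  calc #F * θ ^ ℓ
      = #F * a ^ ℓ * (θ / a) ^ ℓ := by rw [mul_assoc, ← mul_pow, mul_div_cancel₀ _ ha.ne']
    _ = (θ / a) ^ ℓ := by rw [mul_rpow_neg_one_div_pow_self hm hℓ, one_mul]
    _ ≤ θ / a := pow_le_of_le_one (by positivity) (div_le_one_of_le₀ hθ ha.le) hℓ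

lemma card_filter_superset_le_one [DecidableEq α] (hF : (F : Set (Finset α)).Sized ℓ)
    {R : Finset α} (hR : ℓ ≤ #R) : #{T ∈ F | R ⊆ T} ≤ 1 := by
  have heq : ∀ T ∈ F, R ⊆ T → R = T := fun T hT hRT =>
    Finset.eq_of_subset_of_card_le hRT ((hF hT).trans_le hR)
  refine Finset.card_le_one.2 fun T hT T' hT' => ?_
  rw [Finset.mem_filter] at hT hT'
  rw [← heq T hT.1 hT.2, ← heq T' hT'.1 hT'.2]

lemma isSpread_of_card_filter_le_rpow [DecidableEq α] (hF : F ⊆ U.powersetCard ℓ)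
    (hcount : ∀ R ⊆ U, R.Nonempty → #R < ℓ →
      (#{T ∈ F | R ⊆ T} : ℝ) ≤ C * (#F : ℝ) ^ (1 - (#R : ℝ) / ℓ)) :
    IsSpread F (max C 1) ((#F : ℝ) ^ (-(1 : ℝ) / ℓ)) := by
  intro R hR
  rcases {T ∈ F | R ⊆ T}.eq_empty_or_nonempty with hempty | ⟨T, hT⟩
  · rw [hempty, Finset.card_empty, Nat.cast_zero]
    positivity
  obtain ⟨hTF, hRT⟩ := Finset.mem_filter.1 hT
  obtain ⟨hTU, hTℓ⟩ := Finset.mem_powersetCard.1 (hF hTF)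
  have hm : (0 : ℝ) < #F := Nat.cast_pos.2 (Finset.card_pos.2 ⟨T, hTF⟩)
  rcases (hTℓ ▸ Finset.card_le_card hRT).lt_or_eq with hlt | heq
  · rw [mul_rpow_neg_one_div_pow hm]
    refine (hcount R (hRT.trans hTU) hR hlt).trans ?_
    gcongr
    exact le_max_left _ _
  · have hsized : (F : Set (Finset α)).Sized ℓ := fun S hS => (Finset.mem_powersetCard.1 (hF hS)).2
    rw [heq, mul_rpow_neg_one_div_pow_self hm (heq ▸ hR.card_ne_zero), mul_one]
    exact (Nat.cast_le_one.2 (card_filter_superset_le_one hsized heq.ge)).trans (le_max_right _ _)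

end CriticalProbability

section Threshold

variable {ι : Type*} {l : Filter ι} {α : ι → Type*} {U : ∀ i, Finset (α i)}
  {F : ∀ i, Finset (Finset (α i))} {ℓ : ι → ℕ} {θ : ι → ℝ}

lemma eventually_le_of_isLittleO {f g : ι → ℝ} (h : f =o[l] g)
    (hg : ∀ i, 0 ≤ g i) : ∀ᶠ i in l, f i ≤ g i := by
  filter_upwards [h.bound one_pos] with i hi
  rw [one_mul, Real.norm_of_nonneg (hg i)] at hi
  exact (le_abs_self _).trans hi

theorem tendsto_prRandomSubset_exists_zero (hℓ : ∀ i, ℓ i ≠ 0)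
    (hF : ∀ i, F i ⊆ (U i).powersetCard (ℓ i)) (h0 : ∀ i, 0 ≤ θ i) (h1 : ∀ i, θ i ≤ 1)
    (hθ : θ =o[l] fun i => (#(F i) : ℝ) ^ (-(1 : ℝ) / ℓ i)) :
    Tendsto (fun i => prRandomSubset (U i) (θ i) fun A => ∃ S ∈ F i, S ⊆ A) l (nhds 0) := by
  refine squeeze_zero' (.of_forall fun i => prRandomSubset_nonneg (h0 i) (h1 i) _) ?_
    hθ.tendsto_div_nhds_zero
  filter_upwards [eventually_le_of_isLittleO hθ fun i => by positivity] with i hi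
  exact prRandomSubset_exists_le_div (hℓ i) (hF i) (h0 i) (h1 i) hi

theorem tendsto_prRandomSubset_exists_one [∀ i, DecidableEq (α i)] {a : ι → ℝ} {C : ℝ} {L : ℕ}
    (hℓ : ∀ i, ℓ i ≤ L) (hF : ∀ i, F i ⊆ (U i).powersetCard (ℓ i))
    (hne : ∀ᶠ i in l, (F i).Nonempty) (hC : 0 ≤ C) (hspread : ∀ i, IsSpread (F i) C (a i))
    (ha : ∀ᶠ i in l, 0 < a i) (h0 : ∀ i, 0 ≤ θ i) (h1 : ∀ i, θ i ≤ 1) (hθ : a =o[l] θ) :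
    Tendsto (fun i => prRandomSubset (U i) (θ i) fun A => ∃ S ∈ F i, S ⊆ A) l (nhds 1) := by
  have hnot : Tendsto (fun i => prRandomSubset (U i) (θ i) fun A => ¬ ∃ S ∈ F i, S ⊆ A) l
      (nhds 0) := by
    have hlim : Tendsto (fun i => C * 2 ^ L * (a i / θ i)) l (nhds 0) := by
      simpa only [mul_zero] using hθ.tendsto_div_nhds_zero.const_mul (C * 2 ^ L)
    refine squeeze_zero' (.of_forall fun i => prRandomSubset_nonneg (h0 i) (h1 i) _) ?_ hlim
    filter_upwards [hne, ha, eventually_le_of_isLittleO hθ h0] with i hnei hai haθ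
    have hθi : 0 < θ i := hai.trans_le haθ
    calc prRandomSubset (U i) (θ i) (fun A => ¬ ∃ S ∈ F i, S ⊆ A)
        ≤ C * 2 ^ ℓ i * (a i / θ i) :=
          (hspread i).prRandomSubset_not_exists_le hC hai.le hθi (h1 i) haθ hnei (hF i)
      _ ≤ C * 2 ^ L * (a i / θ i) := by
          gcongr
          · exact one_le_two
          · exact hℓ i
  simpa only [one_sub_prRandomSubset_not, sub_zero] using hnot.const_sub 1

theorem stmt2_general {ι : Type*} {l : Filter ι} (α : ι → Type*) [∀ i, DecidableEq (α i)]
    (U : ∀ i, Finset (α i)) (ℓ : ι → ℕ)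
    (F : ∀ i, Finset (Finset (α i)))
    (hℓ : ∀ i, 1 ≤ ℓ i)
    (hℓbdd : ∃ C : ℕ, ∀ i, ℓ i ≤ C)
    (hF : ∀ i, ∀ S ∈ F i, S ⊆ U i ∧ S.card = ℓ i)
    (hne : ∀ᶠ i in l, (F i).Nonempty)
    (hcount : ∃ C : ℝ, ∀ i, ∀ k, 1 ≤ k → k ≤ ℓ i - 1 →
      ∀ R : Finset (α i), R ⊆ U i → R.card = k →
        (((F i).filter (fun S => R ⊆ S)).card : ℝ)
          ≤ C * ((F i).card : ℝ) ^ (1 - (k : ℝ) / (ℓ i : ℝ)))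
    (θ : ι → ℝ) (hθ : ∀ i, 0 ≤ θ i ∧ θ i ≤ 1) :
    (θ =o[l] (fun i => ((F i).card : ℝ) ^ (-(1 : ℝ) / (ℓ i : ℝ))) →
      Tendsto (fun i => prRandomSubset (U i) (θ i) (fun A => ∃ S ∈ F i, S ⊆ A))
        l (nhds 0)) ∧
    ((fun i => ((F i).card : ℝ) ^ (-(1 : ℝ) / (ℓ i : ℝ))) =o[l] θ →
      Tendsto (fun i => prRandomSubset (U i) (θ i) (fun A => ∃ S ∈ F i, S ⊆ A))
        l (nhds 1)) := by
  obtain ⟨L, hL⟩ := hℓbdd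
  obtain ⟨C, hcount⟩ := hcount
  have hFU : ∀ i, F i ⊆ (U i).powersetCard (ℓ i) := fun i S hS =>
    Finset.mem_powersetCard.2 (hF i S hS)
  have hspread : ∀ i, IsSpread (F i) (max C 1) ((#(F i) : ℝ) ^ (-(1 : ℝ) / ℓ i)) := fun i =>
    isSpread_of_card_filter_le_rpow (hFU i) fun R hRU hR hRℓ =>
      hcount i #R hR.card_pos (Nat.le_sub_one_of_lt hRℓ) R hRU rfl
  have hscale : ∀ᶠ i in l, 0 < (#(F i) : ℝ) ^ (-(1 : ℝ) / ℓ i) := hne.mono fun i hi =>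
    Real.rpow_pos_of_pos (Nat.cast_pos.2 hi.card_pos) _
  have h0 : ∀ i, 0 ≤ θ i := fun i => (hθ i).1
  have h1 : ∀ i, θ i ≤ 1 := fun i => (hθ i).2
  exact ⟨tendsto_prRandomSubset_exists_zero (fun i => Nat.one_le_iff_ne_zero.1 (hℓ i)) hFU h0 h1,
    tendsto_prRandomSubset_exists_one hL hFU hne (by positivity) hspread hscale h0 h1⟩

end Threshold

theorem stmt2 (α : ℕ → Type*) [∀ i, DecidableEq (α i)]
    (U : ∀ i, Finset (α i)) (ℓ : ℕ → ℕ)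
    (F : ∀ i, Finset (Finset (α i)))
    (hℓ : ∀ i, 1 ≤ ℓ i)
    (hℓbdd : ∃ C : ℕ, ∀ i, ℓ i ≤ C)
    (hF : ∀ i, ∀ S ∈ F i, S ⊆ U i ∧ S.card = ℓ i)
    (hFtop : Tendsto (fun i => (F i).card) atTop atTop)
    (hcount : ∃ C : ℝ, 0 < C ∧ ∀ i, ∀ k, 1 ≤ k → k ≤ ℓ i - 1 →
      ∀ R : Finset (α i), R ⊆ U i → R.card = k →
        (((F i).filter (fun S => R ⊆ S)).card : ℝ)
          ≤ C * ((F i).card : ℝ) ^ (1 - (k : ℝ) / (ℓ i : ℝ)))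
    (θ : ℕ → ℝ) (hθ : ∀ i, 0 ≤ θ i ∧ θ i ≤ 1) :
    (θ =o[atTop] (fun i => ((F i).card : ℝ) ^ (-(1 : ℝ) / (ℓ i : ℝ))) →
      Tendsto (fun i => prRandomSubset (U i) (θ i) (fun A => ∃ S ∈ F i, S ⊆ A))
        atTop (nhds 0)) ∧
    ((fun i => ((F i).card : ℝ) ^ (-(1 : ℝ) / (ℓ i : ℝ))) =o[atTop] θ →
      Tendsto (fun i => prRandomSubset (U i) (θ i) (fun A => ∃ S ∈ F i, S ⊆ A))
        atTop (nhds 1)) := by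
  have hne : ∀ᶠ i in atTop, (F i).Nonempty :=
    (hFtop.eventually_gt_atTop 0).mono fun _ => Finset.card_pos.1
  exact stmt2_general α U ℓ F hℓ hℓbdd hF hne (hcount.imp fun _ => And.right) θ hθ
end

section
/- Suppose n ≥ 2 is an integer and q is a prime power, with n + q → ∞. Let X be the random subset of F_q^n in which each point is included independently with probability θ. Then, for any integer ℓ satisfying 3 ≤ ℓ ≤ q and ℓ = O(n ln q), the event Γ that there exists an ℓ-rich line with respect to X has threshold function (q^{2n−2}·C(q,ℓ))^{−1/ℓ}, where C(q,ℓ) is the binomial coefficient. -/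
open Filter Asymptotics

def IsFlat (K : Type*) {V : Type*} [Field K] [AddCommGroup V] [Module K V]
    (m : ℕ) (S : Set V) : Prop :=
  ∃ W : Submodule K V, Module.finrank K W = m ∧ ∃ v : V, S = (v + ·) '' (W : Set V)

def ExistsRichFlat (K : Type*) {V : Type*} [Field K] [AddCommGroup V] [Module K V]
    (m ℓ : ℕ) (A : Finset V) : Prop :=
  ∃ S : Set V, IsFlat K m S ∧ ℓ ≤ (S ∩ (A : Set V)).ncard

/-! The lines of `F_q^n` form a Steiner system `S(2, q, v)` with `v = q ^ n`, and only this is used.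
Put `t = ((v / q) ^ 2 * C(q, ℓ)) ^ (-1 / ℓ)`, let `p` be the probability that a given block is
`ℓ`-rich and `P` the probability that some block is. The union bound gives `t * P ≤ 2 * θ`.

For a bound in the other direction, apply Chebyshev's inequality to the number of rich blocks.
Disjoint blocks are independent. Blocks meeting in a point `x` are independent conditionally on
whether `x` is chosen, so their covariance is `θ * (1 - θ) * c ^ 2`, where `c` is the probability
that exactly `ℓ - 1` of the other `q - 1` points of a block are chosen, and `q * θ * c ≤ ℓ * p`. The
number of meeting pairs is controlled by double counting and by Fisher's inequality. What remains is
a lower bound for `p` when `t` is small compared to `θ`. If `q * θ ≥ 3 * ℓ` then `p ≥ 1 / 2` by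
Chebyshev. If `q * θ ≤ 3 * ℓ` and `θ ≤ 1 / 2` then `(1 - θ) ^ q ≥ exp (-6 * ℓ) ≥ 729 ^ (-ℓ)`, so a
single term of the binomial tail gives `p ≥ C(q, ℓ) * (θ / 729) ^ ℓ`; for `θ > 1 / 2` this bound
follows from `p ≥ θ ^ ℓ`. Together these yield `θ * (1 - P) ≤ 777 * t`. -/

open Finset

section RandomSubset

variable {α : Type*}

/-- The expectation of `f A` over the random subset `A` of `U` with density `θ`, as a linear
functional of `f`. -/
noncomputable def randomSubsetExp (U : Finset α) (θ : ℝ) : (Finset α → ℝ) →ₗ[ℝ] ℝ :=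
  ∑ A ∈ U.powerset, (θ ^ #A * (1 - θ) ^ (#U - #A)) • LinearMap.proj A

/-- The probability that a binomial variable with parameters `q` and `θ` is at least `ℓ`. -/
noncomputable def binomTail (q : ℕ) (θ : ℝ) (ℓ : ℕ) : ℝ :=
  ∑ k ∈ Icc ℓ q, q.choose k * (θ ^ k * (1 - θ) ^ (q - k))

namespace randomSubsetExp

variable {U S T : Finset α} {θ : ℝ}

lemma apply (U : Finset α) (θ : ℝ) (f : Finset α → ℝ) :
    randomSubsetExp U θ f = ∑ A ∈ U.powerset, θ ^ #A * (1 - θ) ^ (#U - #A) * f A := by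
  simp [randomSubsetExp]

lemma congr {f g : Finset α → ℝ} (h : ∀ A ⊆ U, f A = g A) :
    randomSubsetExp U θ f = randomSubsetExp U θ g := by
  simp only [apply]
  exact sum_congr rfl fun A hA => by rw [h A (mem_powerset.1 hA)]

lemma mono (hθ : θ ∈ Set.Icc 0 1) {f g : Finset α → ℝ} (h : ∀ A ⊆ U, f A ≤ g A) :
    randomSubsetExp U θ f ≤ randomSubsetExp U θ g := by
  simp only [apply]
  exact sum_le_sum fun A hA => mul_le_mul_of_nonneg_left (h A (mem_powerset.1 hA))
    (mul_nonneg (pow_nonneg hθ.1 _) (pow_nonneg (sub_nonneg.2 hθ.2) _))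

lemma const (U : Finset α) (θ c : ℝ) : randomSubsetExp U θ (fun _ => c) = c := by
  rw [apply, ← sum_mul, sum_pow_mul_eq_add_pow]
  simp

variable [DecidableEq α]

lemma insert_of_notMem {a : α} (ha : a ∉ U) (f : Finset α → ℝ) :
    randomSubsetExp (insert a U) θ f =
      (1 - θ) * randomSubsetExp U θ f + θ * randomSubsetExp U θ fun A => f (insert a A) := by
  simp only [apply]
  rw [sum_powerset_insert ha, mul_sum, mul_sum]
  congr 1 <;> refine sum_congr rfl fun A hA => ?_
  · rw [card_insert_of_notMem ha, Nat.succ_sub (card_le_card (mem_powerset.1 hA)), pow_succ]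
    ring
  · rw [card_insert_of_notMem ha, card_insert_of_notMem fun h => ha (mem_powerset.1 hA h),
      Nat.succ_sub_succ, pow_succ]
    ring

lemma union_of_disjoint (hST : Disjoint S T) (f : Finset α → ℝ) :
    randomSubsetExp (S ∪ T) θ f =
      randomSubsetExp S θ fun A => randomSubsetExp T θ fun B => f (A ∪ B) := by
  induction S using Finset.induction_on generalizing f with
  | empty => simp [apply ∅]
  | insert a S ha ih =>
    rw [disjoint_insert_left] at hST
    rw [insert_union, insert_of_notMem (by simp [ha, hST.1]), insert_of_notMem ha, ih hST.2,
      ih hST.2]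
    simp only [insert_union]

lemma inter (h : S ⊆ U) (f : Finset α → ℝ) :
    randomSubsetExp U θ (fun A => f (A ∩ S)) = randomSubsetExp S θ f := by
  rw [← union_sdiff_of_subset h, union_of_disjoint disjoint_sdiff]
  refine congr fun A hA => ?_
  rw [congr (g := fun _ => f A) fun B hB => by congr 1; grind, const]

lemma mul_of_disjoint (hS : S ⊆ U) (hT : T ⊆ U) (hST : Disjoint S T) (f g : Finset α → ℝ) :
    randomSubsetExp U θ (fun A => f (A ∩ S) * g (A ∩ T)) =
      randomSubsetExp S θ f * randomSubsetExp T θ g := by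
  have disj := disjoint_left.1 hST
  calc randomSubsetExp U θ (fun A => f (A ∩ S) * g (A ∩ T))
      = randomSubsetExp U θ (fun A => f (A ∩ (S ∪ T) ∩ S) * g (A ∩ (S ∪ T) ∩ T)) :=
        congr fun A _ => by congr 2 <;> grind
    _ = randomSubsetExp S θ fun A => randomSubsetExp T θ fun B =>
          f ((A ∪ B) ∩ S) * g ((A ∪ B) ∩ T) := by
        rw [inter (union_subset hS hT) fun A => f (A ∩ S) * g (A ∩ T),
          union_of_disjoint hST]
    _ = randomSubsetExp S θ fun A => randomSubsetExp T θ fun B => f A * g B :=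
        congr fun A hA => congr fun B hB => by congr 2 <;> grind
    _ = randomSubsetExp S θ (randomSubsetExp T θ g • f) :=
        congr fun A _ => ((randomSubsetExp T θ).map_smul (f A) g).trans (mul_comm _ _)
    _ = randomSubsetExp S θ f * randomSubsetExp T θ g := by
        rw [map_smul, smul_eq_mul, mul_comm]

end randomSubsetExp

namespace prRandomSubset

variable {U S T : Finset α} {θ : ℝ} {E E' : Finset α → Prop}

lemma eq_exp (U : Finset α) (θ : ℝ) (E : Finset α → Prop) :
    prRandomSubset U θ E = randomSubsetExp U θ ({A | E A}.indicator 1) := by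
  rw [randomSubsetExp.apply]
  refine sum_congr rfl fun A _ => ?_
  by_cases h : E A <;> simp [h]

lemma congr (h : ∀ A ⊆ U, E A ↔ E' A) : prRandomSubset U θ E = prRandomSubset U θ E' := by
  rw [eq_exp, eq_exp]
  exact randomSubsetExp.congr fun A hA => by by_cases hE : E A <;> simp [hE, ← h A hA]

lemma mono (hθ : θ ∈ Set.Icc 0 1) (h : ∀ A ⊆ U, E A → E' A) :
    prRandomSubset U θ E ≤ prRandomSubset U θ E' := by
  rw [eq_exp, eq_exp]
  refine randomSubsetExp.mono hθ fun A hA => ?_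
  by_cases hE : E A
  · simp [hE, h A hA hE]
  · rw [Set.indicator_of_notMem (by exact hE)]
    exact Set.indicator_nonneg (fun _ _ => zero_le_one) A

lemma nonneg (hθ : θ ∈ Set.Icc 0 1) (U : Finset α) (E : Finset α → Prop) :
    0 ≤ prRandomSubset U θ E := by
  rw [eq_exp, ← randomSubsetExp.const U θ 0]
  exact randomSubsetExp.mono hθ fun A _ => Set.indicator_nonneg (fun _ _ => zero_le_one) A

lemma not (U : Finset α) (θ : ℝ) (E : Finset α → Prop) :
    prRandomSubset U θ (fun A => ¬ E A) = 1 - prRandomSubset U θ E := by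
  rw [eq_exp, eq_exp, ← randomSubsetExp.const U θ 1, ← map_sub]
  exact randomSubsetExp.congr fun A _ => by by_cases h : E A <;> simp [h]

lemma le_one (hθ : θ ∈ Set.Icc 0 1) (U : Finset α) (E : Finset α → Prop) :
    prRandomSubset U θ E ≤ 1 := by
  linarith [not U θ E, nonneg hθ U fun A => ¬ E A]

lemma exists_le_sum {ι : Type*} (hθ : θ ∈ Set.Icc 0 1) (U : Finset α) (s : Finset ι)
    (E : ι → Finset α → Prop) :
    prRandomSubset U θ (fun A => ∃ i ∈ s, E i A) ≤ ∑ i ∈ s, prRandomSubset U θ (E i) := by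
  simp only [eq_exp, ← map_sum]
  refine randomSubsetExp.mono hθ fun A _ => ?_
  have indicator_nonneg : ∀ i ∈ s, 0 ≤ {A | E i A}.indicator (1 : Finset α → ℝ) A := fun i _ =>
    Set.indicator_nonneg (fun _ _ => zero_le_one) A
  rw [Finset.sum_apply]
  by_cases h : ∃ i ∈ s, E i A
  · obtain ⟨i, hi, hE⟩ := h
    have hE' : ∃ i ∈ s, E i A := ⟨i, hi, hE⟩
    calc {A | ∃ i ∈ s, E i A}.indicator (1 : Finset α → ℝ) A = {A | E i A}.indicator 1 A := by
          simp [hE, hE']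
      _ ≤ _ := single_le_sum indicator_nonneg hi
  · simpa [h] using sum_nonneg indicator_nonneg

lemma covariance_eq (U : Finset α) (θ : ℝ) (E E' : Finset α → Prop) :
    randomSubsetExp U θ (fun A => ({A | E A}.indicator 1 A - prRandomSubset U θ E) *
        ({A | E' A}.indicator 1 A - prRandomSubset U θ E')) =
      prRandomSubset U θ (fun A => E A ∧ E' A) -
        prRandomSubset U θ E * prRandomSubset U θ E' := by
  set p := prRandomSubset U θ E with hp
  set p' := prRandomSubset U θ E' with hp'
  have expand : (fun A => ({A | E A}.indicator 1 A - p) * ({A | E' A}.indicator 1 A - p')) =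
      {A | E A ∧ E' A}.indicator 1 - p' • {A | E A}.indicator 1 - p • {A | E' A}.indicator 1 +
        fun _ => p * p' := by
    funext A
    by_cases h : E A <;> by_cases h' : E' A <;> simp [h, h'] <;> ring
  rw [expand, map_add, map_sub, map_sub, map_smul, map_smul, randomSubsetExp.const,
    ← eq_exp, ← eq_exp, ← eq_exp, ← hp, ← hp', smul_eq_mul, smul_eq_mul]
  ring

open Classical in
lemma card_filter_le_mul_sq_le {ι : Type*} (hθ : θ ∈ Set.Icc 0 1) (U : Finset α) (s : Finset ι)
    (E : ι → Finset α → Prop) {k : ℕ} (hk : k ≤ ∑ i ∈ s, prRandomSubset U θ (E i)) :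
    prRandomSubset U θ (fun A => #{i ∈ s | E i A} ≤ k) *
        (∑ i ∈ s, prRandomSubset U θ (E i) - k) ^ 2 ≤
      ∑ i ∈ s, ∑ j ∈ s, (prRandomSubset U θ (fun A => E i A ∧ E j A) -
        prRandomSubset U θ (E i) * prRandomSubset U θ (E j)) := by
  set μ := ∑ i ∈ s, prRandomSubset U θ (E i) with hμ
  have variance_eq : randomSubsetExp U θ (fun A => ((#{i ∈ s | E i A} : ℝ) - μ) ^ 2) =
      ∑ i ∈ s, ∑ j ∈ s, (prRandomSubset U θ (fun A => E i A ∧ E j A) -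
        prRandomSubset U θ (E i) * prRandomSubset U θ (E j)) := by
    simp only [← covariance_eq, ← map_sum]
    refine randomSubsetExp.congr fun A _ => ?_
    rw [card_filter, hμ]
    push_cast
    simp only [← sum_sub_distrib, sq, sum_mul_sum, Finset.sum_apply]
    simp [Set.indicator]
  rw [eq_exp, mul_comm, ← smul_eq_mul, ← map_smul, ← variance_eq]
  refine randomSubsetExp.mono hθ fun A _ => ?_
  by_cases h : #{i ∈ s | E i A} ≤ k
  · have : (#{i ∈ s | E i A} : ℝ) ≤ k := mod_cast h
    simp only [Pi.smul_apply, Set.mem_ofPred_eq, h, Set.indicator_of_mem, Pi.one_apply, smul_eq_mul,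
      mul_one]
    nlinarith
  · simp [h, sq_nonneg]

lemma le_card (S : Finset α) (θ : ℝ) (ℓ : ℕ) :
    prRandomSubset S θ (ℓ ≤ #·) = binomTail #S θ ℓ := by
  rw [prRandomSubset, binomTail]
  refine (sum_powerset_apply_card
    (fun k => @ite ℝ (ℓ ≤ k) (Classical.propDecidable _) (θ ^ k * (1 - θ) ^ (#S - k)) 0)).trans ?_
  simp only [smul_ite, smul_zero, nsmul_eq_mul, ← sum_filter]
  exact sum_congr (by grind) fun _ _ => rfl

section DecidableEq

variable [DecidableEq α]

lemma insert_of_notMem {a : α} (ha : a ∉ U) (E : Finset α → Prop) :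
    prRandomSubset (insert a U) θ E =
      (1 - θ) * prRandomSubset U θ E + θ * prRandomSubset U θ fun A => E (insert a A) := by
  simp only [eq_exp]
  exact randomSubsetExp.insert_of_notMem ha _

lemma inter (h : S ⊆ U) (E : Finset α → Prop) :
    prRandomSubset U θ (fun A => E (A ∩ S)) = prRandomSubset S θ E := by
  simp only [eq_exp]
  exact randomSubsetExp.inter h ({A | E A}.indicator 1)

lemma and_of_disjoint (hS : S ⊆ U) (hT : T ⊆ U) (hST : Disjoint S T) (E E' : Finset α → Prop) :
    prRandomSubset U θ (fun A => E (A ∩ S) ∧ E' (A ∩ T)) =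
      prRandomSubset S θ E * prRandomSubset T θ E' := by
  simp only [eq_exp]
  rw [← randomSubsetExp.mul_of_disjoint hS hT hST]
  exact randomSubsetExp.congr fun A _ => by
    by_cases h : E (A ∩ S) <;> by_cases h' : E' (A ∩ T) <;> simp [h, h']

lemma and_of_inter_singleton {x : α} (hS : insert x S ⊆ U) (hT : insert x T ⊆ U)
    (hxS : x ∉ S) (hxT : x ∉ T) (hST : Disjoint S T) (E E' : Finset α → Prop) :
    prRandomSubset U θ (fun A => E (A ∩ insert x S) ∧ E' (A ∩ insert x T)) =
      (1 - θ) * (prRandomSubset S θ E * prRandomSubset T θ E') +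
        θ * (prRandomSubset S θ (fun A => E (insert x A)) *
          prRandomSubset T θ fun A => E' (insert x A)) := by
  have hS' : S ⊆ U.erase x := by grind
  have hT' : T ⊆ U.erase x := by grind
  rw [← insert_erase (hS (mem_insert_self x S)), insert_of_notMem (notMem_erase x U),
    ← and_of_disjoint hS' hT' hST, ← and_of_disjoint hS' hT' hST]
  congr 2 <;> refine congr fun A hA => ?_
  · have hx : x ∉ A := fun h => notMem_erase x U (hA h)
    rw [inter_insert_of_notMem hx, inter_insert_of_notMem hx]
  · rw [← insert_inter_distrib, ← insert_inter_distrib]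

lemma le_card_inter (h : S ⊆ U) (θ : ℝ) (ℓ : ℕ) :
    prRandomSubset U θ (fun A => ℓ ≤ #(A ∩ S)) = binomTail #S θ ℓ := by
  rw [inter h (ℓ ≤ #·), le_card]

end DecidableEq

lemma superset (h : S ⊆ U) (θ : ℝ) : prRandomSubset U θ (S ⊆ ·) = θ ^ #S := by
  classical
  rw [congr (E' := fun A => S ⊆ A ∩ S) fun A _ => by grind, inter h (S ⊆ ·), prRandomSubset,
    sum_eq_single S]
  · simp
  · exact fun A hA hne => if_neg fun h => hne (Subset.antisymm (mem_powerset.1 hA) h)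
  · simp

end prRandomSubset

end RandomSubset

section BinomTail

variable {q r ℓ k : ℕ} {θ : ℝ}

lemma prRandomSubset_range_le_card (q : ℕ) (θ : ℝ) (ℓ : ℕ) :
    prRandomSubset (range q) θ (ℓ ≤ #·) = binomTail q θ ℓ := by
  rw [prRandomSubset.le_card, card_range]

lemma binomTail_nonneg (hθ : θ ∈ Set.Icc 0 1) (q ℓ : ℕ) : 0 ≤ binomTail q θ ℓ := by
  rw [← prRandomSubset_range_le_card]
  exact prRandomSubset.nonneg hθ _ _

lemma binomTail_le_one (hθ : θ ∈ Set.Icc 0 1) (q ℓ : ℕ) : binomTail q θ ℓ ≤ 1 := by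
  rw [← prRandomSubset_range_le_card]
  exact prRandomSubset.le_one hθ _ _

lemma binomTail_le (hθ : θ ∈ Set.Icc 0 1) (q ℓ : ℕ) :
    binomTail q θ ℓ ≤ q.choose ℓ * θ ^ ℓ :=
  calc binomTail q θ ℓ = prRandomSubset (range q) θ (ℓ ≤ #·) :=
        (prRandomSubset_range_le_card q θ ℓ).symm
    _ ≤ prRandomSubset (range q) θ (fun A => ∃ T ∈ powersetCard ℓ (range q), T ⊆ A) :=
        prRandomSubset.mono hθ fun A hA h => by
          obtain ⟨T, hTA, hT⟩ := exists_subset_card_eq h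
          exact ⟨T, mem_powersetCard.2 ⟨hTA.trans hA, hT⟩, hTA⟩
    _ ≤ ∑ T ∈ powersetCard ℓ (range q), prRandomSubset (range q) θ (T ⊆ ·) :=
        prRandomSubset.exists_le_sum hθ _ _ _
    _ = ∑ _T ∈ powersetCard ℓ (range q), θ ^ ℓ := sum_congr rfl fun _ hT => by
        rw [prRandomSubset.superset (mem_powersetCard.1 hT).1, (mem_powersetCard.1 hT).2]
    _ = q.choose ℓ * θ ^ ℓ := by simp

lemma choose_mul_le_binomTail (hθ : θ ∈ Set.Icc 0 1) (hℓ : ℓ ≤ q) :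
    q.choose ℓ * (θ ^ ℓ * (1 - θ) ^ (q - ℓ)) ≤ binomTail q θ ℓ := by
  have := hθ.1
  have := sub_nonneg.2 hθ.2
  exact single_le_sum (f := fun k => (q.choose k : ℝ) * (θ ^ k * (1 - θ) ^ (q - k)))
    (fun _ _ => by positivity) (left_mem_Icc.2 hℓ)

lemma pow_le_binomTail (hθ : θ ∈ Set.Icc 0 1) (hℓ : ℓ ≤ q) : θ ^ ℓ ≤ binomTail q θ ℓ :=
  calc θ ^ ℓ = prRandomSubset (range q) θ (range ℓ ⊆ ·) := by
        rw [prRandomSubset.superset (range_subset_range.2 hℓ), card_range]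
    _ ≤ prRandomSubset (range q) θ (ℓ ≤ #·) :=
        prRandomSubset.mono hθ fun A _ h => by simpa using card_le_card h
    _ = binomTail q θ ℓ := prRandomSubset_range_le_card q θ ℓ

lemma binomTail_succ_succ (r : ℕ) (θ : ℝ) (k : ℕ) :
    binomTail (r + 1) θ (k + 1) =
      (1 - θ) * binomTail r θ (k + 1) + θ * binomTail r θ k := by
  simp only [← prRandomSubset_range_le_card]
  rw [range_add_one, prRandomSubset.insert_of_notMem notMem_range_self]
  congr 2
  refine prRandomSubset.congr fun A hA => ?_
  rw [card_insert_of_notMem fun h => notMem_range_self (hA h), Nat.add_le_add_iff_right]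

lemma binomTail_sub_succ (θ : ℝ) (hk : k ≤ r) :
    binomTail r θ k - binomTail r θ (k + 1) = r.choose k * (θ ^ k * (1 - θ) ^ (r - k)) := by
  rw [binomTail, binomTail, ← add_sum_Ioc_eq_sum_Icc hk, Icc_add_one_left_eq_Ioc,
    add_sub_cancel_right]

lemma one_sub_binomTail_mul_sq_le (hθ : θ ∈ Set.Icc 0 1) (h : ℓ ≤ q * θ) :
    (1 - binomTail q θ ℓ) * (q * θ - ℓ) ^ 2 ≤ q * θ * (1 - θ) := by
  classical
  have mem_eq : ∀ x ∈ range q, prRandomSubset (range q) θ (x ∈ ·) = θ := fun x hx => by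
    simpa using prRandomSubset.superset (singleton_subset_iff.2 hx) θ
  have covariance : ∀ x ∈ range q, ∀ y ∈ range q,
      prRandomSubset (range q) θ (fun A => x ∈ A ∧ y ∈ A) -
        prRandomSubset (range q) θ (x ∈ ·) * prRandomSubset (range q) θ (y ∈ ·) =
      if x = y then θ * (1 - θ) else 0 := fun x hx y hy => by
    rw [mem_eq x hx, mem_eq y hy]
    split_ifs with hxy
    · simp only [← hxy, and_self, mem_eq x hx]
      ring
    · have := prRandomSubset.superset (insert_subset_iff.2 ⟨hx, singleton_subset_iff.2 hy⟩) θ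
      rw [card_pair hxy] at this
      simp only [insert_subset_iff, singleton_subset_iff] at this
      rw [this]
      ring
  have sum_eq : ∑ x ∈ range q, prRandomSubset (range q) θ (x ∈ ·) = q * θ := by
    rw [sum_congr rfl mem_eq]
    simp
  calc (1 - binomTail q θ ℓ) * (q * θ - ℓ) ^ 2
      ≤ prRandomSubset (range q) θ (fun A => #{x ∈ range q | x ∈ A} ≤ ℓ) * (q * θ - ℓ) ^ 2 := by
        rw [← prRandomSubset_range_le_card, ← prRandomSubset.not]
        refine mul_le_mul_of_nonneg_right (prRandomSubset.mono hθ fun A hA hℓ => ?_) (sq_nonneg _)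
        rw [filter_mem_eq_inter, inter_eq_right.2 hA]
        exact (not_le.1 hℓ).le
    _ ≤ ∑ x ∈ range q, ∑ y ∈ range q, if x = y then θ * (1 - θ) else 0 := by
        rw [← sum_congr rfl fun x hx => sum_congr rfl (covariance x hx), ← sum_eq]
        convert prRandomSubset.card_filter_le_mul_sq_le hθ _ _ _ (sum_eq ▸ h)
    _ = ∑ _x ∈ range q, θ * (1 - θ) := sum_congr rfl fun x hx => by rw [sum_ite_eq, if_pos hx]
    _ = q * θ * (1 - θ) := by simp [mul_assoc]

variable {α : Type*} [DecidableEq α] {U S T : Finset α} {x : α}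

lemma prRandomSubset.le_card_inter_and_sub_sq (hS : S ⊆ U) (hT : T ⊆ U) (hSr : #S = r + 1)
    (hTr : #T = r + 1) (hST : S ∩ T = {x}) (θ : ℝ) (hk : k ≤ r) :
    prRandomSubset U θ (fun A => k + 1 ≤ #(A ∩ S) ∧ k + 1 ≤ #(A ∩ T)) -
        binomTail (r + 1) θ (k + 1) ^ 2 =
      θ * (1 - θ) * (r.choose k * (θ ^ k * (1 - θ) ^ (r - k))) ^ 2 := by
  obtain ⟨hxS, hxT⟩ := mem_inter.1 (hST ▸ mem_singleton_self x)
  have card_eq : ∀ {R : Finset α}, x ∈ R → #R = r + 1 → #(R.erase x) = r := fun hx hR => by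
    rw [card_erase_of_mem hx, hR, Nat.add_sub_cancel]
  have absent : ∀ {R : Finset α}, x ∈ R → #R = r + 1 →
      prRandomSubset (R.erase x) θ (k + 1 ≤ #·) = binomTail r θ (k + 1) := fun hx hR => by
    rw [le_card, card_eq hx hR]
  have present : ∀ {R : Finset α}, x ∈ R → #R = r + 1 →
      prRandomSubset (R.erase x) θ (fun A => k + 1 ≤ #(insert x A)) = binomTail r θ k :=
    fun {R} hx hR => by
      rw [← card_eq hx hR, ← le_card]
      refine congr fun A hA => ?_
      rw [card_insert_of_notMem fun h => notMem_erase x R (hA h), Nat.add_le_add_iff_right]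
  have disj : Disjoint (S.erase x) (T.erase x) := by
    rw [disjoint_iff_inter_eq_empty, inter_erase, erase_inter, hST, erase_singleton, erase_empty]
  have joint := and_of_inter_singleton (θ := θ) ((insert_erase hxS).trans_subset hS)
    ((insert_erase hxT).trans_subset hT) (notMem_erase x S) (notMem_erase x T) disj
    (k + 1 ≤ #·) (k + 1 ≤ #·)
  rw [insert_erase hxS, insert_erase hxT, absent hxS hSr, absent hxT hTr, present hxS hSr,
    present hxT hTr] at joint
  rw [joint, binomTail_succ_succ, ← binomTail_sub_succ θ hk]
  ring

lemma prRandomSubset.mul_le_card_inter_and_sub_sq_le (hS : S ⊆ U) (hT : T ⊆ U) (hSq : #S = q)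
    (hTq : #T = q) (hST : S ∩ T = {x}) (hθ : θ ∈ Set.Icc 0 1) (hℓ₀ : 1 ≤ ℓ) (hℓ : ℓ ≤ q) :
    q ^ 2 * θ * (prRandomSubset U θ (fun A => ℓ ≤ #(A ∩ S) ∧ ℓ ≤ #(A ∩ T)) -
        binomTail q θ ℓ ^ 2) ≤ (ℓ * binomTail q θ ℓ) ^ 2 := by
  obtain ⟨k, rfl⟩ := Nat.exists_eq_add_of_le' hℓ₀
  obtain ⟨r, rfl⟩ := Nat.exists_eq_add_of_le' (hℓ₀.trans hℓ)
  have hk : k ≤ r := Nat.le_of_succ_le_succ hℓ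
  rw [le_card_inter_and_sub_sq hS hT hSq hTq hST θ hk]
  have hθ0 := hθ.1
  have hθ1 := sub_nonneg.2 hθ.2
  set c := (r.choose k : ℝ) * (θ ^ k * (1 - θ) ^ (r - k)) with hc
  have hc_le : (r + 1) * θ * c ≤ (k + 1) * binomTail (r + 1) θ (k + 1) :=
    calc (r + 1) * θ * c = ((r + 1) * r.choose k : ℝ) * (θ ^ (k + 1) * (1 - θ) ^ (r - k)) := by
          rw [hc]; ring
      _ = (k + 1) * ((r + 1).choose (k + 1) * (θ ^ (k + 1) * (1 - θ) ^ (r + 1 - (k + 1)))) := by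
          rw [show ((r + 1) * r.choose k : ℝ) = (r + 1).choose (k + 1) * (k + 1) from
            mod_cast Nat.add_one_mul_choose_eq r k, Nat.add_sub_add_right]
          ring
      _ ≤ _ := by gcongr; exact choose_mul_le_binomTail hθ hℓ
  push_cast
  calc (r + 1 : ℝ) ^ 2 * θ * (θ * (1 - θ) * c ^ 2) = (1 - θ) * ((r + 1) * θ * c) ^ 2 := by ring
    _ ≤ 1 * ((r + 1) * θ * c) ^ 2 := by gcongr; linarith
    _ ≤ ((k + 1) * binomTail (r + 1) θ (k + 1)) ^ 2 := by rw [one_mul]; gcongr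

end BinomTail

section SteinerSystem

/-- `𝓛` is a Steiner system `S(2, q, v)` on the `v` points of `α`: all blocks have `q` points, and
two distinct points lie on exactly one block. The lines of a finite affine space form one. -/
structure IsSteinerSystem {α : Type*} (𝓛 : Finset (Finset α)) (q : ℕ) : Prop where
  card_eq : ∀ L ∈ 𝓛, #L = q
  existsUnique : ∀ a b, a ≠ b → ∃! L, L ∈ 𝓛 ∧ a ∈ L ∧ b ∈ L

namespace IsSteinerSystem

variable {α : Type*} {𝓛 : Finset (Finset α)} {L L' : Finset α} {q : ℕ}

lemma eq_of_mem (h : IsSteinerSystem 𝓛 q) (hL : L ∈ 𝓛) (hL' : L' ∈ 𝓛) {a b : α} (hab : a ≠ b)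
    (ha : a ∈ L) (hb : b ∈ L) (ha' : a ∈ L') (hb' : b ∈ L') : L = L' :=
  (h.existsUnique a b hab).unique ⟨hL, ha, hb⟩ ⟨hL', ha', hb'⟩

lemma card_inter_le_one [DecidableEq α] (h : IsSteinerSystem 𝓛 q) (hL : L ∈ 𝓛) (hL' : L' ∈ 𝓛)
    (hne : L ≠ L') : #(L ∩ L') ≤ 1 := by
  refine card_le_one.2 fun a ha b hb => by_contra fun hab => hne ?_
  rw [mem_inter] at ha hb
  exact h.eq_of_mem hL hL' hab ha.1 hb.1 ha.2 hb.2

variable [Fintype α]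

lemma card_filter_mem_mul [DecidableEq α] (h : IsSteinerSystem 𝓛 q) (a : α) :
    (#{L ∈ 𝓛 | a ∈ L} : ℝ) * (q - 1) = Fintype.card α - 1 := by
  have partition : univ.erase a = {L ∈ 𝓛 | a ∈ L}.biUnion (·.erase a) := by
    ext b
    simp only [mem_erase, mem_univ, and_true, mem_biUnion, mem_filter]
    refine ⟨fun hb => ?_, fun ⟨_, _, hb, _⟩ => hb⟩
    obtain ⟨L, ⟨hL, ha, hb'⟩, -⟩ := h.existsUnique a b hb.symm
    exact ⟨L, ⟨hL, ha⟩, hb, hb'⟩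
  have disj : ({L ∈ 𝓛 | a ∈ L} : Set (Finset α)).PairwiseDisjoint (·.erase a) := by
    intro L hL L' hL' hne
    refine disjoint_left.2 fun b hb hb' => hne ?_
    rw [mem_erase] at hb hb'
    exact h.eq_of_mem hL.1 hL'.1 hb.1 hb.2 hL.2 hb'.2 hL'.2
  calc (#{L ∈ 𝓛 | a ∈ L} : ℝ) * (q - 1) = ∑ L ∈ 𝓛 with a ∈ L, (#(L.erase a) : ℝ) := by
        rw [← nsmul_eq_mul, ← sum_const]
        refine sum_congr rfl fun L hL => ?_
        rw [mem_filter] at hL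
        rw [cast_card_erase_of_mem hL.2, h.card_eq L hL.1]
    _ = #(univ.erase a) := by
        rw [partition, card_biUnion (by simpa using disj)]
        push_cast
        rfl
    _ = Fintype.card α - 1 := cast_card_erase_of_mem (mem_univ a)

lemma card_mul (h : IsSteinerSystem 𝓛 q) :
    (#𝓛 : ℝ) * (q * (q - 1)) = Fintype.card α * (Fintype.card α - 1) := by
  classical
  have double_count : ∑ a : α, #{L ∈ 𝓛 | a ∈ L} = ∑ L ∈ 𝓛, #L := by
    simpa [bipartiteAbove, bipartiteBelow] using
      sum_card_bipartiteAbove_eq_sum_card_bipartiteBelow (s := univ) (t := 𝓛) (· ∈ ·)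
  calc (#𝓛 : ℝ) * (q * (q - 1)) = (∑ L ∈ 𝓛, #L : ℕ) * (q - 1) := by
        rw [sum_congr rfl h.card_eq, sum_const, smul_eq_mul]
        push_cast
        ring
    _ = ∑ a : α, (#{L ∈ 𝓛 | a ∈ L} : ℝ) * (q - 1) := by
        rw [← double_count, ← sum_mul, Nat.cast_sum]
    _ = Fintype.card α * (Fintype.card α - 1) := by
        rw [sum_congr rfl fun a _ => h.card_filter_mem_mul a, sum_const, card_univ, nsmul_eq_mul]

lemma sq_card_le (h : IsSteinerSystem 𝓛 q) (hq : 2 ≤ q) (hqv : q ≤ Fintype.card α) :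
    (Fintype.card α : ℝ) ^ 2 ≤ #𝓛 * q ^ 2 := by
  have hq' : (2 : ℝ) ≤ q := mod_cast hq
  have hqv' : (q : ℝ) ≤ Fintype.card α := mod_cast hqv
  refine le_of_mul_le_mul_right ?_ (by linarith : (0 : ℝ) < q - 1)
  calc (Fintype.card α : ℝ) ^ 2 * (q - 1) ≤ q * (Fintype.card α * (Fintype.card α - 1)) := by
        nlinarith
    _ = #𝓛 * q ^ 2 * (q - 1) := by rw [← h.card_mul]; ring

lemma card_mul_sq_le (h : IsSteinerSystem 𝓛 q) (hq : 2 ≤ q) :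
    (#𝓛 * q ^ 2 : ℝ) ≤ 2 * Fintype.card α ^ 2 := by
  have hq' : (2 : ℝ) ≤ q := mod_cast hq
  refine le_of_mul_le_mul_right ?_ (by linarith : (0 : ℝ) < q - 1)
  calc #𝓛 * q ^ 2 * ((q : ℝ) - 1) = q * (Fintype.card α * (Fintype.card α - 1)) := by
        rw [← h.card_mul]; ring
    _ ≤ 2 * (Fintype.card α : ℝ) ^ 2 * (q - 1) := by
        nlinarith [sq_nonneg (Fintype.card α : ℝ), (Fintype.card α).cast_nonneg (α := ℝ)]

lemma card_filter_not_disjoint_le [DecidableEq α] (h : IsSteinerSystem 𝓛 q) (hq : 2 ≤ q)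
    (hL : L ∈ 𝓛) :
    (#{L' ∈ 𝓛 | L ≠ L' ∧ ¬ Disjoint L L'} : ℝ) ≤ 2 * (Fintype.card α - q) := by
  have cover : {L' ∈ 𝓛 | L ≠ L' ∧ ¬ Disjoint L L'} ⊆
      L.biUnion fun a => {L' ∈ 𝓛 | a ∈ L'}.erase L := by
    intro L' hL'
    obtain ⟨hL', hne, hdisj⟩ := mem_filter.1 hL'
    obtain ⟨a, ha, ha'⟩ := not_disjoint_iff.1 hdisj
    exact mem_biUnion.2 ⟨a, ha, mem_erase.2 ⟨hne.symm, mem_filter.2 ⟨hL', ha'⟩⟩⟩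
  have hq' : (2 : ℝ) ≤ q := mod_cast hq
  have hqv : (q : ℝ) ≤ Fintype.card α := by
    rw [← h.card_eq L hL]
    exact mod_cast card_le_univ L
  refine le_of_mul_le_mul_right ?_ (by linarith : (0 : ℝ) < q - 1)
  calc (#{L' ∈ 𝓛 | L ≠ L' ∧ ¬ Disjoint L L'} : ℝ) * (q - 1)
      ≤ (∑ a ∈ L, #({L' ∈ 𝓛 | a ∈ L'}.erase L) : ℕ) * (q - 1) := by
        gcongr
        · linarith
        · exact (card_le_card cover).trans card_biUnion_le
    _ = ∑ _a ∈ L, ((Fintype.card α : ℝ) - q) := by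
        push_cast
        rw [sum_mul]
        refine sum_congr rfl fun a ha => ?_
        rw [cast_card_erase_of_mem (mem_filter.2 ⟨hL, ha⟩), sub_mul, h.card_filter_mem_mul a]
        ring
    _ = q * (Fintype.card α - q) := by rw [sum_const, h.card_eq L hL, nsmul_eq_mul]
    _ ≤ 2 * (Fintype.card α - q) * (q - 1) := by nlinarith

/-- Fisher's inequality: a block misses some point `b`, and the blocks joining `b` to its `q` points
are distinct. -/
lemma sq_le_two_mul_card (h : IsSteinerSystem 𝓛 q) (hL : L ∈ 𝓛) (hqv : q < Fintype.card α) :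
    q ^ 2 ≤ 2 * Fintype.card α := by
  classical
  obtain ⟨b, hb⟩ : ∃ b, b ∉ L := by
    by_contra! hb
    rw [← h.card_eq L hL, eq_univ_iff_forall.2 hb, card_univ] at hqv
    exact hqv.false
  have cover : L ⊆ {L' ∈ 𝓛 | b ∈ L'}.biUnion (L ∩ ·) := fun a ha => by
    obtain ⟨L', ⟨hL', ha', hb'⟩, -⟩ := h.existsUnique a b (ne_of_mem_of_not_mem ha hb)
    exact mem_biUnion.2 ⟨L', mem_filter.2 ⟨hL', hb'⟩, mem_inter.2 ⟨ha, ha'⟩⟩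
  have q_le : q ≤ #{L' ∈ 𝓛 | b ∈ L'} := by
    calc q = #L := (h.card_eq L hL).symm
      _ ≤ #{L' ∈ 𝓛 | b ∈ L'} * 1 := by
        refine (card_le_card cover).trans (card_biUnion_le_card_mul _ _ _ fun L' hL' => ?_)
        rw [mem_filter] at hL'
        exact h.card_inter_le_one hL hL'.1 fun hLL' => hb (hLL' ▸ hL'.2)
      _ = _ := mul_one _
  have replication := h.card_filter_mem_mul b
  have q_le' : (q : ℝ) ≤ #{L' ∈ 𝓛 | b ∈ L'} := mod_cast q_le
  have : (q : ℝ) ^ 2 ≤ 2 * Fintype.card α := by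
    rcases q.eq_zero_or_pos with rfl | hq
    · simp
    · have : (1 : ℝ) ≤ q := mod_cast hq
      nlinarith
  exact mod_cast this

end IsSteinerSystem

end SteinerSystem

section Estimates

/-- The threshold for an `ℓ`-rich block in a Steiner system `S(2, q, v)`, with the number of blocks
replaced by `(v / q) ^ 2`, which is correct up to a factor of `2`. -/
noncomputable def richThreshold (v q ℓ : ℕ) : ℝ :=
  ((v / q : ℝ) ^ 2 * q.choose ℓ) ^ (-(1 : ℝ) / ℓ)

variable {v q ℓ : ℕ} {θ : ℝ}

lemma richThreshold_pos (hℓ : ℓ ≤ q) (hq : 0 < q) (hv : 0 < v) : 0 < richThreshold v q ℓ := by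
  have := Nat.choose_pos hℓ
  unfold richThreshold
  positivity

lemma richThreshold_pow_mul (hℓ₀ : 0 < ℓ) (hℓ : ℓ ≤ q) (hv : 0 < v) :
    richThreshold v q ℓ ^ ℓ * ((v / q) ^ 2 * q.choose ℓ) = 1 := by
  have hC : 0 < q.choose ℓ := Nat.choose_pos hℓ
  have hq : 0 < q := hℓ₀.trans_le hℓ
  have hpos : (0 : ℝ) < (v / q : ℝ) ^ 2 * q.choose ℓ := by positivity
  rw [richThreshold, ← Real.rpow_mul_natCast hpos.le, div_mul_cancel₀ _ (by positivity),
    Real.rpow_neg_one, inv_mul_cancel₀ hpos.ne']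

lemma one_le_mul_richThreshold (hℓ₀ : 0 < ℓ) (hℓ : ℓ ≤ q) (hqv : q ≤ v) :
    1 ≤ q * (v / q : ℝ) ^ 2 * richThreshold v q ℓ := by
  have hq : 0 < q := hℓ₀.trans_le hℓ
  have ht := richThreshold_pos hℓ hq (hq.trans_le hqv)
  have hM : 1 ≤ (v / q : ℝ) ^ 2 :=
    one_le_pow₀ ((one_le_div (by positivity)).2 (mod_cast hqv))
  refine (one_le_pow_iff_of_nonneg (by positivity) hℓ₀.ne').1 ?_
  calc 1 = richThreshold v q ℓ ^ ℓ * ((v / q) ^ 2 * q.choose ℓ) :=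
        (richThreshold_pow_mul hℓ₀ hℓ (hq.trans_le hqv)).symm
    _ ≤ richThreshold v q ℓ ^ ℓ * (((v / q) ^ 2) ^ ℓ * q ^ ℓ) := by
        gcongr
        · exact le_self_pow₀ hM hℓ₀.ne'
        · exact mod_cast Nat.choose_le_pow q ℓ
    _ = (q * (v / q : ℝ) ^ 2 * richThreshold v q ℓ) ^ ℓ := by ring

lemma choose_mul_pow_le (q ℓ : ℕ) : (q.choose ℓ * ℓ ^ ℓ : ℝ) ≤ (3 * q) ^ ℓ := by
  calc (q.choose ℓ * ℓ ^ ℓ : ℝ) ≤ q ^ ℓ / ℓ.factorial * ℓ ^ ℓ := by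
        gcongr
        exact Nat.choose_le_pow_div ℓ q
    _ = q ^ ℓ * (ℓ ^ ℓ / ℓ.factorial) := by ring
    _ ≤ q ^ ℓ * Real.exp ℓ := by
        gcongr
        exact Real.pow_div_factorial_le_exp ℓ ℓ.cast_nonneg ℓ
    _ ≤ q ^ ℓ * 3 ^ ℓ := by
        rw [← Real.exp_one_pow]
        gcongr
        exact Real.exp_one_lt_three.le
    _ = (3 * q) ^ ℓ := by ring

lemma sq_le_mul_richThreshold (hℓ₀ : 2 ≤ ℓ) (hℓ : ℓ ≤ q) (hq : q ^ 2 ≤ 2 * v) :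
    (ℓ : ℝ) ^ 2 ≤ 24 * v * richThreshold v q ℓ := by
  have hq₀ : 0 < q := by omega
  have hv : 0 < v := by have := pow_pos hq₀ 2; omega
  have ht := richThreshold_pos hℓ hq₀ hv
  obtain ⟨k, rfl⟩ := Nat.exists_eq_add_of_le' hℓ₀
  set t := richThreshold v q (k + 2)
  have hℓ_pow : ((k + 2 : ℕ) : ℝ) ^ 2 ≤ 4 ^ (k + 2) := by
    rw [show (4 : ℝ) = 2 ^ 2 by norm_num, ← pow_mul, mul_comm, pow_mul]
    gcongr
    exact mod_cast (k + 2).lt_two_pow_self.le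
  have power_bound : ((k + 2 : ℕ) ^ 2 : ℝ) ^ (k + 2) * ((v / q : ℝ) ^ 2 * q.choose (k + 2)) ≤
      (24 * v : ℝ) ^ (k + 2) :=
    calc ((k + 2 : ℕ) ^ 2 : ℝ) ^ (k + 2) * ((v / q : ℝ) ^ 2 * q.choose (k + 2))
        = (k + 2 : ℕ) ^ 2 * (k + 2 : ℕ) ^ k * (v / q : ℝ) ^ 2 *
            (q.choose (k + 2) * (k + 2 : ℕ) ^ (k + 2)) := by
          rw [← pow_mul, two_mul, pow_add _ (k + 2), add_comm k 2, pow_add _ 2]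
          ring
      _ ≤ 4 ^ (k + 2) * q ^ k * (v / q : ℝ) ^ 2 * (3 * q) ^ (k + 2) := by
          gcongr ?_ * ?_ ^ k * _ * ?_
          · exact mod_cast (by omega : k + 2 ≤ q)
          · exact choose_mul_pow_le q (k + 2)
      _ = (4 * 3) ^ (k + 2) * (v : ℝ) ^ 2 * (q ^ 2) ^ k := by
          rw [mul_pow 4]
          field_simp
          ring
      _ ≤ (4 * 3) ^ (k + 2) * (2 * v : ℝ) ^ 2 * (2 * v) ^ k := by
          gcongr
          · linarith [v.cast_nonneg (α := ℝ)]
          · exact mod_cast hq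
      _ = (24 * v : ℝ) ^ (k + 2) := by
          rw [mul_assoc, ← pow_add, add_comm 2, ← mul_pow]
          ring_nf
  refine (pow_le_pow_iff_left₀ (by positivity) (by positivity) (by omega : k + 2 ≠ 0)).1 ?_
  calc ((k + 2 : ℕ) ^ 2 : ℝ) ^ (k + 2)
      = ((k + 2 : ℕ) ^ 2 : ℝ) ^ (k + 2) * ((v / q) ^ 2 * q.choose (k + 2)) * t ^ (k + 2) := by
        rw [mul_assoc, mul_comm _ (t ^ _), richThreshold_pow_mul (by omega) hℓ hv, mul_one]
    _ ≤ (24 * v) ^ (k + 2) * t ^ (k + 2) := by gcongr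
    _ = (24 * v * t) ^ (k + 2) := by ring

lemma one_le_one_sub_pow_mul (hθ : θ ∈ Set.Icc 0 (1 / 2)) (h : q * θ ≤ 3 * ℓ) :
    1 ≤ (1 - θ) ^ q * 729 ^ ℓ := by
  obtain ⟨hθ₀, hθ₁⟩ := hθ
  have base : 1 ≤ (1 - θ) * Real.exp (2 * θ) := by
    nlinarith [Real.add_one_le_exp (2 * θ)]
  calc 1 ≤ ((1 - θ) * Real.exp (2 * θ)) ^ q := one_le_pow₀ base
    _ = (1 - θ) ^ q * Real.exp (2 * (q * θ)) := by
        rw [mul_pow, ← Real.exp_nat_mul]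
        ring_nf
    _ ≤ (1 - θ) ^ q * Real.exp (ℓ * 6) := by
        gcongr ?_ * Real.exp ?_
        · exact pow_nonneg (by linarith) q
        · linarith
    _ = (1 - θ) ^ q * (Real.exp 1 ^ 6) ^ ℓ := by
        rw [Real.exp_nat_mul, Real.exp_one_pow]
        norm_num
    _ ≤ (1 - θ) ^ q * (3 ^ 6) ^ ℓ := by
        gcongr
        · exact pow_nonneg (by linarith) q
        · exact Real.exp_one_lt_three.le
    _ = (1 - θ) ^ q * 729 ^ ℓ := by norm_num

lemma one_sub_binomTail_mul_le (hθ : θ ∈ Set.Icc 0 1) (hℓ : 0 < ℓ) (h : 3 * ℓ ≤ q * θ) :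
    (1 - binomTail q θ ℓ) * (q * θ) ≤ 9 / 4 := by
  have hℓ' : (0 : ℝ) < ℓ := mod_cast hℓ
  have hqθ : 0 < q * θ := by linarith
  refine le_of_mul_le_mul_right ?_ hqθ
  calc (1 - binomTail q θ ℓ) * (q * θ) * (q * θ)
      ≤ (1 - binomTail q θ ℓ) * (9 / 4 * (q * θ - ℓ) ^ 2) := by
        rw [mul_assoc]
        gcongr ?_ * ?_
        · exact sub_nonneg.2 (binomTail_le_one hθ q ℓ)
        · nlinarith
    _ = 9 / 4 * ((1 - binomTail q θ ℓ) * (q * θ - ℓ) ^ 2) := by ring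
    _ ≤ 9 / 4 * (q * θ * (1 - θ)) := by
        gcongr 9 / 4 * ?_
        exact one_sub_binomTail_mul_sq_le hθ (by linarith)
    _ ≤ 9 / 4 * (q * θ) := by nlinarith [hθ.1]

lemma choose_mul_div_pow_le_binomTail (hθ : θ ∈ Set.Icc 0 1) (hℓ : ℓ ≤ q) (h : q * θ ≤ 3 * ℓ) :
    q.choose ℓ * (θ / 729) ^ ℓ ≤ binomTail q θ ℓ := by
  obtain ⟨hθ₀, hθ₁⟩ := hθ
  rw [div_pow, ← mul_div_assoc, div_le_iff₀ (by positivity)]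
  rcases le_or_gt θ (1 / 2) with hθ₂ | hθ₂
  · calc q.choose ℓ * θ ^ ℓ ≤ q.choose ℓ * θ ^ ℓ * ((1 - θ) ^ q * 729 ^ ℓ) :=
          le_mul_of_one_le_right (by positivity) (one_le_one_sub_pow_mul ⟨hθ₀, hθ₂⟩ h)
      _ = q.choose ℓ * (θ ^ ℓ * (1 - θ) ^ q) * 729 ^ ℓ := by ring
      _ ≤ q.choose ℓ * (θ ^ ℓ * (1 - θ) ^ (q - ℓ)) * 729 ^ ℓ := by
          gcongr ?_ * (?_ * ?_) * ?_
          exact pow_le_pow_of_le_one (by linarith) (by linarith) (Nat.sub_le q ℓ)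
      _ ≤ binomTail q θ ℓ * 729 ^ ℓ := by
          gcongr
          exact choose_mul_le_binomTail ⟨hθ₀, hθ₁⟩ hℓ
  · have q_le : q ≤ 6 * ℓ := by
      have : (q : ℝ) ≤ 6 * ℓ := by nlinarith [q.cast_nonneg (α := ℝ)]
      exact mod_cast this
    calc q.choose ℓ * θ ^ ℓ ≤ 2 ^ (6 * ℓ) * θ ^ ℓ := by
          gcongr
          exact mod_cast (Nat.choose_le_two_pow q ℓ).trans (Nat.pow_le_pow_right two_pos q_le)
      _ = θ ^ ℓ * 64 ^ ℓ := by rw [pow_mul]; norm_num [mul_comm]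
      _ ≤ binomTail q θ ℓ * 729 ^ ℓ := by
          gcongr
          · exact binomTail_nonneg ⟨hθ₀, hθ₁⟩ q ℓ
          · exact pow_le_binomTail ⟨hθ₀, hθ₁⟩ hℓ
          · norm_num

lemma mul_one_sub_binomTail_le (hθ : θ ∈ Set.Icc 0 1) (hℓ₀ : 2 ≤ ℓ) (hℓ : ℓ ≤ q) (hqv : q ≤ v)
    (h : 729 * richThreshold v q ℓ ≤ θ) :
    θ * (1 - binomTail q θ ℓ) ≤ 729 * richThreshold v q ℓ * ((v / q) ^ 2 * binomTail q θ ℓ) := by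
  have hq : 0 < q := by omega
  have hv : 0 < v := hq.trans_le hqv
  have ht := richThreshold_pos hℓ hq hv
  have hℓ_pos : (2 : ℝ) ≤ ℓ := mod_cast hℓ₀
  have p_nonneg := binomTail_nonneg hθ q ℓ
  set t := richThreshold v q ℓ
  set p := binomTail q θ ℓ
  rcases le_or_gt (3 * ℓ : ℝ) (q * θ) with hqθ | hqθ
  · have chebyshev : (1 - p) * (q * θ) ≤ 9 / 4 := one_sub_binomTail_mul_le hθ (by omega) hqθ
    have half_le : 1 / 2 ≤ p := by nlinarith
    have one_le : 1 ≤ q * (v / q : ℝ) ^ 2 * t := one_le_mul_richThreshold (by omega) hℓ hqv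
    refine le_of_mul_le_mul_left ?_ (by positivity : (0 : ℝ) < q)
    calc q * (θ * (1 - p)) ≤ 9 / 4 * 1 := by linarith
      _ ≤ 729 * p * (q * (v / q : ℝ) ^ 2 * t) := by gcongr; linarith
      _ = q * (729 * t * ((v / q) ^ 2 * p)) := by ring
  · have ratio_ge : 1 ≤ θ / 729 / t := by rw [one_le_div ht]; linarith
    have ratio_le : θ / 729 / t ≤ (v / q) ^ 2 * p :=
      calc θ / 729 / t ≤ (θ / 729 / t) ^ ℓ := le_self_pow₀ ratio_ge (by omega)
        _ = (θ / 729) ^ ℓ / t ^ ℓ * (t ^ ℓ * ((v / q) ^ 2 * q.choose ℓ)) := by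
            rw [richThreshold_pow_mul (by omega) hℓ hv, mul_one, div_pow]
        _ = (v / q) ^ 2 * (q.choose ℓ * (θ / 729) ^ ℓ) := by field_simp
        _ ≤ (v / q) ^ 2 * p := by
            gcongr
            exact choose_mul_div_pow_le_binomTail hθ hℓ hqθ.le
    rw [div_le_iff₀ ht] at ratio_le
    nlinarith [hθ.1]

end Estimates

section RichBlock

namespace IsSteinerSystem

variable {α : Type*} [Fintype α] {𝓛 : Finset (Finset α)} {L L' : Finset α}
  {q ℓ : ℕ} {θ : ℝ}

lemma sq_mul_card_sub_le (h : IsSteinerSystem 𝓛 q) (hqv : q ≤ Fintype.card α) (hℓ₀ : 2 ≤ ℓ)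
    (hℓ : ℓ ≤ q) : (ℓ : ℝ) ^ 2 * (Fintype.card α - q) ≤
      24 * richThreshold (Fintype.card α) q ℓ * Fintype.card α ^ 2 := by
  have ht := richThreshold_pos hℓ (by omega) (by omega : 0 < Fintype.card α)
  rcases hqv.eq_or_lt with heq | hlt
  · rw [heq, sub_self, mul_zero]
    rw [heq] at ht
    positivity
  · obtain ⟨L, hL⟩ : 𝓛.Nonempty := by
      obtain ⟨a, b, hab⟩ := Fintype.exists_pair_of_one_lt_card (by omega : 1 < Fintype.card α)
      exact (h.existsUnique a b hab).exists.imp fun _ hL => hL.1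
    calc (ℓ : ℝ) ^ 2 * (Fintype.card α - q)
        ≤ 24 * Fintype.card α * richThreshold (Fintype.card α) q ℓ * Fintype.card α := by
          gcongr
          · exact sub_nonneg.2 (mod_cast hqv)
          · exact sq_le_mul_richThreshold hℓ₀ hℓ (h.sq_le_two_mul_card hL hlt)
          · exact sub_le_self _ q.cast_nonneg
      _ = _ := by ring

variable [DecidableEq α]

lemma pr_rich_eq (h : IsSteinerSystem 𝓛 q) (hL : L ∈ 𝓛) (θ : ℝ) (ℓ : ℕ) :
    prRandomSubset univ θ (fun A => ℓ ≤ #(A ∩ L)) = binomTail q θ ℓ := by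
  rw [prRandomSubset.le_card_inter (subset_univ L), h.card_eq L hL]

lemma pr_exists_rich_le (h : IsSteinerSystem 𝓛 q) (ℓ : ℕ) (hθ : θ ∈ Set.Icc 0 1) :
    prRandomSubset univ θ (fun A => ∃ L ∈ 𝓛, ℓ ≤ #(A ∩ L)) ≤ #𝓛 * binomTail q θ ℓ := by
  refine (prRandomSubset.exists_le_sum hθ univ 𝓛 _).trans_eq ?_
  rw [← nsmul_eq_mul, ← sum_const]
  exact sum_congr rfl fun L hL => h.pr_rich_eq hL θ ℓ

lemma richThreshold_mul_pr_exists_rich_le (h : IsSteinerSystem 𝓛 q) (hq : 2 ≤ q)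
    (hqv : q ≤ Fintype.card α) (hℓ₀ : 0 < ℓ) (hℓ : ℓ ≤ q) (hθ : θ ∈ Set.Icc 0 1) :
    richThreshold (Fintype.card α) q ℓ *
      prRandomSubset univ θ (fun A => ∃ L ∈ 𝓛, ℓ ≤ #(A ∩ L)) ≤ 2 * θ := by
  have hq₀ : 0 < q := by omega
  have hv : 0 < Fintype.card α := hq₀.trans_le hqv
  have ht := richThreshold_pos hℓ hq₀ hv
  have ht_pow := richThreshold_pow_mul hℓ₀ hℓ hv
  have union_bound := h.pr_exists_rich_le ℓ hθ
  set t := richThreshold (Fintype.card α) q ℓ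
  set P := prRandomSubset univ θ (fun A => ∃ L ∈ 𝓛, ℓ ≤ #(A ∩ L))
  have card_le : (#𝓛 : ℝ) ≤ 2 * (Fintype.card α / q : ℝ) ^ 2 := by
    rw [div_pow, ← mul_div_assoc, le_div_iff₀ (by positivity)]
    exact h.card_mul_sq_le hq
  have hθ₀ := hθ.1
  rw [mul_comm, ← le_div_iff₀ ht]
  rcases le_total t θ with htθ | htθ
  · calc P ≤ 1 := prRandomSubset.le_one hθ _ _
      _ ≤ 2 * θ / t := by rw [le_div_iff₀ ht]; linarith
  · calc P ≤ #𝓛 * binomTail q θ ℓ := union_bound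
      _ ≤ 2 * (Fintype.card α / q : ℝ) ^ 2 * (q.choose ℓ * θ ^ ℓ) := by
          gcongr
          · exact binomTail_nonneg hθ q ℓ
          · exact binomTail_le hθ q ℓ
      _ = t ^ ℓ * ((Fintype.card α / q : ℝ) ^ 2 * q.choose ℓ) * (2 * (θ / t) ^ ℓ) := by
          rw [div_pow θ t]
          field_simp
      _ = 2 * (θ / t) ^ ℓ := by rw [ht_pow, one_mul]
      _ ≤ 2 * (θ / t) := by
          gcongr
          exact pow_le_of_le_one (by positivity) ((div_le_one ht).2 htθ) hℓ₀.ne'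
      _ = 2 * θ / t := by ring

lemma mul_sum_covariance_le (h : IsSteinerSystem 𝓛 q) (hq : 2 ≤ q) (hℓ₀ : 1 ≤ ℓ) (hℓ : ℓ ≤ q)
    (hθ : θ ∈ Set.Icc 0 1) (hL : L ∈ 𝓛) :
    q ^ 2 * θ * ∑ L' ∈ 𝓛, (prRandomSubset univ θ (fun A => ℓ ≤ #(A ∩ L) ∧ ℓ ≤ #(A ∩ L')) -
        binomTail q θ ℓ ^ 2) ≤
      q ^ 2 * θ * (binomTail q θ ℓ * (1 - binomTail q θ ℓ)) +
        2 * (Fintype.card α - q) * (ℓ * binomTail q θ ℓ) ^ 2 := by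
  set p := binomTail q θ ℓ with hp
  have term_le : ∀ L' ∈ 𝓛,
      q ^ 2 * θ * (prRandomSubset univ θ (fun A => ℓ ≤ #(A ∩ L) ∧ ℓ ≤ #(A ∩ L')) - p ^ 2) ≤
        (if L = L' then q ^ 2 * θ * (p * (1 - p)) else 0) +
          if L ≠ L' ∧ ¬ Disjoint L L' then (ℓ * p) ^ 2 else 0 := by
    intro L' hL'
    by_cases hne : L = L'
    · subst hne
      simp only [and_self, h.pr_rich_eq hL, ← hp, ne_eq, not_true_eq_false, false_and, if_true,
        if_false]
      exact le_of_eq (by ring)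
    by_cases hdisj : Disjoint L L'
    · have indep := prRandomSubset.and_of_disjoint (θ := θ) (subset_univ L) (subset_univ L') hdisj
        (ℓ ≤ #·) (ℓ ≤ #·)
      rw [indep, prRandomSubset.le_card, prRandomSubset.le_card, h.card_eq L hL, h.card_eq L' hL',
        ← hp]
      simp [hne, hdisj, sq]
    · obtain ⟨x, hx⟩ : ∃ x, L ∩ L' = {x} := card_eq_one.1 <|
        (h.card_inter_le_one hL hL' hne).antisymm <|
          card_pos.2 (not_disjoint_iff_nonempty_inter.1 hdisj)
      rw [if_neg hne, if_pos ⟨hne, hdisj⟩, zero_add]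
      exact prRandomSubset.mul_le_card_inter_and_sub_sq_le (subset_univ L) (subset_univ L')
        (h.card_eq L hL) (h.card_eq L' hL') hx hθ hℓ₀ hℓ
  rw [mul_sum]
  refine (sum_le_sum term_le).trans ?_
  rw [sum_add_distrib, sum_ite_eq, if_pos hL, ← sum_filter, sum_const, nsmul_eq_mul]
  gcongr
  exact h.card_filter_not_disjoint_le hq hL

lemma second_moment_bound (h : IsSteinerSystem 𝓛 q) (hq : 2 ≤ q) (hℓ₀ : 1 ≤ ℓ) (hℓ : ℓ ≤ q)
    (hθ : θ ∈ Set.Icc 0 1) :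
    q ^ 2 * θ * ((1 - prRandomSubset univ θ (fun A => ∃ L ∈ 𝓛, ℓ ≤ #(A ∩ L))) *
        (#𝓛 * binomTail q θ ℓ) ^ 2) ≤
      #𝓛 * (q ^ 2 * θ * (binomTail q θ ℓ * (1 - binomTail q θ ℓ)) +
        2 * (Fintype.card α - q) * (ℓ * binomTail q θ ℓ) ^ 2) := by
  have expectation : ∑ L ∈ 𝓛, prRandomSubset univ θ (fun A => ℓ ≤ #(A ∩ L)) =
      #𝓛 * binomTail q θ ℓ := by
    rw [sum_congr rfl fun L hL => h.pr_rich_eq hL θ ℓ, sum_const, nsmul_eq_mul]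
  have chebyshev : (1 - prRandomSubset univ θ (fun A => ∃ L ∈ 𝓛, ℓ ≤ #(A ∩ L))) *
      (#𝓛 * binomTail q θ ℓ) ^ 2 ≤ ∑ L ∈ 𝓛, ∑ L' ∈ 𝓛, (prRandomSubset univ θ
        (fun A => ℓ ≤ #(A ∩ L) ∧ ℓ ≤ #(A ∩ L')) - binomTail q θ ℓ ^ 2) := by
    have := prRandomSubset.card_filter_le_mul_sq_le hθ univ 𝓛 (fun L A => ℓ ≤ #(A ∩ L)) (k := 0)
      (mod_cast sum_nonneg fun L _ => prRandomSubset.nonneg hθ _ _)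
    rw [expectation, Nat.cast_zero, sub_zero] at this
    rw [← prRandomSubset.not]
    convert this using 4 with A L hL L' hL'
    · simp [filter_eq_empty_iff]
    · rw [h.pr_rich_eq hL, h.pr_rich_eq hL', sq]
  calc _ ≤ q ^ 2 * θ * ∑ L ∈ 𝓛, ∑ L' ∈ 𝓛, (prRandomSubset univ θ
          (fun A => ℓ ≤ #(A ∩ L) ∧ ℓ ≤ #(A ∩ L')) - binomTail q θ ℓ ^ 2) := by
        have := hθ.1
        gcongr
    _ ≤ _ := by
        rw [mul_sum, ← nsmul_eq_mul, ← sum_const]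
        exact sum_le_sum fun L hL => h.mul_sum_covariance_le hq hℓ₀ hℓ hθ hL

lemma mul_one_sub_pr_exists_rich_le (h : IsSteinerSystem 𝓛 q) (hqv : q ≤ Fintype.card α)
    (hℓ₀ : 2 ≤ ℓ) (hℓ : ℓ ≤ q) (hθ : θ ∈ Set.Icc 0 1) :
    θ * (1 - prRandomSubset univ θ (fun A => ∃ L ∈ 𝓛, ℓ ≤ #(A ∩ L))) ≤
      777 * richThreshold (Fintype.card α) q ℓ := by
  have hq : 0 < q := by omega
  have hv : 0 < Fintype.card α := hq.trans_le hqv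
  have ht := richThreshold_pos hℓ hq hv
  have second_moment := h.second_moment_bound (by omega) (by omega) hℓ hθ
  have card_lower := h.sq_card_le (by omega) hqv
  have covariance := h.sq_mul_card_sub_le hqv hℓ₀ hℓ
  set P := prRandomSubset univ θ (fun A => ∃ L ∈ 𝓛, ℓ ≤ #(A ∩ L))
  set t := richThreshold (Fintype.card α) q ℓ
  have hP : 0 ≤ P := prRandomSubset.nonneg hθ _ _
  rcases le_or_gt (729 * t) θ with htθ | htθ
  · set p := binomTail q θ ℓ
    have hp : 0 < p := (pow_pos (by linarith) ℓ).trans_le (pow_le_binomTail hθ hℓ)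
    have h𝓛 : (0 : ℝ) < #𝓛 :=
      pos_of_mul_pos_left ((by positivity : (0 : ℝ) < _).trans_le card_lower) (by positivity)
    have variance : θ * (1 - p) ≤ 729 * t * ((Fintype.card α / q) ^ 2 * p) :=
      mul_one_sub_binomTail_le hθ hℓ₀ hℓ hqv htθ
    refine le_of_mul_le_mul_right ?_ (by positivity : (0 : ℝ) < q ^ 2 * (#𝓛 * p) ^ 2)
    calc θ * (1 - P) * (q ^ 2 * (#𝓛 * p) ^ 2) = q ^ 2 * θ * ((1 - P) * (#𝓛 * p) ^ 2) := by ring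
      _ ≤ #𝓛 * (q ^ 2 * θ * (p * (1 - p)) +
            2 * (Fintype.card α - q) * (ℓ * p) ^ 2) := second_moment
      _ = #𝓛 * p * (q ^ 2 * (θ * (1 - p)) + 2 * p * (ℓ ^ 2 * (Fintype.card α - q))) := by ring
      _ ≤ #𝓛 * p * (q ^ 2 * (729 * t * ((Fintype.card α / q) ^ 2 * p)) +
            2 * p * (24 * t * Fintype.card α ^ 2)) := by gcongr
      _ = 777 * t * (#𝓛 * p ^ 2 * Fintype.card α ^ 2) := by field_simp; ring
      _ ≤ 777 * t * (#𝓛 * p ^ 2 * (#𝓛 * q ^ 2)) := by gcongr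
      _ = 777 * t * (q ^ 2 * (#𝓛 * p) ^ 2) := by ring
  · nlinarith [hθ.1]

end IsSteinerSystem

end RichBlock

section Flats

/-- The finset of all `m`-flats of the finite vector space `V`. -/
noncomputable def flats (K V : Type*) [Field K] [AddCommGroup V] [Module K V] [Fintype V] (m : ℕ) :
    Finset (Finset V) :=
  open Classical in {L | IsFlat K m (L : Set V)}

variable {K V : Type*} [Field K] [AddCommGroup V] [Module K V]

lemma IsFlat.exists_eq_of_mem {m : ℕ} {S : Set V} (hS : IsFlat K m S) {a : V} (ha : a ∈ S) :
    ∃ W : Submodule K V, Module.finrank K W = m ∧ S = (a + ·) '' (W : Set V) := by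
  obtain ⟨W, hW, v, rfl⟩ := hS
  obtain ⟨w, hw, rfl⟩ := ha
  refine ⟨W, hW, Set.ext fun x => ?_⟩
  simp only [Set.image_add_left, Set.mem_preimage, SetLike.mem_coe]
  rw [← W.add_mem_iff_right hw (y := -(v + w) + x)]
  congr! 1
  abel

lemma isFlat_one_and_mem_iff {S : Set V} {a b : V} (hab : a ≠ b) :
    IsFlat K 1 S ∧ a ∈ S ∧ b ∈ S ↔ S = (a + ·) '' (K ∙ (b - a) : Set V) := by
  have finrank_eq : Module.finrank K (K ∙ (b - a)) = 1 :=
    finrank_span_singleton (sub_ne_zero.2 hab.symm)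
  constructor
  · rintro ⟨hS, ha, hb⟩
    obtain ⟨W, hW, rfl⟩ := hS.exists_eq_of_mem ha
    have hmem : b - a ∈ W := by simpa [neg_add_eq_sub] using hb
    have : FiniteDimensional K W := Module.finite_of_finrank_eq_succ hW
    rw [Submodule.eq_of_le_of_finrank_eq ((Submodule.span_singleton_le_iff_mem _ _).2 hmem)
      (finrank_eq.trans hW.symm)]
  · rintro rfl
    refine ⟨⟨_, finrank_eq, a, rfl⟩, ?_, ?_⟩
    · simp
    · simp [neg_add_eq_sub, Submodule.mem_span_singleton_self]

lemma IsFlat.card_eq [Fintype K] {m : ℕ} {L : Finset V} (hL : IsFlat K m (L : Set V)) :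
    #L = Fintype.card K ^ m := by
  obtain ⟨W, hW, v, hLW⟩ := hL
  have : Finite W :=
    (hLW ▸ L.finite_toSet : ((v + ·) '' (W : Set V)).Finite).of_finite_image
      (add_right_injective v).injOn
  rw [← Set.ncard_coe_finset, hLW, Set.ncard_image_of_injective _ (add_right_injective v),
    ← Nat.card_coe_set_eq, ← Nat.card_eq_fintype_card, ← hW]
  exact Module.natCard_eq_pow_finrank

variable [Fintype V]

lemma mem_flats {m : ℕ} {L : Finset V} : L ∈ flats K V m ↔ IsFlat K m (L : Set V) := by
  simp [flats]

lemma existsRichFlat_iff [DecidableEq V] {m ℓ : ℕ} {A : Finset V} :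
    ExistsRichFlat K m ℓ A ↔ ∃ L ∈ flats K V m, ℓ ≤ #(A ∩ L) := by
  classical
  constructor
  · rintro ⟨S, hS, hℓ⟩
    refine ⟨S.toFinset, mem_flats.2 (by rwa [Set.coe_toFinset]), ?_⟩
    rwa [← Set.ncard_coe_finset, coe_inter, Set.coe_toFinset, Set.inter_comm]
  · rintro ⟨L, hL, hℓ⟩
    refine ⟨L, mem_flats.1 hL, ?_⟩
    rwa [← coe_inter, Set.ncard_coe_finset, inter_comm]

lemma isSteinerSystem_flats_one (K V : Type*) [Field K] [AddCommGroup V] [Module K V] [Fintype V]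
    [Fintype K] : IsSteinerSystem (flats K V 1) (Fintype.card K) where
  card_eq L hL := by rw [(mem_flats.1 hL).card_eq, pow_one]
  existsUnique a b hab := by
    classical
    have mem_iff : ∀ L : Finset V, L ∈ flats K V 1 ∧ a ∈ L ∧ b ∈ L ↔
        (L : Set V) = (a + ·) '' (K ∙ (b - a) : Set V) := fun L => by
      rw [mem_flats]
      exact isFlat_one_and_mem_iff hab
    exact ⟨_, (mem_iff _).2 (Set.coe_toFinset _), fun L hL =>
      coe_injective (by rw [(mem_iff L).1 hL, Set.coe_toFinset])⟩

end Flats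

section Threshold

lemma richThreshold_pow {n q : ℕ} (hn : 1 ≤ n) (hq : 0 < q) (ℓ : ℕ) :
    richThreshold (q ^ n) q ℓ =
      ((q : ℝ) ^ (2 * n - 2) * (q.choose ℓ : ℝ)) ^ (-(1 : ℝ) / (ℓ : ℝ)) := by
  obtain ⟨m, rfl⟩ := Nat.exists_eq_add_of_le' hn
  rw [richThreshold, show 2 * (m + 1) - 2 = m * 2 by omega, pow_mul, Nat.cast_pow,
    pow_succ (q : ℝ) m, mul_div_cancel_right₀ _ (by positivity)]

variable {ι : Type*} {l : Filter ι}

lemma tendsto_zero_of_isLittleO_of_mul_le {f g x : ι → ℝ} {c : ℝ} (hfg : f =o[l] g)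
    (hg : ∀ i, 0 ≤ g i) (hg_ne : ∀ᶠ i in l, g i ≠ 0) (hx : ∀ i, 0 ≤ x i)
    (h : ∀ i, g i * x i ≤ c * f i) : Tendsto x l (nhds 0) := by
  have product_isBigO : (fun i => g i * x i) =O[l] f := .of_bound |c| <| .of_forall fun i => by
    rw [Real.norm_of_nonneg (mul_nonneg (hg i) (hx i)), Real.norm_eq_abs, ← abs_mul]
    exact (h i).trans (le_abs_self _)
  refine (product_isBigO.trans_isLittleO hfg).tendsto_div_nhds_zero.congr' ?_
  filter_upwards [hg_ne] with i hi
  exact mul_div_cancel_left₀ _ hi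

theorem stmt4_general (n q ℓ : ι → ℕ) (F : ι → Type*) [∀ i, Field (F i)] [∀ i, Fintype (F i)]
    (hn : ∀ i, 1 ≤ n i) (hq : ∀ i, Fintype.card (F i) = q i) (hℓ : ∀ i, 2 ≤ ℓ i ∧ ℓ i ≤ q i)
    (θ : ι → ℝ) (hθ : ∀ i, 0 ≤ θ i ∧ θ i ≤ 1) :
    (θ =o[l] (fun i =>
        (((q i : ℝ) ^ (2 * n i - 2)) * ((q i).choose (ℓ i) : ℝ)) ^ (-(1 : ℝ) / (ℓ i : ℝ))) →
      Tendsto (fun i => prRandomSubset (Finset.univ : Finset (Fin (n i) → F i)) (θ i)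
        (fun A => ExistsRichFlat (F i) 1 (ℓ i) A)) l (nhds 0)) ∧
    ((fun i =>
        (((q i : ℝ) ^ (2 * n i - 2)) * ((q i).choose (ℓ i) : ℝ)) ^ (-(1 : ℝ) / (ℓ i : ℝ)))
        =o[l] θ →
      Tendsto (fun i => prRandomSubset (Finset.univ : Finset (Fin (n i) → F i)) (θ i)
        (fun A => ExistsRichFlat (F i) 1 (ℓ i) A)) l (nhds 1)) := by
  classical
  have hq_two : ∀ i, 2 ≤ q i := fun i => (hℓ i).1.trans (hℓ i).2
  have hq_pos : ∀ i, 0 < q i := fun i => two_pos.trans_le (hq_two i)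
  have hv : ∀ i, q i ≤ q i ^ n i := fun i =>
    Nat.le_self_pow (Nat.one_le_iff_ne_zero.1 (hn i)) (q i)
  have lines : ∀ i, IsSteinerSystem (flats (F i) (Fin (n i) → F i) 1) (q i) := fun i =>
    hq i ▸ isSteinerSystem_flats_one _ _
  have card_eq : ∀ i, Fintype.card (Fin (n i) → F i) = q i ^ n i := fun i => by simp [hq]
  simp only [← richThreshold_pow (hn _) (hq_pos _), existsRichFlat_iff]
  have t_pos : ∀ i, 0 < richThreshold (q i ^ n i) (q i) (ℓ i) := fun i =>
    richThreshold_pos (hℓ i).2 (hq_pos i) (pow_pos (hq_pos i) _)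
  simp only [← card_eq] at hv t_pos ⊢
  refine ⟨fun h => ?_, fun h => ?_⟩
  · exact tendsto_zero_of_isLittleO_of_mul_le h (fun i => (t_pos i).le)
      (.of_forall fun i => (t_pos i).ne') (fun i => prRandomSubset.nonneg (hθ i) _ _) fun i =>
        (lines i).richThreshold_mul_pr_exists_rich_le (hq_two i) (hv i)
          (two_pos.trans_le (hℓ i).1) (hℓ i).2 (hθ i)
  · have θ_ne : ∀ᶠ i in l, θ i ≠ 0 :=
      h.isBigO.eq_zero_imp.mono fun i hi hθi => (t_pos i).ne' (hi hθi)
    simpa using (tendsto_zero_of_isLittleO_of_mul_le h (fun i => (hθ i).1) θ_ne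
      (fun i => sub_nonneg.2 (prRandomSubset.le_one (hθ i) _ _)) fun i =>
        (lines i).mul_one_sub_pr_exists_rich_le (hv i) (hℓ i).1 (hℓ i).2 (hθ i)).const_sub 1

end Threshold

theorem stmt4 (n q ℓ : ℕ → ℕ) (F : ℕ → Type) [∀ i, Field (F i)] [∀ i, Fintype (F i)]
    (hn : ∀ i, 2 ≤ n i)
    (hq : ∀ i, Fintype.card (F i) = q i) (hqpp : ∀ i, IsPrimePow (q i))
    (hnq : Tendsto (fun i => n i + q i) atTop atTop)
    (hℓ : ∀ i, 3 ≤ ℓ i ∧ ℓ i ≤ q i)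
    (hℓO : (fun i => (ℓ i : ℝ)) =O[atTop] fun i => (n i : ℝ) * Real.log (q i))
    (θ : ℕ → ℝ) (hθ : ∀ i, 0 ≤ θ i ∧ θ i ≤ 1) :
    (θ =o[atTop] (fun i =>
        (((q i : ℝ) ^ (2 * n i - 2)) * ((q i).choose (ℓ i) : ℝ)) ^ (-(1 : ℝ) / (ℓ i : ℝ))) →
      Tendsto (fun i => prRandomSubset (Finset.univ : Finset (Fin (n i) → F i)) (θ i)
        (fun A => ExistsRichFlat (F i) 1 (ℓ i) A)) atTop (nhds 0)) ∧
    ((fun i =>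
        (((q i : ℝ) ^ (2 * n i - 2)) * ((q i).choose (ℓ i) : ℝ)) ^ (-(1 : ℝ) / (ℓ i : ℝ)))
        =o[atTop] θ →
      Tendsto (fun i => prRandomSubset (Finset.univ : Finset (Fin (n i) → F i)) (θ i)
        (fun A => ExistsRichFlat (F i) 1 (ℓ i) A)) atTop (nhds 1)) :=
  stmt4_general n q ℓ F (fun i => one_le_two.trans (hn i)) hq
    (fun i => ⟨(Nat.le_succ 2).trans (hℓ i).1, (hℓ i).2⟩) θ hθ
end

section
/- Let n be an integer with n → ∞ and let q be a prime power (bounded or not). Let X be the random subset of F_q^n in which each point is included independently with probability θ, and let m < n be a bounded positive integer. Then the event Γ that X contains an entire m-flat of F_q^n has threshold function q^{−n(m+1)q^{−m}}. Moreover, if q → ∞, then this threshold is sharp: for every fixed ε > 0, Pr[Γ] → 0 whenever θ ≤ (1−ε)·q^{−n(m+1)q^{−m}} and Pr[Γ] → 1 whenever θ ≥ (1+ε)·q^{−n(m+1)q^{−m}}. -/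
open Filter Asymptotics

/-!
Write `q` for the order of the field and `n` for the dimension of the space. An `m`-flat has `q ^ m`
points and is given by a point and `m` spanning vectors, so there are at most `q ^ (n * (m + 1))`
flats and the expected number of them inside the random set is at most `(θ / t) ^ q ^ m`, where
`t ^ q ^ m = q ^ (-n * (m + 1))`. This settles both claims below the threshold `t`.

Above the threshold, the second moment method is applied only to the graphs of the affine maps
`X → Y`, where `dim X = m` and `dim Y = n - m`. Two such graphs meet in the zero set of a difference
of affine maps, so the second moment is a sum over affine maps `x ↦ A x + b`, where only those with
`b` in the range of `A` have a zero. A linear map of rank `r` factors through `K ^ r`, so there are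
at most `q ^ (r * n)` of them. The maps with `r = 0` contribute at most
`q ^ (m * (m + 1)) * (t / θ) ^ q ^ m`, and those of any given rank `r ≥ 1` contribute at most
`q ^ (m * (m + 2) - n * (1 - 2 / q)) * (t / θ)`. For large `n`, the latter power of `q` is at most
`q⁻¹` if `q ≥ 3`, and it is bounded if `q = 2`.
-/

section RandomSubset

open scoped Finset

variable {α : Type*} {U : Finset α} {θ : ℝ} {E : Finset α → Prop}

/-- The expectation of a real function of the random subset of `U` that contains each point
independently with probability `θ`, bundled as a linear form so that linearity of expectation is
`map_sum`. -/
noncomputable def randomSubsetMean (U : Finset α) (θ : ℝ) : (Finset α → ℝ) →ₗ[ℝ] ℝ :=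
  ∑ A ∈ U.powerset, (θ ^ #A * (1 - θ) ^ (#U - #A)) • LinearMap.proj A

theorem randomSubsetMean_apply (f : Finset α → ℝ) :
    randomSubsetMean U θ f = ∑ A ∈ U.powerset, θ ^ #A * (1 - θ) ^ (#U - #A) * f A := by
  simp [randomSubsetMean]

theorem prRandomSubset_eq_randomSubsetMean_indicator :
    prRandomSubset U θ E = randomSubsetMean U θ ({A | E A}.indicator 1) := by
  classical
  simp only [prRandomSubset, randomSubsetMean_apply, Set.indicator_apply, Set.mem_ofPred_eq,
    Pi.one_apply, mul_ite, mul_one, mul_zero]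

theorem randomSubsetMean_one : randomSubsetMean U θ 1 = 1 := by
  simp [randomSubsetMean_apply, Finset.sum_pow_mul_eq_add_pow]

theorem randomSubsetMean_mono (hθ : θ ∈ Set.Icc 0 1) : Monotone (randomSubsetMean U θ) := by
  intro f g hfg
  simp only [randomSubsetMean_apply]
  gcongr with A
  · exact mul_nonneg (pow_nonneg hθ.1 _) (pow_nonneg (sub_nonneg.2 hθ.2) _)
  · exact hfg A

theorem prRandomSubset_nonneg_s8 (hθ : θ ∈ Set.Icc 0 1) : 0 ≤ prRandomSubset U θ E := by
  rw [prRandomSubset_eq_randomSubsetMean_indicator, ← map_zero (randomSubsetMean U θ)]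
  exact randomSubsetMean_mono hθ (Set.indicator_nonneg fun _ _ => zero_le_one)

theorem prRandomSubset_le_one (hθ : θ ∈ Set.Icc 0 1) : prRandomSubset U θ E ≤ 1 := by
  rw [prRandomSubset_eq_randomSubsetMean_indicator, ← randomSubsetMean_one (U := U) (θ := θ)]
  exact randomSubsetMean_mono hθ (Set.indicator_le_self' fun _ _ => zero_le_one)

theorem randomSubsetMean_indicator_subset {S : Finset α} (hS : S ⊆ U) :
    randomSubsetMean U θ ({A | S ⊆ A}.indicator 1) = θ ^ #S := by
  classical
  symm
  calc θ ^ #S = ∏ a ∈ U, if a ∈ S then θ else 1 := by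
        rw [Finset.prod_ite_mem, Finset.inter_eq_right.2 hS, Finset.prod_const]
    _ = ∏ a ∈ U, (θ + if a ∉ S then 1 - θ else 0) := by
        refine Finset.prod_congr rfl fun a _ => ?_
        by_cases ha : a ∈ S <;> simp [ha]
    _ = _ := by
        rw [Finset.prod_add, randomSubsetMean_apply]
        refine Finset.sum_congr rfl fun A hA => ?_
        have hiff : (∀ a ∈ U \ A, a ∉ S) ↔ S ⊆ A := by
          simp only [Finset.mem_sdiff, Finset.subset_iff]
          exact ⟨fun h a ha => by_contra fun hA => h a ⟨hS ha, hA⟩ ha, fun h a ha hs => ha.2 (h hs)⟩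
        simp only [Finset.prod_const, Finset.prod_ite_zero, hiff, Set.indicator_apply,
          Set.mem_ofPred_eq, Pi.one_apply, Finset.card_sdiff_of_subset (Finset.mem_powerset.1 hA),
          mul_ite, mul_one, mul_zero]

theorem one_sub_prRandomSubset_le_mean_sq_div (hθ : θ ∈ Set.Icc 0 1) {f : Finset α → ℝ}
    (hf : ∀ A, ¬E A → f A = 0) (hμ : randomSubsetMean U θ f ≠ 0) :
    1 - prRandomSubset U θ E ≤
      randomSubsetMean U θ (f ^ 2) / randomSubsetMean U θ f ^ 2 - 1 := by
  set μ := randomSubsetMean U θ f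
  have hle : 1 - {A | E A}.indicator 1 ≤ (μ ^ 2)⁻¹ • f ^ 2 - (2 * μ⁻¹) • f + 1 := by
    intro A
    have hsq : ((μ ^ 2)⁻¹ • f ^ 2 - (2 * μ⁻¹) • f + 1 : Finset α → ℝ) A = (μ⁻¹ * f A - 1) ^ 2 := by
      simp only [Pi.add_apply, Pi.sub_apply, Pi.smul_apply, Pi.pow_apply, Pi.one_apply,
        smul_eq_mul]
      ring
    rw [hsq]
    by_cases hA : E A
    · simpa [hA] using sq_nonneg _
    · simp [hA, hf A hA]
  calc 1 - prRandomSubset U θ E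
      = randomSubsetMean U θ (1 - {A | E A}.indicator 1) := by
        rw [map_sub, randomSubsetMean_one, prRandomSubset_eq_randomSubsetMean_indicator]
    _ ≤ randomSubsetMean U θ ((μ ^ 2)⁻¹ • f ^ 2 - (2 * μ⁻¹) • f + 1) :=
        randomSubsetMean_mono hθ hle
    _ = (μ ^ 2)⁻¹ * randomSubsetMean U θ (f ^ 2) - 2 * μ⁻¹ * μ + 1 := by
        rw [map_add, map_sub, map_smul, map_smul, randomSubsetMean_one, smul_eq_mul, smul_eq_mul]
    _ = randomSubsetMean U θ (f ^ 2) / μ ^ 2 - 1 := by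
        field_simp
        ring

variable {ι : Type*} [Fintype ι] {S : ι → Finset α} {u : ℕ}

theorem randomSubsetMean_sum_indicator_subset (hS : ∀ i, S i ⊆ U) (hu : ∀ i, #(S i) = u) :
    randomSubsetMean U θ (∑ i, {A | S i ⊆ A}.indicator 1) = Fintype.card ι * θ ^ u := by
  simp only [map_sum, randomSubsetMean_indicator_subset (hS _), hu, Finset.sum_const,
    Finset.card_univ, nsmul_eq_mul]

theorem randomSubsetMean_sq_sum_indicator_subset [DecidableEq α] (hS : ∀ i, S i ⊆ U) :
    randomSubsetMean U θ ((∑ i, {A | S i ⊆ A}.indicator 1) ^ 2) =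
      ∑ i, ∑ j, θ ^ #(S i ∪ S j) := by
  have hprod (i j : ι) : {A | S i ⊆ A}.indicator 1 * {A | S j ⊆ A}.indicator 1 =
      ({A | S i ∪ S j ⊆ A}.indicator 1 : Finset α → ℝ) := by
    rw [← Set.inter_indicator_one]
    simp only [Finset.union_subset_iff, Set.ofPred_and]
  simp only [sq, Finset.sum_mul_sum, hprod, map_sum,
    randomSubsetMean_indicator_subset (Finset.union_subset (hS _) (hS _))]

theorem prRandomSubset_le_card_mul_pow (hθ : θ ∈ Set.Icc 0 1) (hS : ∀ i, S i ⊆ U)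
    (hu : ∀ i, #(S i) = u) (hE : ∀ A, E A → ∃ i, S i ⊆ A) :
    prRandomSubset U θ E ≤ Fintype.card ι * θ ^ u := by
  rw [← randomSubsetMean_sum_indicator_subset hS hu, prRandomSubset_eq_randomSubsetMean_indicator]
  refine randomSubsetMean_mono hθ fun A => ?_
  have hnonneg (i : ι) : 0 ≤ ({A | S i ⊆ A}.indicator 1 : Finset α → ℝ) A :=
    Set.indicator_nonneg (fun _ _ => zero_le_one) A
  rw [Finset.sum_apply]
  refine Set.indicator_apply_le' (fun hA => ?_) fun _ => Finset.sum_nonneg fun i _ => hnonneg i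
  obtain ⟨i, hi⟩ := hE A hA
  calc (1 : ℝ) = ({A | S i ⊆ A}.indicator 1 : Finset α → ℝ) A :=
        (Set.indicator_of_mem (s := {A | S i ⊆ A}) hi 1).symm
    _ ≤ _ := Finset.single_le_sum (fun j _ => hnonneg j) (Finset.mem_univ i)

theorem one_sub_prRandomSubset_le_sum_inter [DecidableEq α] [Nonempty ι] (hθ : θ ∈ Set.Ioc 0 1)
    (hS : ∀ i, S i ⊆ U) (hu : ∀ i, #(S i) = u) (hE : ∀ A i, S i ⊆ A → E A) :
    1 - prRandomSubset U θ E ≤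
      (∑ i, ∑ j, (θ⁻¹ ^ #(S i ∩ S j) - 1)) / (Fintype.card ι : ℝ) ^ 2 := by
  have hθ0 : θ ≠ 0 := hθ.1.ne'
  have hunion (i j : ι) : θ ^ #(S i ∪ S j) = (θ ^ u) ^ 2 * θ⁻¹ ^ #(S i ∩ S j) := by
    have hcard := Finset.card_union_add_card_inter (S i) (S j)
    rw [hu, hu] at hcard
    rw [inv_pow, eq_mul_inv_iff_mul_eq₀ (pow_ne_zero _ hθ0), ← pow_add, hcard, pow_add, sq]
  have hvanish (A) (hA : ¬E A) : (∑ i, {A | S i ⊆ A}.indicator 1 : Finset α → ℝ) A = 0 := by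
    rw [Finset.sum_apply]
    exact Finset.sum_eq_zero fun i _ => Set.indicator_of_notMem (fun hi => hA (hE A i hi)) _
  have hmean : randomSubsetMean U θ (∑ i, {A | S i ⊆ A}.indicator 1) ≠ 0 := by
    rw [randomSubsetMean_sum_indicator_subset hS hu]
    positivity
  refine (one_sub_prRandomSubset_le_mean_sq_div (Set.Ioc_subset_Icc_self hθ) hvanish hmean).trans_eq
    ?_
  rw [randomSubsetMean_sq_sum_indicator_subset hS, randomSubsetMean_sum_indicator_subset hS hu]
  simp only [hunion, ← Finset.mul_sum, Finset.sum_sub_distrib, Finset.sum_const, Finset.card_univ,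
    nsmul_eq_mul]
  field_simp

end RandomSubset

section Flats

variable {K V : Type*} [Field K] [AddCommGroup V] [Module K V] {m : ℕ}

/-- The event that a finite set of points contains an `m`-flat. -/
def ContainsFlat (K : Type*) {V : Type*} [Field K] [AddCommGroup V] [Module K V] (m : ℕ)
    (A : Finset V) : Prop :=
  ∃ S : Set V, IsFlat K m S ∧ S ⊆ (A : Set V)

theorem IsFlat.exists_eq_image_span [Module.Finite K V] {S : Set V} (hS : IsFlat K m S) :
    ∃ p : V × (Fin m → V), S = (p.1 + ·) '' (Submodule.span K (Set.range p.2) : Set V) := by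
  obtain ⟨W, rfl, v, rfl⟩ := hS
  have hspan := Submodule.exists_fun_fin_finrank_span_eq K (W : Set V)
  rw [Submodule.span_eq] at hspan
  obtain ⟨b, -, hb, -⟩ := hspan
  exact ⟨(v, b), by rw [hb]⟩

theorem IsFlat.ncard_eq [Finite V] {S : Set V} (hS : IsFlat K m S) :
    S.ncard = Nat.card K ^ m := by
  obtain ⟨W, rfl, v, rfl⟩ := hS
  rw [Set.ncard_image_of_injective _ (add_right_injective v), ← Module.natCard_eq_pow_finrank]
  rfl

theorem natCard_isFlat_le [Finite V] :
    Nat.card {S : Finset V // IsFlat K m (S : Set V)} ≤ Nat.card V ^ (m + 1) := by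
  choose p hp using fun S : {S : Finset V // IsFlat K m (S : Set V)} => S.2.exists_eq_image_span
  have hp_injective : Function.Injective p := fun S T hST =>
    Subtype.ext <| Finset.coe_injective <| by rw [hp S, hp T, hST]
  calc _ ≤ Nat.card (V × (Fin m → V)) := Nat.card_le_card_of_injective p hp_injective
    _ = Nat.card V ^ (m + 1) := by
      rw [Nat.card_prod, Nat.card_fun, Nat.card_fin, pow_succ']

theorem prRandomSubset_containsFlat_le [Fintype K] [Fintype V] {θ : ℝ} (hθ : θ ∈ Set.Icc 0 1) :
    prRandomSubset (Finset.univ : Finset V) θ (ContainsFlat K m) ≤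
      (Fintype.card V : ℝ) ^ (m + 1) * θ ^ Fintype.card K ^ m := by
  have := Fintype.ofFinite {S : Finset V // IsFlat K m (S : Set V)}
  refine (prRandomSubset_le_card_mul_pow hθ
    (S := fun S : {S : Finset V // IsFlat K m (S : Set V)} => (S : Finset V))
    (fun _ => Finset.subset_univ _) (u := Fintype.card K ^ m) ?_ ?_).trans ?_
  · intro S
    rw [← Set.ncard_coe_finset, S.2.ncard_eq, Nat.card_eq_fintype_card]
  · rintro A ⟨S, hS, hSA⟩
    lift S to Finset V using S.toFinite
    exact ⟨⟨S, hS⟩, Finset.coe_subset.1 hSA⟩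
  · have hcard := natCard_isFlat_le (K := K) (V := V) (m := m)
    simp only [Nat.card_eq_fintype_card] at hcard
    have := hθ.1
    gcongr
    exact_mod_cast hcard

end Flats

section LinearMapRank

open scoped Finset

variable {K X Y : Type*} [Field K] [AddCommGroup X] [Module K X] [AddCommGroup Y] [Module K Y]
  [Fintype K] [Finite X] [Finite Y] [Fintype (X →ₗ[K] Y)]

theorem card_linearMap_eq_pow_finrank :
    Fintype.card (X →ₗ[K] Y) = Fintype.card K ^ (Module.finrank K X * Module.finrank K Y) := by
  rw [Module.card_eq_pow_finrank (K := K), Module.finrank_linearMap]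

theorem card_linearMap_finrank_range_eq_le (r : ℕ) :
    #{A : X →ₗ[K] Y | Module.finrank K (LinearMap.range A) = r} ≤
      Fintype.card K ^ (r * (Module.finrank K X + Module.finrank K Y)) := by
  classical
  have : Finite (X →ₗ[K] (Fin r → K)) := DFunLike.finite _
  have := Fintype.ofFinite (X →ₗ[K] (Fin r → K))
  have : Finite ((Fin r → K) →ₗ[K] Y) := DFunLike.finite _
  have := Fintype.ofFinite ((Fin r → K) →ₗ[K] Y)
  have hfactor : ({A : X →ₗ[K] Y | Module.finrank K (LinearMap.range A) = r} : Finset _) ⊆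
      Finset.univ.image fun p : (X →ₗ[K] (Fin r → K)) × ((Fin r → K) →ₗ[K] Y) => p.2 ∘ₗ p.1 := by
    intro A hA
    have hrank : Module.finrank K (LinearMap.range A) = Module.finrank K (Fin r → K) := by
      rw [(Finset.mem_filter.1 hA).2, Module.finrank_fin_fun]
    let e := LinearEquiv.ofFinrankEq _ _ hrank
    refine Finset.mem_image.2 ⟨(e ∘ₗ A.rangeRestrict, (LinearMap.range A).subtype ∘ₗ e.symm),
      Finset.mem_univ _, ?_⟩
    ext x
    simp
  calc _ ≤ Fintype.card ((X →ₗ[K] (Fin r → K)) × ((Fin r → K) →ₗ[K] Y)) :=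
        (Finset.card_le_card hfactor).trans Finset.card_image_le
    _ = Fintype.card K ^ (Module.finrank K X * r + r * Module.finrank K Y) := by
        rw [Fintype.card_prod, card_linearMap_eq_pow_finrank, card_linearMap_eq_pow_finrank,
          Module.finrank_fin_fun, ← pow_add]
    _ = _ := by rw [mul_comm _ r, ← mul_add]

theorem sum_finrank_range_le {g : ℕ → ℝ} (hg : ∀ r, 0 ≤ g r) :
    ∑ A : X →ₗ[K] Y, g (Module.finrank K (LinearMap.range A)) ≤
      ∑ r ∈ Finset.range (Module.finrank K X + 1),
        (Fintype.card K : ℝ) ^ (r * (Module.finrank K X + Module.finrank K Y)) * g r := by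
  have hmaps : ∀ A ∈ (Finset.univ : Finset (X →ₗ[K] Y)),
      Module.finrank K (LinearMap.range A) ∈ Finset.range (Module.finrank K X + 1) := fun A _ =>
    Finset.mem_range_succ_iff.2 A.finrank_range_le
  rw [← Finset.sum_fiberwise_of_maps_to' hmaps]
  gcongr with r _
  rw [Finset.sum_const, nsmul_eq_mul]
  have := hg r
  gcongr
  exact_mod_cast card_linearMap_finrank_range_eq_le r

end LinearMapRank

section AffineZeros

open scoped Finset

variable {K X Y : Type*} [Field K] [AddCommGroup X] [Module K X] [AddCommGroup Y] [Module K Y]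
  [Fintype X] [DecidableEq Y]

/-- The zero set of the affine map `x ↦ p.1 x + p.2`; for a difference of two affine maps, it is
the intersection of their graphs, projected to `X`. -/
def affineZeros (p : (X →ₗ[K] Y) × Y) : Finset X :=
  {x | p.1 x + p.2 = 0}

theorem mem_affineZeros {p : (X →ₗ[K] Y) × Y} {x : X} : x ∈ affineZeros p ↔ p.1 x + p.2 = 0 := by
  simp [affineZeros]

theorem affineZeros_eq_empty {A : X →ₗ[K] Y} {b : Y} (hb : b ∉ LinearMap.range A) :
    affineZeros (A, b) = ∅ := by
  refine Finset.eq_empty_of_forall_notMem fun x hx => hb ⟨-x, ?_⟩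
  rw [map_neg, neg_eq_of_add_eq_zero_right (mem_affineZeros.1 hx)]

variable [Fintype K]

theorem card_affineZeros_of_mem {p : (X →ₗ[K] Y) × Y} {x : X} (hx : x ∈ affineZeros p) :
    #(affineZeros p) = Fintype.card K ^ Module.finrank K (LinearMap.ker p.1) := by
  rw [← Nat.card_eq_fintype_card, ← Module.natCard_eq_pow_finrank, ← Nat.card_eq_finsetCard]
  refine Nat.card_congr ((Equiv.subRight x).subtypeEquiv fun y => ?_)
  rw [mem_affineZeros, Equiv.subRight_apply, LinearMap.mem_ker, map_sub,
    eq_neg_of_add_eq_zero_left (mem_affineZeros.1 hx), sub_neg_eq_add]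

variable [Fintype Y]

theorem sum_pow_card_affineZeros_sub_one (A : X →ₗ[K] Y) (c : ℝ) :
    ∑ b, (c ^ #(affineZeros (A, b)) - 1) =
      (Fintype.card K : ℝ) ^ Module.finrank K (LinearMap.range A) *
        (c ^ Fintype.card K ^ Module.finrank K (LinearMap.ker A) - 1) := by
  classical
  have hterm (b : Y) : c ^ #(affineZeros (A, b)) - 1 = if b ∈ LinearMap.range A then
      c ^ Fintype.card K ^ Module.finrank K (LinearMap.ker A) - 1 else 0 := by
    split_ifs with hb
    · obtain ⟨x, rfl⟩ := hb
      have hx : -x ∈ affineZeros (A, A x) := by simp [mem_affineZeros]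
      rw [card_affineZeros_of_mem hx]
    · rw [affineZeros_eq_empty hb, Finset.card_empty, pow_zero, sub_self]
  have hcard : #{b | b ∈ LinearMap.range A} =
      Fintype.card K ^ Module.finrank K (LinearMap.range A) := by
    rw [← Module.card_eq_pow_finrank, ← Fintype.card_subtype]
  rw [Finset.sum_congr rfl fun b _ => hterm b, ← Finset.sum_filter, Finset.sum_const, nsmul_eq_mul,
    hcard, Nat.cast_pow]

theorem sum_pow_card_affineZeros_sub_one_le [Fintype (X →ₗ[K] Y)] {c : ℝ} (hc : 0 ≤ c) :
    ∑ p : (X →ₗ[K] Y) × Y, (c ^ #(affineZeros p) - 1) ≤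
      ∑ r ∈ Finset.range (Module.finrank K X + 1),
        (Fintype.card K : ℝ) ^ (r * (Module.finrank K X + Module.finrank K Y + 1)) *
          c ^ Fintype.card K ^ (Module.finrank K X - r) := by
  have hker (A : X →ₗ[K] Y) : Module.finrank K (LinearMap.ker A) =
      Module.finrank K X - Module.finrank K (LinearMap.range A) :=
    (Nat.sub_eq_of_eq_add' A.finrank_range_add_finrank_ker.symm).symm
  calc ∑ p : (X →ₗ[K] Y) × Y, (c ^ #(affineZeros p) - 1)
      ≤ ∑ A : X →ₗ[K] Y, (Fintype.card K : ℝ) ^ Module.finrank K (LinearMap.range A) *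
          c ^ Fintype.card K ^ (Module.finrank K X - Module.finrank K (LinearMap.range A)) := by
        rw [Fintype.sum_prod_type]
        refine Finset.sum_le_sum fun A _ => ?_
        rw [sum_pow_card_affineZeros_sub_one, hker]
        gcongr
        exact sub_le_self _ zero_le_one
    _ ≤ _ := sum_finrank_range_le (g := fun r => (Fintype.card K : ℝ) ^ r *
          c ^ Fintype.card K ^ (Module.finrank K X - r)) fun r => by positivity
    _ = _ := by
        refine Finset.sum_congr rfl fun r _ => ?_
        rw [← mul_assoc, ← pow_add, mul_add_one]

end AffineZeros

section AffineGraph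

variable {K V X Y : Type*} [Field K] [AddCommGroup V] [Module K V]
  [AddCommGroup X] [Module K X] [AddCommGroup Y] [Module K Y]
  (e : (X × Y) ≃ₗ[K] V) (p r : (X →ₗ[K] Y) × Y)

/-- The parametrization of the graph of the affine map `x ↦ p.1 x + p.2` by its domain, with the
product `X × Y` identified with `V` along `e`. -/
@[simps]
def affineGraphEmbedding : X ↪ V where
  toFun x := e (x, p.1 x + p.2)
  inj' _ _ h := congrArg Prod.fst (e.injective h)

variable [Fintype X]

/-- The graph of the affine map `x ↦ p.1 x + p.2` in `V`. These are the flats of dimension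
`finrank K X` to which the second moment method is applied. -/
def affineGraph : Finset V :=
  Finset.univ.map (affineGraphEmbedding e p)

theorem mk_mem_affineGraph {x : X} {y : Y} : e (x, y) ∈ affineGraph e p ↔ y = p.1 x + p.2 := by
  simp [affineGraph, eq_comm]

theorem isFlat_affineGraph : IsFlat K (Module.finrank K X) (affineGraph e p : Set V) := by
  let L : X →ₗ[K] V := e ∘ₗ LinearMap.id.prod p.1
  have hL : Function.Injective L := fun x y h => congrArg Prod.fst (e.injective h)
  refine ⟨LinearMap.range L, LinearMap.finrank_range_of_inj hL, e (0, p.2), ?_⟩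
  have hx (x : X) : affineGraphEmbedding e p x = e (0, p.2) + L x := by
    simp [L, ← map_add, add_comm]
  rw [affineGraph, Finset.coe_map, Finset.coe_univ, Set.image_univ, LinearMap.coe_range,
    ← Set.range_comp]
  exact congrArg Set.range (funext hx)

theorem affineGraph_inter [DecidableEq V] [DecidableEq Y] :
    affineGraph e p ∩ affineGraph e r = (affineZeros (p - r)).map (affineGraphEmbedding e p) := by
  ext v
  obtain ⟨⟨x, y⟩, rfl⟩ := e.surjective v
  simp only [Finset.mem_inter, mk_mem_affineGraph, Finset.mem_map, mem_affineZeros,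
    affineGraphEmbedding_apply, e.injective.eq_iff, Prod.mk.injEq, Prod.fst_sub, Prod.snd_sub,
    LinearMap.sub_apply, sub_add_sub_comm, sub_eq_zero]
  constructor
  · rintro ⟨hp, hr⟩
    exact ⟨x, hp ▸ hr, rfl, hp.symm⟩
  · rintro ⟨_, hpr, rfl, rfl⟩
    exact ⟨rfl, hpr⟩

end AffineGraph

section SecondMoment

open scoped Finset

variable {K V : Type*} [Field K] [AddCommGroup V] [Module K V] [Fintype K] [Fintype V] {θ : ℝ}

theorem one_sub_prRandomSubset_containsFlat_le_of_equiv {X Y : Type*} [AddCommGroup X] [Module K X]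
    [AddCommGroup Y] [Module K Y] [Finite X] [Finite Y] (e : (X × Y) ≃ₗ[K] V)
    (hθ : θ ∈ Set.Ioc 0 1) :
    1 - prRandomSubset (Finset.univ : Finset V) θ (ContainsFlat K (Module.finrank K X)) ≤
      (∑ r ∈ Finset.range (Module.finrank K X + 1),
        (Fintype.card K : ℝ) ^ (r * (Module.finrank K X + Module.finrank K Y + 1)) *
          θ⁻¹ ^ Fintype.card K ^ (Module.finrank K X - r)) /
        (Fintype.card K : ℝ) ^ ((Module.finrank K X + 1) * Module.finrank K Y) := by
  classical
  have : Finite (X →ₗ[K] Y) := DFunLike.finite _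
  have := Fintype.ofFinite (X →ₗ[K] Y)
  have := Fintype.ofFinite X
  have := Fintype.ofFinite Y
  have hcard : (Fintype.card ((X →ₗ[K] Y) × Y) : ℝ) =
      (Fintype.card K : ℝ) ^ ((Module.finrank K X + 1) * Module.finrank K Y) := by
    rw [Fintype.card_prod, card_linearMap_eq_pow_finrank,
      Module.card_eq_pow_finrank (K := K) (V := Y), ← pow_add, ← add_one_mul, Nat.cast_pow]
  calc _ ≤ (∑ p, ∑ r, (θ⁻¹ ^ #(affineGraph e p ∩ affineGraph e r) - 1)) /
        (Fintype.card ((X →ₗ[K] Y) × Y) : ℝ) ^ 2 :=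
        one_sub_prRandomSubset_le_sum_inter hθ (fun _ => Finset.subset_univ _)
          (fun _ => Finset.card_map _)
          fun A p hp => ⟨_, isFlat_affineGraph e p, Finset.coe_subset.2 hp⟩
    _ = (∑ p : (X →ₗ[K] Y) × Y, (θ⁻¹ ^ #(affineZeros p) - 1)) /
        Fintype.card ((X →ₗ[K] Y) × Y) := by
        have hshift (p : (X →ₗ[K] Y) × Y) : ∑ r, (θ⁻¹ ^ #(affineGraph e p ∩ affineGraph e r) - 1) =
            ∑ r : (X →ₗ[K] Y) × Y, (θ⁻¹ ^ #(affineZeros r) - 1) := by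
          simp only [affineGraph_inter, Finset.card_map]
          exact Equiv.sum_comp (Equiv.subLeft p) fun r => θ⁻¹ ^ #(affineZeros r) - 1
        simp only [hshift, Finset.sum_const, Finset.card_univ, nsmul_eq_mul]
        field_simp
    _ ≤ _ := by
        rw [hcard]
        gcongr
        exact sum_pow_card_affineZeros_sub_one_le (inv_nonneg.2 hθ.1.le)

theorem one_sub_prRandomSubset_containsFlat_le_sum {m : ℕ} (hm : m ≤ Module.finrank K V)
    (hθ : θ ∈ Set.Ioc 0 1) :
    1 - prRandomSubset (Finset.univ : Finset V) θ (ContainsFlat K m) ≤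
      (∑ r ∈ Finset.range (m + 1), (Fintype.card K : ℝ) ^ (r * (Module.finrank K V + 1)) *
          θ⁻¹ ^ Fintype.card K ^ (m - r)) /
        (Fintype.card K : ℝ) ^ ((m + 1) * (Module.finrank K V - m)) := by
  have hfinrank : Module.finrank K ((Fin m → K) × (Fin (Module.finrank K V - m) → K)) =
      Module.finrank K V := by
    rw [Module.finrank_prod, Module.finrank_fin_fun, Module.finrank_fin_fun, Nat.add_sub_cancel' hm]
  simpa only [Module.finrank_fin_fun, Nat.add_sub_cancel' hm] using
    one_sub_prRandomSubset_containsFlat_le_of_equiv (LinearEquiv.ofFinrankEq _ _ hfinrank) hθ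

end SecondMoment

section Threshold

variable {K V : Type*} [Field K] [Fintype K] [AddCommGroup V] [Module K V] {m r : ℕ} {θ : ℝ}

/-- The threshold `q ^ (-n(m+1)q⁻ᵐ)` for a random subset of an `n`-dimensional space `V` over a
field `K` of order `q` to contain an `m`-flat. -/
noncomputable def flatThreshold (K V : Type*) [Field K] [Fintype K] [AddCommGroup V] [Module K V]
    (m : ℕ) : ℝ :=
  (Fintype.card K : ℝ) ^
    (-(((Module.finrank K V : ℝ) * ((m : ℝ) + 1)) / (Fintype.card K : ℝ) ^ m))

theorem flatThreshold_pos : 0 < flatThreshold K V m :=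
  Real.rpow_pos_of_pos (mod_cast Fintype.card_pos) _

theorem flatThreshold_pow_card_pow_sub (hr : r ≤ m) :
    flatThreshold K V m ^ Fintype.card K ^ (m - r) =
      (Fintype.card K : ℝ) ^
        (-((Module.finrank K V : ℝ) * (m + 1) / (Fintype.card K : ℝ) ^ r)) := by
  have hq : (Fintype.card K : ℝ) ≠ 0 := mod_cast Fintype.card_ne_zero
  rw [flatThreshold, ← Real.rpow_mul_natCast (Nat.cast_nonneg _), Nat.cast_pow, pow_sub₀ _ hq hr]
  congr 1
  field_simp

theorem flatThreshold_pow_card_pow :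
    flatThreshold K V m ^ Fintype.card K ^ m =
      ((Fintype.card K : ℝ) ^ (Module.finrank K V * (m + 1)))⁻¹ := by
  have hpow := flatThreshold_pow_card_pow_sub (K := K) (V := V) m.zero_le
  rw [m.sub_zero, pow_zero, div_one, Real.rpow_neg (Nat.cast_nonneg _)] at hpow
  exact_mod_cast hpow

theorem prRandomSubset_containsFlat_le_div_flatThreshold_pow [Fintype V] (hθ : θ ∈ Set.Icc 0 1) :
    prRandomSubset (Finset.univ : Finset V) θ (ContainsFlat K m) ≤
      (θ / flatThreshold K V m) ^ Fintype.card K ^ m := by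
  refine (prRandomSubset_containsFlat_le hθ).trans_eq ?_
  rw [div_pow, flatThreshold_pow_card_pow, div_inv_eq_mul, Module.card_eq_pow_finrank (K := K),
    Nat.cast_pow, ← pow_mul, mul_comm]

theorem pow_mul_inv_flatThreshold_pow_div (hr : r ≤ m) (hm : m ≤ Module.finrank K V) :
    (Fintype.card K : ℝ) ^ (r * (Module.finrank K V + 1)) *
        (flatThreshold K V m)⁻¹ ^ Fintype.card K ^ (m - r) /
        (Fintype.card K : ℝ) ^ ((m + 1) * (Module.finrank K V - m)) =
      (Fintype.card K : ℝ) ^ (r + m * (m + 1) +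
        Module.finrank K V * (r - (m + 1) * (1 - ((Fintype.card K : ℝ) ^ r)⁻¹))) := by
  have hq : (0 : ℝ) < Fintype.card K := mod_cast Fintype.card_pos
  rw [inv_pow, flatThreshold_pow_card_pow_sub hr, ← Real.rpow_neg hq.le, neg_neg,
    ← Real.rpow_natCast, ← Real.rpow_natCast _ ((m + 1) * _), ← Real.rpow_add hq,
    ← Real.rpow_sub hq]
  push_cast [hm]
  ring_nf

theorem sub_mul_one_sub_inv_pow_le {q : ℕ} (hq : 2 ≤ q) (hr : r ≠ 0) (hrm : r ≤ m) :
    (r - (m + 1) * (1 - ((q : ℝ) ^ r)⁻¹) : ℝ) ≤ 2 / q - 1 := by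
  obtain ⟨j, rfl⟩ := Nat.exists_eq_succ_of_ne_zero hr
  have hq' : (1 : ℝ) ≤ q := mod_cast one_le_two.trans hq
  have hj : j + 2 ≤ 2 * q ^ j := by
    have := (Nat.lt_pow_self (n := j) (one_lt_two)).trans_le (Nat.pow_le_pow_left hq j)
    have := Nat.one_le_pow j q (zero_lt_two.trans_le hq)
    omega
  calc ((j + 1 : ℕ) - (m + 1) * (1 - ((q : ℝ) ^ (j + 1))⁻¹) : ℝ)
      ≤ (j + 1 : ℕ) - ((j + 1 : ℕ) + 1) * (1 - ((q : ℝ) ^ (j + 1))⁻¹) := by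
        have := sub_nonneg.2 (inv_le_one_of_one_le₀ (one_le_pow₀ hq' (n := j + 1)))
        gcongr
    _ = ((j + 2 : ℕ) : ℝ) / q ^ (j + 1) - 1 := by
        push_cast
        ring
    _ ≤ (2 * q ^ j : ℕ) / q ^ (j + 1) - 1 := by gcongr
    _ = 2 / q - 1 := by
        rw [Nat.cast_mul, Nat.cast_pow, Nat.cast_ofNat, pow_succ',
          mul_div_mul_right _ _ (by positivity)]

theorem pow_mul_inv_pow_div_le_mul_div_flatThreshold (hr : r ≠ 0) (hrm : r ≤ m)
    (hm : m ≤ Module.finrank K V) (hθ : flatThreshold K V m ≤ θ) :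
    (Fintype.card K : ℝ) ^ (r * (Module.finrank K V + 1)) * θ⁻¹ ^ Fintype.card K ^ (m - r) /
        (Fintype.card K : ℝ) ^ ((m + 1) * (Module.finrank K V - m)) ≤
      (Fintype.card K : ℝ) ^
          ((m * (m + 2) : ℕ) - Module.finrank K V * (1 - 2 / Fintype.card K : ℝ)) *
        (flatThreshold K V m / θ) := by
  have hq : (1 : ℝ) ≤ Fintype.card K := mod_cast Fintype.card_pos
  have ht : 0 < flatThreshold K V m := flatThreshold_pos
  have hθ0 : 0 < θ := ht.trans_le hθ
  have hratio : flatThreshold K V m / θ ≤ 1 := (div_le_one hθ0).2 hθ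
  have hsplit : θ⁻¹ = (flatThreshold K V m)⁻¹ * (flatThreshold K V m / θ) := by
    field_simp
  rw [hsplit, mul_pow, ← mul_assoc, mul_div_right_comm, pow_mul_inv_flatThreshold_pow_div hrm hm]
  refine mul_le_mul ?_ ?_ (by positivity) (by positivity)
  · refine Real.rpow_le_rpow_of_exponent_le hq ?_
    have := mul_le_mul_of_nonneg_left (sub_mul_one_sub_inv_pow_le
      (Fintype.one_lt_card (α := K)) hr hrm) (Module.finrank K V).cast_nonneg
    have : (r : ℝ) ≤ m := mod_cast hrm
    push_cast
    linarith
  · exact pow_le_of_le_one (by positivity) hratio (by positivity)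

theorem inv_pow_div_eq_mul_div_flatThreshold_pow (hm : m ≤ Module.finrank K V) :
    θ⁻¹ ^ Fintype.card K ^ m / (Fintype.card K : ℝ) ^ ((m + 1) * (Module.finrank K V - m)) =
      (Fintype.card K : ℝ) ^ (m * (m + 1)) * (flatThreshold K V m / θ) ^ Fintype.card K ^ m := by
  have hexp : Module.finrank K V * (m + 1) =
      m * (m + 1) + (m + 1) * (Module.finrank K V - m) := by
    rw [mul_comm m, ← mul_add, Nat.add_sub_cancel' hm, mul_comm]
  rw [inv_pow, div_pow, flatThreshold_pow_card_pow, hexp, pow_add]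
  field_simp

theorem one_sub_prRandomSubset_containsFlat_le [Fintype V] (hm : m ≤ Module.finrank K V)
    (hθ : θ ≤ 1) (ht : flatThreshold K V m ≤ θ) :
    1 - prRandomSubset (Finset.univ : Finset V) θ (ContainsFlat K m) ≤
      (Fintype.card K : ℝ) ^ (m * (m + 1)) * (flatThreshold K V m / θ) ^ Fintype.card K ^ m +
        m * ((Fintype.card K : ℝ) ^ ((m * (m + 2) : ℕ) -
          Module.finrank K V * (1 - 2 / Fintype.card K : ℝ)) * (flatThreshold K V m / θ)) := by
  have hθ0 : 0 < θ := flatThreshold_pos.trans_le ht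
  refine (one_sub_prRandomSubset_containsFlat_le_sum hm ⟨hθ0, hθ⟩).trans ?_
  rw [Finset.sum_div, Finset.sum_range_succ', add_comm]
  gcongr ?_ + ?_
  · rw [zero_mul, pow_zero, one_mul, m.sub_zero, inv_pow_div_eq_mul_div_flatThreshold_pow hm]
  · refine (Finset.sum_le_card_nsmul _ _ _ fun r hr =>
      pow_mul_inv_pow_div_le_mul_div_flatThreshold r.succ_ne_zero (Finset.mem_range.1 hr) hm
        ht).trans_eq ?_
    rw [Finset.card_range, nsmul_eq_mul]

theorem rpow_sub_mul_one_sub_le_inv {q n a : ℕ} (hq : 3 ≤ q) (hn : 3 * (a + 1) ≤ n) :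
    (q : ℝ) ^ (a - n * (1 - 2 / q) : ℝ) ≤ (q : ℝ)⁻¹ := by
  have hq' : (3 : ℝ) ≤ q := mod_cast hq
  have hn' : (3 * (a + 1) : ℝ) ≤ n := mod_cast hn
  rw [← Real.rpow_neg_one]
  refine Real.rpow_le_rpow_of_exponent_le (by linarith) ?_
  have hfactor : 3⁻¹ ≤ 1 - 2 / (q : ℝ) := by
    linarith [div_le_div_of_nonneg_left zero_le_two three_pos hq']
  have := mul_le_mul hn' hfactor (by norm_num) n.cast_nonneg
  linarith

theorem rpow_sub_mul_one_sub_le_two_pow {q n a : ℕ} (hq : 2 ≤ q) (hn : 3 * (a + 1) ≤ n) :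
    (q : ℝ) ^ (a - n * (1 - 2 / q) : ℝ) ≤ 2 ^ a := by
  obtain rfl | hq := hq.eq_or_lt
  · simp
  · calc _ ≤ (q : ℝ)⁻¹ := rpow_sub_mul_one_sub_le_inv hq hn
      _ ≤ 1 := Nat.cast_inv_le_one q
      _ ≤ 2 ^ a := one_le_pow₀ one_le_two

end Threshold

section Limits

open scoped Topology

variable {ι : Type*} {l : Filter ι}

theorem tendsto_pow_mul_pow_zero {s : ι → ℝ} {u : ι → ℕ} (hs : ∀ i, 0 ≤ s i)
    (hs0 : Tendsto s l (𝓝 0)) (hu : ∀ i, u i ≠ 0) (d : ℕ) :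
    Tendsto (fun i => (u i : ℝ) ^ d * s i ^ u i) l (𝓝 0) := by
  obtain ⟨C, hC⟩ := (tendsto_pow_const_mul_const_pow_of_abs_lt_one d
    (show |(2⁻¹ : ℝ)| < 1 by norm_num [abs_of_pos])).bddAbove_range
  have hlim : Tendsto (fun i => C * (2 * s i)) l (𝓝 0) := by
    simpa using (hs0.const_mul 2).const_mul C
  refine squeeze_zero' (.of_forall fun i => by have := hs i; positivity) ?_ hlim
  filter_upwards [hs0.eventually_le_const (show (0 : ℝ) < 2⁻¹ by norm_num)] with i hi
  have := hs i
  calc (u i : ℝ) ^ d * s i ^ u i = (u i : ℝ) ^ d * 2⁻¹ ^ u i * (2 * s i) ^ u i := by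
        rw [mul_assoc, ← mul_pow, inv_mul_cancel_left₀ two_ne_zero]
    _ ≤ C * (2 * s i) := by
        have hpow : (2 * s i) ^ u i ≤ 2 * s i :=
          pow_le_of_le_one (by positivity) (by linarith) (hu i)
        have hC' := hC (Set.mem_range_self (u i))
        exact mul_le_mul hC' hpow (by positivity) (le_trans (by positivity) hC')

variable {K V : ι → Type*} [∀ i, Field (K i)] [∀ i, Fintype (K i)] [∀ i, AddCommGroup (V i)]
  [∀ i, Module (K i) (V i)] [∀ i, Fintype (V i)] {m : ℕ} {θ : ι → ℝ}

theorem tendsto_prRandomSubset_containsFlat_zero (hθ : ∀ i, θ i ∈ Set.Icc 0 1)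
    (h : θ =o[l] fun i => flatThreshold (K i) (V i) m) :
    Tendsto (fun i => prRandomSubset (Finset.univ : Finset (V i)) (θ i) (ContainsFlat (K i) m))
      l (𝓝 0) := by
  have hratio := h.tendsto_div_nhds_zero
  refine squeeze_zero' (.of_forall fun i => prRandomSubset_nonneg_s8 (hθ i)) ?_ hratio
  filter_upwards [hratio.eventually_le_const one_pos] with i hi
  exact (prRandomSubset_containsFlat_le_div_flatThreshold_pow (hθ i)).trans <|
    pow_le_of_le_one (div_nonneg (hθ i).1 flatThreshold_pos.le) hi
      (pow_ne_zero _ Fintype.card_ne_zero)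

theorem tendsto_prRandomSubset_containsFlat_zero_of_le (hm : m ≠ 0)
    (hθ : ∀ i, θ i ∈ Set.Icc 0 1) (hK : Tendsto (fun i => Fintype.card (K i)) l atTop) {r : ℝ}
    (hr : r < 1) (h : ∀ᶠ i in l, θ i ≤ r * flatThreshold (K i) (V i) m) :
    Tendsto (fun i => prRandomSubset (Finset.univ : Finset (V i)) (θ i) (ContainsFlat (K i) m))
      l (𝓝 0) := by
  have hlim : Tendsto (fun i => max r 0 ^ Fintype.card (K i) ^ m) l (𝓝 0) :=
    (tendsto_pow_atTop_nhds_zero_of_lt_one (le_max_right r 0) (max_lt hr one_pos)).comp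
      ((tendsto_pow_atTop hm).comp hK)
  refine squeeze_zero' (.of_forall fun i => prRandomSubset_nonneg_s8 (hθ i)) ?_ hlim
  filter_upwards [h] with i hi
  refine (prRandomSubset_containsFlat_le_div_flatThreshold_pow (hθ i)).trans ?_
  have hratio : θ i / flatThreshold (K i) (V i) m ≤ max r 0 :=
    ((div_le_iff₀ flatThreshold_pos).2 hi).trans (le_max_left r 0)
  exact pow_le_pow_left₀ (div_nonneg (hθ i).1 flatThreshold_pos.le) hratio _

theorem tendsto_prRandomSubset_containsFlat_one_of_bounds
    (hV : Tendsto (fun i => Module.finrank (K i) (V i)) l atTop) (hθ : ∀ i, θ i ∈ Set.Icc 0 1)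
    (ht : ∀ᶠ i in l, flatThreshold (K i) (V i) m ≤ θ i)
    (h₀ : Tendsto (fun i => (Fintype.card (K i) : ℝ) ^ (m * (m + 1)) *
      (flatThreshold (K i) (V i) m / θ i) ^ Fintype.card (K i) ^ m) l (𝓝 0))
    (h₁ : Tendsto (fun i => (Fintype.card (K i) : ℝ) ^ ((m * (m + 2) : ℕ) -
      Module.finrank (K i) (V i) * (1 - 2 / Fintype.card (K i) : ℝ)) *
        (flatThreshold (K i) (V i) m / θ i)) l (𝓝 0)) :
    Tendsto (fun i => prRandomSubset (Finset.univ : Finset (V i)) (θ i) (ContainsFlat (K i) m))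
      l (𝓝 1) := by
  have hlim := (h₀.add (h₁.const_mul (m : ℝ))).const_sub 1
  rw [mul_zero, add_zero, sub_zero] at hlim
  refine tendsto_of_tendsto_of_tendsto_of_le_of_le' hlim tendsto_const_nhds ?_
    (.of_forall fun i => prRandomSubset_le_one (hθ i))
  filter_upwards [ht, hV.eventually_ge_atTop m] with i hti hmi
  exact sub_le_comm.1 (one_sub_prRandomSubset_containsFlat_le hmi (hθ i).2 hti)

theorem tendsto_prRandomSubset_containsFlat_one
    (hV : Tendsto (fun i => Module.finrank (K i) (V i)) l atTop) (hθ : ∀ i, θ i ∈ Set.Icc 0 1)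
    (h : (fun i => flatThreshold (K i) (V i) m) =o[l] θ) :
    Tendsto (fun i => prRandomSubset (Finset.univ : Finset (V i)) (θ i) (ContainsFlat (K i) m))
      l (𝓝 1) := by
  have hratio := h.tendsto_div_nhds_zero
  have hnonneg (i : ι) : 0 ≤ flatThreshold (K i) (V i) m / θ i :=
    div_nonneg flatThreshold_pos.le (hθ i).1
  refine tendsto_prRandomSubset_containsFlat_one_of_bounds hV hθ ?_ ?_ ?_
  · filter_upwards [h.bound one_pos] with i hi
    rwa [one_mul, Real.norm_of_nonneg flatThreshold_pos.le, Real.norm_of_nonneg (hθ i).1] at hi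
  · simpa only [Nat.cast_pow, ← pow_mul] using
      tendsto_pow_mul_pow_zero hnonneg hratio
        (fun i => pow_ne_zero m (Fintype.card_ne_zero (α := K i))) (m + 1)
  · have hlim : Tendsto (fun i => 2 ^ (m * (m + 2)) * (flatThreshold (K i) (V i) m / θ i))
        l (𝓝 0) := by
      simpa only [mul_zero] using hratio.const_mul (2 ^ (m * (m + 2)))
    refine squeeze_zero' (.of_forall fun i => mul_nonneg (by positivity) (hnonneg i)) ?_ hlim
    filter_upwards [hV.eventually_ge_atTop (3 * (m * (m + 2) + 1))] with i hi
    gcongr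
    · exact hnonneg i
    · exact rpow_sub_mul_one_sub_le_two_pow Fintype.one_lt_card hi

theorem tendsto_prRandomSubset_containsFlat_one_of_le
    (hV : Tendsto (fun i => Module.finrank (K i) (V i)) l atTop) (hm : m ≠ 0)
    (hθ : ∀ i, θ i ∈ Set.Icc 0 1) (hK : Tendsto (fun i => Fintype.card (K i)) l atTop) {r : ℝ}
    (hr : 1 < r) (h : ∀ᶠ i in l, r * flatThreshold (K i) (V i) m ≤ θ i) :
    Tendsto (fun i => prRandomSubset (Finset.univ : Finset (V i)) (θ i) (ContainsFlat (K i) m))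
      l (𝓝 1) := by
  have hr0 : 0 < r := one_pos.trans hr
  have hnonneg (i : ι) : 0 ≤ flatThreshold (K i) (V i) m / θ i :=
    div_nonneg flatThreshold_pos.le (hθ i).1
  have hratio : ∀ᶠ i in l, flatThreshold (K i) (V i) m / θ i ≤ r⁻¹ := by
    filter_upwards [h] with i hi
    have ht : 0 < flatThreshold (K i) (V i) m := flatThreshold_pos
    rwa [div_le_iff₀ ((mul_pos hr0 ht).trans_le hi), le_inv_mul_iff₀ hr0]
  refine tendsto_prRandomSubset_containsFlat_one_of_bounds hV hθ ?_ ?_ ?_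
  · filter_upwards [h] with i hi
    exact (le_mul_of_one_le_left flatThreshold_pos.le hr.le).trans hi
  · have hlim : Tendsto (fun i => (Fintype.card (K i) : ℝ) ^ (m * (m + 1)) *
        r⁻¹ ^ Fintype.card (K i) ^ m) l (𝓝 0) := by
      have habs : |r⁻¹| < 1 := by
        rw [abs_of_pos (inv_pos.2 hr0)]
        exact inv_lt_one_of_one_lt₀ hr
      simpa only [Function.comp_def, Nat.cast_pow, ← pow_mul] using
        (tendsto_pow_const_mul_const_pow_of_abs_lt_one (m + 1) habs).comp
          ((tendsto_pow_atTop hm).comp hK)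
    refine squeeze_zero' (.of_forall fun i => ?_) ?_ hlim
    · exact mul_nonneg (by positivity) (pow_nonneg (hnonneg i) _)
    · filter_upwards [hratio] with i hi
      have := hnonneg i
      gcongr
  · refine squeeze_zero' (.of_forall fun i => mul_nonneg (by positivity) (hnonneg i)) ?_
      (tendsto_inv_atTop_zero.comp (tendsto_natCast_atTop_atTop.comp hK))
    filter_upwards [hratio, hK.eventually_ge_atTop 3,
      hV.eventually_ge_atTop (3 * (m * (m + 2) + 1))] with i hi hK3 hVi
    exact (mul_le_of_le_one_right (by positivity)
      (hi.trans (inv_le_one_of_one_le₀ hr.le))).trans (rpow_sub_mul_one_sub_le_inv hK3 hVi)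

end Limits

theorem stmt8 (n q : ℕ → ℕ) (F : ℕ → Type) [∀ i, Field (F i)] [∀ i, Fintype (F i)]
    (m : ℕ) (hm : 1 ≤ m) (hmn : ∀ i, m < n i)
    (hq : ∀ i, Fintype.card (F i) = q i) (hqpp : ∀ i, IsPrimePow (q i))
    (hntop : Tendsto n atTop atTop) :
    (∀ θ : ℕ → ℝ, (∀ i, 0 ≤ θ i ∧ θ i ≤ 1) →
      (θ =o[atTop] (fun i =>
          (q i : ℝ) ^ (-(((n i : ℝ) * ((m : ℝ) + 1)) / (q i : ℝ) ^ m))) →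
        Tendsto (fun i => prRandomSubset (Finset.univ : Finset (Fin (n i) → F i)) (θ i)
          (fun A => ∃ S : Set (Fin (n i) → F i), IsFlat (F i) m S ∧
            S ⊆ (A : Set (Fin (n i) → F i)))) atTop (nhds 0)) ∧
      ((fun i => (q i : ℝ) ^ (-(((n i : ℝ) * ((m : ℝ) + 1)) / (q i : ℝ) ^ m)))
          =o[atTop] θ →
        Tendsto (fun i => prRandomSubset (Finset.univ : Finset (Fin (n i) → F i)) (θ i)
          (fun A => ∃ S : Set (Fin (n i) → F i), IsFlat (F i) m S ∧
            S ⊆ (A : Set (Fin (n i) → F i)))) atTop (nhds 1))) ∧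
    (Tendsto q atTop atTop → ∀ ε : ℝ, 0 < ε → ∀ θ : ℕ → ℝ, (∀ i, 0 ≤ θ i ∧ θ i ≤ 1) →
      ((∀ i, θ i ≤ (1 - ε) * (q i : ℝ) ^ (-(((n i : ℝ) * ((m : ℝ) + 1)) / (q i : ℝ) ^ m))) →
        Tendsto (fun i => prRandomSubset (Finset.univ : Finset (Fin (n i) → F i)) (θ i)
          (fun A => ∃ S : Set (Fin (n i) → F i), IsFlat (F i) m S ∧
            S ⊆ (A : Set (Fin (n i) → F i)))) atTop (nhds 0)) ∧
      ((∀ i, (1 + ε) * (q i : ℝ) ^ (-(((n i : ℝ) * ((m : ℝ) + 1)) / (q i : ℝ) ^ m)) ≤ θ i) →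
        Tendsto (fun i => prRandomSubset (Finset.univ : Finset (Fin (n i) → F i)) (θ i)
          (fun A => ∃ S : Set (Fin (n i) → F i), IsFlat (F i) m S ∧
            S ⊆ (A : Set (Fin (n i) → F i)))) atTop (nhds 1))) := by
  have hdim (i : ℕ) : Module.finrank (F i) (Fin (n i) → F i) = n i := Module.finrank_fin_fun _
  have hK (hqtop : Tendsto q atTop atTop) :
      Tendsto (fun i => Fintype.card (F i)) atTop atTop := by
    simpa only [hq] using hqtop
  have hV : Tendsto (fun i => Module.finrank (F i) (Fin (n i) → F i)) atTop atTop := by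
    simpa only [hdim] using hntop
  have ht (i : ℕ) : (q i : ℝ) ^ (-(((n i : ℝ) * ((m : ℝ) + 1)) / (q i : ℝ) ^ m)) =
      flatThreshold (F i) (Fin (n i) → F i) m := by
    rw [flatThreshold, hdim, hq]
  have hm0 : m ≠ 0 := Nat.one_le_iff_ne_zero.1 hm
  simp only [ht]
  refine ⟨fun θ hθ => ⟨?_, ?_⟩, fun hqtop ε hε θ hθ => ⟨fun h => ?_, fun h => ?_⟩⟩
  · exact tendsto_prRandomSubset_containsFlat_zero hθ
  · exact tendsto_prRandomSubset_containsFlat_one hV hθ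
  · exact tendsto_prRandomSubset_containsFlat_zero_of_le hm0 hθ (hK hqtop)
      (sub_lt_self 1 hε) (.of_forall h)
  · exact tendsto_prRandomSubset_containsFlat_one_of_le hV hm0 hθ (hK hqtop)
      (lt_add_of_pos_right 1 hε) (.of_forall h)
end

section
/- Let m, n be integers with 1 ≤ m < n and q a prime power, with n + q → ∞. Let X be a random set of points of F_q^n in which each point is included independently with probability θ, and let Y be a random set of m-flats of F_q^n in which each m-flat is included independently with probability θ (independently of X). Let Γ be the event that there exists a pair (x, y) ∈ X × Y with x contained in y. If m ∈ {1, n−1}, then Γ has threshold function q^{−(1/2)((n−m)(m+1)+m)}; otherwise, Γ has threshold function q^{−n}. -/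
open Filter Asymptotics

noncomputable def prPairRandomSubset {α β : Type*} [Finite α] [Finite β] (θ : ℝ)
    (E : Finset α → Finset β → Prop) : ℝ :=
  letI := Fintype.ofFinite α
  letI := Fintype.ofFinite β
  ∑ A ∈ (Finset.univ : Finset α).powerset, ∑ B ∈ (Finset.univ : Finset β).powerset,
    @ite ℝ (E A B) (Classical.propDecidable _)
      (θ ^ (A.card + B.card) *
        (1 - θ) ^ ((Fintype.card α - A.card) + (Fintype.card β - B.card))) 0

/-!
Write `P` for the probability of an incident pair and `N` for the number of `m`-dimensional
subspaces of `F_q ^ n`, which is also the number of `m`-flats through a given point. The union bound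
over the points gives `P ≤ q ^ n * θ`, and the union bound over the `q ^ n * N` incident pairs gives
`P ≤ q ^ n * N * θ ^ 2`. Conversely, two distinct incident pairs are correlated only if they share a
point or a flat, so Chebyshev's inequality for the number of incident pairs present yields
`1 - P ≤ 2 / (q ^ n * θ) + 1 / (q ^ n * N * θ ^ 2)`.
Counting graphs of linear maps shows `N ≥ q ^ (m * (n - m))`, so `P` tends to `1` as soon as `θ`
dominates both `q ^ (-n)` and `q ^ (-(n + m * (n - m)) / 2)`. For `2 ≤ m ≤ n - 2` the first of these
scales dominates and matches the union bound over points. For lines and, dually, hyperplanes the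
second one dominates, and `N ≤ 2 * q ^ (m * (n - m))` makes it match the union bound over pairs.
-/

section RandomSubset

open Finset

variable {γ ι : Type*} [Fintype γ] [Fintype ι]

/-- The expectation of a real function of a random subset of `γ` which contains each point
independently with probability `θ`, as a linear functional. It makes sense for every real `θ`, but
is monotone only for `θ` in the unit interval. -/
noncomputable def subsetExpectation (θ : ℝ) : (Finset γ → ℝ) →ₗ[ℝ] ℝ :=
  ∑ A : Finset γ, (θ ^ #A * (1 - θ) ^ (Fintype.card γ - #A)) • LinearMap.proj A

/-- The probability that a random subset of `γ`, containing each point independently with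
probability `θ`, belongs to the event `E`. -/
noncomputable def subsetProb (θ : ℝ) (E : Set (Finset γ)) : ℝ :=
  subsetExpectation θ (E.indicator 1)

/-- The random variable counting the indices `i` for which the random subset contains `s i`. -/
noncomputable def containedCount (s : ι → Finset γ) : Finset γ → ℝ :=
  ∑ i, {A | s i ⊆ A}.indicator 1

theorem subsetExpectation_apply (θ : ℝ) (f : Finset γ → ℝ) :
    subsetExpectation θ f =
      ∑ A : Finset γ, θ ^ #A * (1 - θ) ^ (Fintype.card γ - #A) * f A := by
  simp [subsetExpectation, LinearMap.sum_apply]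

theorem subsetExpectation_mono {θ : ℝ} (h0 : 0 ≤ θ) (h1 : θ ≤ 1) {f g : Finset γ → ℝ}
    (hfg : f ≤ g) : subsetExpectation θ f ≤ subsetExpectation θ g := by
  simp only [subsetExpectation_apply]
  have : 0 ≤ 1 - θ := sub_nonneg.2 h1
  gcongr with A
  exact hfg A

theorem subsetProb_superset (θ : ℝ) (S : Finset γ) : subsetProb θ {A | S ⊆ A} = θ ^ #S := by
  classical
  have hweight (A : Finset γ) :
      (∏ _a ∈ A, θ) * ∏ a ∈ univ \ A, (if a ∈ S then 0 else 1 - θ) =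
        θ ^ #A * (1 - θ) ^ (Fintype.card γ - #A) * {A | S ⊆ A}.indicator 1 A := by
    rw [prod_const, mul_assoc]
    congr 1
    by_cases hS : S ⊆ A
    · rw [Set.indicator_of_mem (show A ∈ {A | S ⊆ A} from hS), Pi.one_apply, mul_one,
        ← card_univ, ← card_sdiff_of_subset (subset_univ A), ← prod_const]
      exact prod_congr rfl fun a ha => if_neg fun h => (mem_sdiff.1 ha).2 (hS h)
    · obtain ⟨a, haS, haA⟩ := not_subset.1 hS
      rw [Set.indicator_of_notMem (show A ∉ {A | S ⊆ A} from hS), mul_zero]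
      exact prod_eq_zero (mem_sdiff.2 ⟨mem_univ a, haA⟩) (if_pos haS)
  calc subsetProb θ {A | S ⊆ A}
      = ∑ A : Finset γ, (∏ _a ∈ A, θ) * ∏ a ∈ univ \ A, (if a ∈ S then 0 else 1 - θ) := by
        simp only [subsetProb, subsetExpectation_apply, hweight]
    _ = ∏ a, (θ + if a ∈ S then 0 else 1 - θ) := by rw [prod_add, powerset_univ]
    _ = ∏ a, (if a ∈ S then θ else 1) :=
        prod_congr rfl fun a _ => by split_ifs <;> ring
    _ = θ ^ #S := by simp

theorem subsetExpectation_one (θ : ℝ) : subsetExpectation θ (1 : Finset γ → ℝ) = 1 := by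
  simpa [subsetProb] using subsetProb_superset θ (∅ : Finset γ)

theorem subsetProb_mono {θ : ℝ} (h0 : 0 ≤ θ) (h1 : θ ≤ 1) {E E' : Set (Finset γ)} (h : E ⊆ E') :
    subsetProb θ E ≤ subsetProb θ E' :=
  subsetExpectation_mono h0 h1 (Set.indicator_le_indicator_of_subset h fun _ => zero_le_one)

theorem subsetProb_nonneg {θ : ℝ} (h0 : 0 ≤ θ) (h1 : θ ≤ 1) (E : Set (Finset γ)) :
    0 ≤ subsetProb θ E := by
  rw [← map_zero (subsetExpectation (γ := γ) θ)]
  exact subsetExpectation_mono h0 h1 (Set.indicator_nonneg fun _ _ => zero_le_one)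

theorem subsetProb_le_one {θ : ℝ} (h0 : 0 ≤ θ) (h1 : θ ≤ 1) (E : Set (Finset γ)) :
    subsetProb θ E ≤ 1 := by
  rw [← subsetExpectation_one (γ := γ) θ]
  exact subsetExpectation_mono h0 h1 (Set.indicator_le_self' fun _ _ => zero_le_one)

theorem subsetExpectation_containedCount (θ : ℝ) (s : ι → Finset γ) :
    subsetExpectation θ (containedCount s) = ∑ i, θ ^ #(s i) := by
  rw [containedCount, map_sum]
  exact sum_congr rfl fun i _ => subsetProb_superset θ (s i)

theorem subsetExpectation_containedCount_sq [DecidableEq γ] (θ : ℝ) (s : ι → Finset γ) :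
    subsetExpectation θ (containedCount s ^ 2) = ∑ i, ∑ j, θ ^ #(s i ∪ s j) := by
  have hmul (i j : ι) : ({A | s i ⊆ A}.indicator 1 * {A | s j ⊆ A}.indicator 1 : Finset γ → ℝ) =
      {A | s i ∪ s j ⊆ A}.indicator 1 := by
    simp only [union_subset_iff, Set.ofPred_and, Set.inter_indicator_one]
  simp only [sq, containedCount, sum_mul_sum, hmul, map_sum]
  exact sum_congr rfl fun i _ => sum_congr rfl fun j _ => subsetProb_superset θ (s i ∪ s j)

theorem subsetProb_exists_subset_le {θ : ℝ} (h0 : 0 ≤ θ) (h1 : θ ≤ 1) (s : ι → Finset γ) :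
    subsetProb θ {A | ∃ i, s i ⊆ A} ≤ ∑ i, θ ^ #(s i) := by
  rw [← subsetExpectation_containedCount]
  refine subsetExpectation_mono h0 h1 (Set.indicator_le' ?_ ?_)
  · rintro A ⟨i, hA⟩
    rw [containedCount, Finset.sum_apply]
    refine le_trans ?_ (single_le_sum (fun j _ => Set.indicator_nonneg (by simp) A) (mem_univ i))
    simp [hA]
  · intro A _
    rw [containedCount, Finset.sum_apply]
    exact sum_nonneg fun j _ => Set.indicator_nonneg (by simp) A

theorem sq_mean_mul_one_sub_subsetProb_le_variance {θ : ℝ} (h0 : 0 ≤ θ) (h1 : θ ≤ 1)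
    {E : Set (Finset γ)} {Z : Finset γ → ℝ} (hZ : ∀ A ∉ E, Z A = 0) :
    subsetExpectation θ Z ^ 2 * (1 - subsetProb θ E) ≤
      subsetExpectation θ (Z ^ 2) - subsetExpectation θ Z ^ 2 := by
  set μ := subsetExpectation θ Z
  have hle : μ ^ 2 • (1 - E.indicator 1) ≤ Z ^ 2 - (2 * μ) • Z + μ ^ 2 • (1 : Finset γ → ℝ) := by
    intro A
    by_cases hA : A ∈ E
    · simp only [Pi.smul_apply, Pi.sub_apply, Pi.add_apply, Pi.pow_apply, Pi.one_apply,
        smul_eq_mul, Set.indicator_of_mem hA]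
      nlinarith [sq_nonneg (Z A - μ)]
    · simp [hA, hZ A hA]
  have hmono := subsetExpectation_mono h0 h1 hle
  simp only [map_add, map_sub, map_smul, smul_eq_mul, subsetExpectation_one] at hmono
  change μ ^ 2 * (1 - subsetProb θ E) ≤ _ - 2 * μ * μ + μ ^ 2 * 1 at hmono
  linarith

-- Disjoint pairs of sets are contained independently, so they cancel from the variance.
theorem sq_mean_mul_one_sub_subsetProb_exists_subset_le [DecidableEq γ] {θ : ℝ} (h0 : 0 ≤ θ)
    (h1 : θ ≤ 1) (s : ι → Finset γ) :
    (∑ i, θ ^ #(s i)) ^ 2 * (1 - subsetProb θ {A | ∃ i, s i ⊆ A}) ≤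
      ∑ i, ∑ j with ¬Disjoint (s i) (s j), θ ^ #(s i ∪ s j) := by
  have hvanish (A : Finset γ) (hA : A ∉ {A | ∃ i, s i ⊆ A}) : containedCount s A = 0 := by
    rw [containedCount, Finset.sum_apply]
    exact sum_eq_zero fun i _ => Set.indicator_of_notMem (fun h => hA ⟨i, h⟩) _
  have hvariance := sq_mean_mul_one_sub_subsetProb_le_variance h0 h1 hvanish
  rw [subsetExpectation_containedCount_sq, subsetExpectation_containedCount] at hvariance
  refine hvariance.trans ?_
  rw [sub_le_iff_le_add, sq, sum_mul_sum, ← sum_add_distrib]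
  refine sum_le_sum fun i _ => ?_
  rw [← sum_filter_add_sum_filter_not univ fun j => ¬Disjoint (s i) (s j)]
  refine add_le_add_right ?_ _
  calc ∑ j with ¬¬Disjoint (s i) (s j), θ ^ #(s i ∪ s j)
      = ∑ j with ¬¬Disjoint (s i) (s j), θ ^ #(s i) * θ ^ #(s j) := by
        refine sum_congr rfl fun j hj => ?_
        rw [card_union_of_disjoint (not_not.1 (mem_filter.1 hj).2), pow_add]
    _ ≤ ∑ j, θ ^ #(s i) * θ ^ #(s j) :=
        sum_le_sum_of_subset_of_nonneg (filter_subset _ _) fun _ _ _ => by positivity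

end RandomSubset

section IncidentPair

open Finset

variable {α β : Type*}

theorem prPairRandomSubset_eq_subsetProb [Fintype α] [Fintype β] (θ : ℝ)
    (E : Finset α → Finset β → Prop) :
    prPairRandomSubset θ E =
      subsetProb θ {C : Finset (α ⊕ β) | E C.toLeft C.toRight} := by
  classical
  have hα : Fintype.ofFinite α = ‹Fintype α› := Subsingleton.elim _ _
  have hβ : Fintype.ofFinite β = ‹Fintype β› := Subsingleton.elim _ _
  rw [prPairRandomSubset, hα, hβ, powerset_univ, powerset_univ, ← Fintype.sum_prod_type',
    subsetProb, subsetExpectation_apply]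
  refine (Fintype.sum_equiv sumEquiv.toEquiv _ _ fun C => ?_).symm
  have hcompl : Fintype.card α + Fintype.card β - #C =
      Fintype.card α - #C.toLeft + (Fintype.card β - #C.toRight) := by
    rw [← card_toLeft_add_card_toRight,
      tsub_add_tsub_comm (card_le_univ C.toLeft) (card_le_univ C.toRight)]
  simp [Set.indicator_apply, hcompl, card_toLeft_add_card_toRight]

/-- The pairs of elements related by `R`. -/
abbrev IncidentPair (R : α → β → Prop) : Type _ := {p : α × β // R p.1 p.2}

/-- The probability that independent random subsets of `α` and `β`, each containing every point
independently with probability `θ`, contain the two members of some incident pair of `R`. -/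
noncomputable def incidentPairProb [Finite α] [Finite β] (R : α → β → Prop) (θ : ℝ) : ℝ :=
  prPairRandomSubset θ fun A B => ∃ x ∈ A, ∃ y ∈ B, R x y

/-- The pair `p` as a two-element subset of `α ⊕ β`: two independent random subsets of `α` and `β`
are encoded as a single random subset of `α ⊕ β`. -/
def pairBlock (p : α × β) : Finset (α ⊕ β) := disjSum {p.1} {p.2}

theorem card_pairBlock (p : α × β) : #(pairBlock p) = 2 := by
  simp [pairBlock]

theorem pow_card_pairBlock_union_le [DecidableEq α] [DecidableEq β] {θ : ℝ} (h0 : 0 ≤ θ)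
    {p p' : α × β} (h : ¬Disjoint (pairBlock p) (pairBlock p')) :
    θ ^ #(pairBlock p ∪ pairBlock p') ≤ (if p' = p then θ ^ 2 else 0) +
      ((if p'.1 = p.1 then θ ^ 3 else 0) + (if p'.2 = p.2 then θ ^ 3 else 0)) := by
  obtain ⟨a, b⟩ := p
  obtain ⟨a', b'⟩ := p'
  have hunion : pairBlock (a, b) ∪ pairBlock (a', b') = disjSum {a, a'} {b, b'} := by
    ext (x | x) <;> simp [pairBlock]
  have h3 : 0 ≤ θ ^ 3 := by positivity
  rw [hunion, card_disjSum]
  by_cases ha : a' = a <;> by_cases hb : b' = b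
  · simp [ha, hb, h3]
  · simp [ha, hb, card_pair (Ne.symm hb)]
  · simp [ha, hb, card_pair (Ne.symm ha)]
  · refine absurd ?_ h
    simp [pairBlock, disjoint_left, Ne.symm ha, Ne.symm hb]

theorem incidentPairProb_eq_subsetProb [Fintype α] [Fintype β] (R : α → β → Prop) (θ : ℝ) :
    incidentPairProb R θ =
      subsetProb θ {C : Finset (α ⊕ β) | ∃ p : IncidentPair R, pairBlock p.1 ⊆ C} := by
  rw [incidentPairProb, prPairRandomSubset_eq_subsetProb]
  congr! 3
  simp only [mem_toLeft, mem_toRight, pairBlock, disjSum_subset, singleton_subset_iff,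
    Subtype.exists, exists_and_left, exists_prop, Prod.exists]
  grind

theorem card_incidentPair_fst_eq_le [Finite β] (R : α → β → Prop) [Fintype (IncidentPair R)]
    [DecidableEq α] (x : α) :
    #{p : IncidentPair R | p.1.1 = x} ≤ Nat.card {y // R x y} := by
  rw [← Fintype.card_subtype, ← Nat.card_eq_fintype_card]
  refine Nat.card_le_card_of_injective
    (fun p : {p : IncidentPair R // p.1.1 = x} => ⟨p.1.1.2, by simpa only [p.2] using p.1.2⟩) ?_
  exact fun p p' h =>
    Subtype.ext (Subtype.ext (Prod.ext (p.2.trans p'.2.symm) (Subtype.ext_iff.1 h)))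

theorem card_incidentPair_snd_eq_le [Finite α] (R : α → β → Prop) [Fintype (IncidentPair R)]
    [DecidableEq β] (y : β) :
    #{p : IncidentPair R | p.1.2 = y} ≤ Nat.card {x // R x y} := by
  rw [← Fintype.card_subtype, ← Nat.card_eq_fintype_card]
  refine Nat.card_le_card_of_injective
    (fun p : {p : IncidentPair R // p.1.2 = y} => ⟨p.1.1.1, by simpa only [p.2] using p.1.2⟩) ?_
  exact fun p p' h =>
    Subtype.ext (Subtype.ext (Prod.ext (Subtype.ext_iff.1 h) (p.2.trans p'.2.symm)))

theorem sum_not_disjoint_pow_card_pairBlock_union_le [DecidableEq α] [DecidableEq β] [Finite α]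
    [Finite β] (R : α → β → Prop) [Fintype (IncidentPair R)] {θ : ℝ} (h0 : 0 ≤ θ) {d e : ℕ}
    (hd : ∀ x, Nat.card {y // R x y} ≤ d) (he : ∀ y, Nat.card {x // R x y} ≤ e)
    (p : IncidentPair R) :
    ∑ p' : IncidentPair R with ¬Disjoint (pairBlock p.1) (pairBlock p'.1),
      θ ^ #(pairBlock p.1 ∪ pairBlock p'.1) ≤ θ ^ 2 + (d + e) * θ ^ 3 := by
  have hfst : (#{p' : IncidentPair R | p'.1.1 = p.1.1} : ℝ) ≤ d := by
    exact_mod_cast (card_incidentPair_fst_eq_le R p.1.1).trans (hd p.1.1)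
  have hsnd : (#{p' : IncidentPair R | p'.1.2 = p.1.2} : ℝ) ≤ e := by
    exact_mod_cast (card_incidentPair_snd_eq_le R p.1.2).trans (he p.1.2)
  calc ∑ p' : IncidentPair R with ¬Disjoint (pairBlock p.1) (pairBlock p'.1),
        θ ^ #(pairBlock p.1 ∪ pairBlock p'.1)
      ≤ ∑ p' : IncidentPair R with ¬Disjoint (pairBlock p.1) (pairBlock p'.1),
        ((if p'.1 = p.1 then θ ^ 2 else 0) +
          ((if p'.1.1 = p.1.1 then θ ^ 3 else 0) + (if p'.1.2 = p.1.2 then θ ^ 3 else 0))) :=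
        sum_le_sum fun p' hp' => pow_card_pairBlock_union_le h0 (mem_filter.1 hp').2
    _ ≤ ∑ p' : IncidentPair R, ((if p'.1 = p.1 then θ ^ 2 else 0) +
          ((if p'.1.1 = p.1.1 then θ ^ 3 else 0) + (if p'.1.2 = p.1.2 then θ ^ 3 else 0))) :=
        sum_le_sum_of_subset_of_nonneg (filter_subset _ _) fun _ _ _ => by positivity
    _ = θ ^ 2 + (#{p' : IncidentPair R | p'.1.1 = p.1.1} +
          #{p' : IncidentPair R | p'.1.2 = p.1.2}) * θ ^ 3 := by
        simp [sum_add_distrib, ← Subtype.ext_iff, ← sum_filter, add_mul]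
    _ ≤ θ ^ 2 + (d + e) * θ ^ 3 := by gcongr

section Bounds

variable [Finite α] [Finite β] (R : α → β → Prop) {θ : ℝ}

theorem incidentPairProb_nonneg (h0 : 0 ≤ θ) (h1 : θ ≤ 1) : 0 ≤ incidentPairProb R θ := by
  have := Fintype.ofFinite α
  have := Fintype.ofFinite β
  exact incidentPairProb_eq_subsetProb R θ ▸ subsetProb_nonneg h0 h1 _

theorem incidentPairProb_le_one (h0 : 0 ≤ θ) (h1 : θ ≤ 1) : incidentPairProb R θ ≤ 1 := by
  have := Fintype.ofFinite α
  have := Fintype.ofFinite β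
  exact incidentPairProb_eq_subsetProb R θ ▸ subsetProb_le_one h0 h1 _

theorem incidentPairProb_le_card_mul (h0 : 0 ≤ θ) (h1 : θ ≤ 1) :
    incidentPairProb R θ ≤ Nat.card α * θ := by
  have := Fintype.ofFinite α
  have := Fintype.ofFinite β
  calc incidentPairProb R θ
      ≤ subsetProb θ {C : Finset (α ⊕ β) | ∃ x : α, {Sum.inl x} ⊆ C} := by
        rw [incidentPairProb_eq_subsetProb]
        refine subsetProb_mono h0 h1 ?_
        rintro C ⟨p, hp⟩
        exact ⟨p.1.1, subset_trans (by simp [pairBlock]) hp⟩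
    _ ≤ ∑ x : α, θ ^ #({Sum.inl x} : Finset (α ⊕ β)) := subsetProb_exists_subset_le h0 h1 _
    _ = Nat.card α * θ := by simp

theorem incidentPairProb_le_card_incidentPair_mul_sq (h0 : 0 ≤ θ) (h1 : θ ≤ 1) :
    incidentPairProb R θ ≤ Nat.card (IncidentPair R) * θ ^ 2 := by
  have := Fintype.ofFinite α
  have := Fintype.ofFinite β
  have := Fintype.ofFinite (IncidentPair R)
  rw [incidentPairProb_eq_subsetProb]
  refine (subsetProb_exists_subset_le h0 h1 _).trans_eq ?_
  simp [card_pairBlock]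

theorem card_incidentPair_mul_sq_mul_one_sub_incidentPairProb_le (h0 : 0 ≤ θ) (h1 : θ ≤ 1)
    {d e : ℕ} (hd : ∀ x, Nat.card {y // R x y} ≤ d) (he : ∀ y, Nat.card {x // R x y} ≤ e) :
    Nat.card (IncidentPair R) * θ ^ 2 * (1 - incidentPairProb R θ) ≤ 1 + (d + e) * θ := by
  classical
  have := Fintype.ofFinite α
  have := Fintype.ofFinite β
  have := Fintype.ofFinite (IncidentPair R)
  set μ : ℝ := Nat.card (IncidentPair R) * θ ^ 2 with hμ
  have hμ0 : 0 ≤ μ := by positivity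
  have hmean : ∑ p : IncidentPair R, θ ^ #(pairBlock p.1) = μ := by simp [card_pairBlock, hμ]
  have hmoment : μ * (μ * (1 - incidentPairProb R θ)) ≤ μ * (1 + (d + e) * θ) :=
    calc μ * (μ * (1 - incidentPairProb R θ))
        = (∑ p : IncidentPair R, θ ^ #(pairBlock p.1)) ^ 2 * (1 - incidentPairProb R θ) := by
          rw [hmean]; ring
      _ ≤ ∑ _p : IncidentPair R, (θ ^ 2 + (d + e) * θ ^ 3) := by
          rw [incidentPairProb_eq_subsetProb]
          exact (sq_mean_mul_one_sub_subsetProb_exists_subset_le h0 h1 _).trans <|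
            sum_le_sum fun p _ => sum_not_disjoint_pow_card_pairBlock_union_le R h0 hd he p
      _ = μ * (1 + (d + e) * θ) := by
          rw [sum_const, card_univ, ← Nat.card_eq_fintype_card, nsmul_eq_mul, hμ]; ring
  obtain hzero | hpos := hμ0.eq_or_lt
  · rw [← hzero, zero_mul]
    positivity
  · exact le_of_mul_le_mul_left hmoment hpos

end Bounds

theorem natCard_incidentPair [Finite α] [Finite β] {R : α → β → Prop} {d : ℕ}
    (hd : ∀ x, Nat.card {y // R x y} = d) : Nat.card (IncidentPair R) = Nat.card α * d := by
  have := Fintype.ofFinite α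
  rw [Nat.card_congr (Equiv.subtypeProdEquivSigmaSubtype R), Nat.card_sigma]
  simp [hd]

end IncidentPair

section Subspaces

open Module

variable (K V : Type*) [Field K] [AddCommGroup V] [Module K V]

-- The graphs of the linear maps from `K ^ m` to `K ^ (n - m)` are distinct subspaces of `K ^ n`.
theorem pow_le_card_submodule_finrank_eq [Finite V] {m : ℕ} (hm : m ≤ finrank K V) :
    Nat.card K ^ (m * (finrank K V - m)) ≤ Nat.card {W : Submodule K V // finrank K W = m} := by
  have hfinrank : finrank K ((Fin m → K) × (Fin (finrank K V - m) → K)) = finrank K V := by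
    simp [hm]
  let φ := LinearEquiv.ofFinrankEq _ _ hfinrank
  let graph (f : (Fin m → K) →ₗ[K] (Fin (finrank K V - m) → K)) :
      {W : Submodule K V // finrank K W = m} :=
    ⟨f.graph.map φ.toLinearMap, by
      rw [LinearEquiv.finrank_map_eq, LinearMap.graph_eq_range_prod,
        LinearMap.finrank_range_of_inj fun x y h => (Prod.ext_iff.1 h).1, finrank_fin_fun]⟩
  have hgraph : Function.Injective graph := by
    intro f g h
    have hfg : f.graph = g.graph :=
      Submodule.map_injective_of_injective φ.injective (Subtype.ext_iff.1 h)
    refine LinearMap.ext fun x => (g.mem_graph_iff _).1 (?_ : (x, f x) ∈ g.graph)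
    exact hfg ▸ (f.mem_graph_iff _).2 rfl
  have hcard : Nat.card ((Fin m → K) →ₗ[K] (Fin (finrank K V - m) → K)) =
      Nat.card K ^ (m * (finrank K V - m)) := by
    rw [natCard_eq_pow_finrank (K := K), finrank_linearMap, finrank_fin_fun, finrank_fin_fun]
  exact hcard ▸ Nat.card_le_card_of_injective graph hgraph

theorem card_submodule_finrank_eq_one_le [Finite K] :
    Nat.card {W : Submodule K V // finrank K W = 1} ≤ 2 * Nat.card K ^ (finrank K V - 1) := by
  rw [← Nat.card_congr (Projectivization.equivSubmodule K V),
    Projectivization.card_of_finrank K V rfl]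
  rcases finrank K V with _ | k
  · simp
  · rw [Finset.sum_range_succ, Nat.add_sub_cancel, two_mul]
    gcongr
    exact (Nat.geomSum_lt Finite.one_lt_card fun i hi => Finset.mem_range.1 hi).le

theorem card_submodule_finrank_eq_card_dual [FiniteDimensional K V] {m : ℕ}
    (hm : m ≤ finrank K V) :
    Nat.card {W : Submodule K V // finrank K W = m} =
      Nat.card {W : Submodule K (Dual K V) // finrank K W = finrank K V - m} := by
  refine Nat.card_congr <| (Subspace.orderIsoFiniteDimensional.toEquiv.trans
    OrderDual.ofDual).subtypeEquiv fun W => ?_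
  have := Subspace.finrank_add_finrank_dualAnnihilator_eq W
  change finrank K W = m ↔ finrank K W.dualAnnihilator = finrank K V - m
  lia

theorem card_submodule_finrank_eq_le [Finite K] [FiniteDimensional K V] {m : ℕ}
    (hm : m = 1 ∨ m + 1 = finrank K V) :
    Nat.card {W : Submodule K V // finrank K W = m} ≤
      2 * Nat.card K ^ (m * (finrank K V - m)) := by
  rcases hm with rfl | hm
  · simpa using card_submodule_finrank_eq_one_le K V
  · have hcodim : finrank K V - m = 1 := by lia
    have hdim : m = finrank K V - 1 := by lia
    rw [card_submodule_finrank_eq_card_dual K V (by lia), hcodim, mul_one, hdim]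
    simpa only [Subspace.dual_finrank_eq] using card_submodule_finrank_eq_one_le K (Dual K V)

/-- The bijection sending a subspace `W` of dimension `m` to the flat `x + W` through `x`. -/
noncomputable def submoduleEquivFlatsThrough (m : ℕ) (x : V) :
    {W : Submodule K V // finrank K W = m} ≃ {S : {S : Set V // IsFlat K m S} // x ∈ S.1} :=
  Equiv.ofBijective
    (fun W => ⟨⟨(x + ·) '' (W.1 : Set V), W.1, W.2, x, rfl⟩, 0, W.1.zero_mem, add_zero x⟩) <| by
    constructor
    · intro W W' h
      have himage : (x + ·) '' (W.1 : Set V) = (x + ·) '' (W'.1 : Set V) :=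
        Subtype.ext_iff.1 (Subtype.ext_iff.1 h)
      exact Subtype.ext (SetLike.coe_injective ((add_right_injective x).image_injective himage))
    · rintro ⟨⟨S, W, hW, v, rfl⟩, w, hw, rfl⟩
      refine ⟨⟨W, hW⟩, Subtype.ext (Subtype.ext (Set.Subset.antisymm ?_ ?_))⟩
      · rintro _ ⟨u, hu, rfl⟩
        exact ⟨w + u, W.add_mem hw hu, (add_assoc v w u).symm⟩
      · rintro _ ⟨u, hu, rfl⟩
        exact ⟨u - w, W.sub_mem hu hw, by simp [add_assoc]⟩

variable {K V} in
theorem IsFlat.natCard_eq [FiniteDimensional K V] {m : ℕ} {S : Set V} (hS : IsFlat K m S) :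
    Nat.card S = Nat.card K ^ m := by
  obtain ⟨W, rfl, v, rfl⟩ := hS
  rw [Nat.card_image_of_injective (add_right_injective v)]
  exact natCard_eq_pow_finrank (K := K) (V := W)

end Subspaces

section PointFlat

open Module

variable (K V : Type*) [Field K] [AddCommGroup V] [Module K V]

theorem natCard_flats_through (m : ℕ) (x : V) :
    Nat.card {S : {S : Set V // IsFlat K m S} // x ∈ S.1} =
      Nat.card {W : Submodule K V // finrank K W = m} :=
  Nat.card_congr (submoduleEquivFlatsThrough K V m x).symm

variable [Finite V]

/-- The probability that a random set of points and an independent random set of `m`-flats of `V`,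
both of density `θ`, contain a point and a flat through it. -/
noncomputable def pointFlatProb (m : ℕ) (θ : ℝ) : ℝ :=
  incidentPairProb (fun (x : V) (S : {S : Set V // IsFlat K m S}) => x ∈ S.1) θ

theorem natCard_incidentPair_point_flat (m : ℕ) :
    Nat.card (IncidentPair fun (x : V) (S : {S : Set V // IsFlat K m S}) => x ∈ S.1) =
      Nat.card K ^ finrank K V * Nat.card {W : Submodule K V // finrank K W = m} := by
  rw [natCard_incidentPair (natCard_flats_through K V m), natCard_eq_pow_finrank (K := K) (V := V)]

variable {θ : ℝ}

theorem pointFlatProb_le (m : ℕ) (h0 : 0 ≤ θ) (h1 : θ ≤ 1) :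
    pointFlatProb K V m θ ≤ (Nat.card K : ℝ) ^ finrank K V * θ := by
  refine (incidentPairProb_le_card_mul _ h0 h1).trans_eq ?_
  rw [natCard_eq_pow_finrank (K := K), Nat.cast_pow]

variable {m : ℕ} [Finite K]

theorem pointFlatProb_le_of_eq_one_or_add_one_eq (hm : m = 1 ∨ m + 1 = finrank K V) (h0 : 0 ≤ θ)
    (h1 : θ ≤ 1) :
    pointFlatProb K V m θ ≤
      2 * (Nat.card K : ℝ) ^ (finrank K V + m * (finrank K V - m)) * θ ^ 2 := by
  refine (incidentPairProb_le_card_incidentPair_mul_sq _ h0 h1).trans ?_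
  gcongr
  rw [natCard_incidentPair_point_flat, pow_add, mul_left_comm]
  exact_mod_cast Nat.mul_le_mul_left _ (card_submodule_finrank_eq_le K V hm)

theorem one_sub_pointFlatProb_le (hm : m < finrank K V) (h0 : 0 < θ) (h1 : θ ≤ 1) :
    1 - pointFlatProb K V m θ ≤ 2 / ((Nat.card K : ℝ) ^ finrank K V * θ) +
      1 / ((Nat.card K : ℝ) ^ (finrank K V + m * (finrank K V - m)) * θ ^ 2) := by
  set q := Nat.card K
  set n := finrank K V
  set D := Nat.card {W : Submodule K V // finrank K W = m}
  have hq1 : 1 ≤ q := Finite.card_pos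
  have hqD : q ^ (m * (n - m)) ≤ D := pow_le_card_submodule_finrank_eq K V hm.le
  have hmD : q ^ m ≤ D :=
    (Nat.pow_le_pow_right hq1 (Nat.le_mul_of_pos_right m (Nat.sub_pos_of_lt hm))).trans hqD
  have hD0 : (0 : ℝ) < D := by exact_mod_cast (pow_pos hq1 m).trans_le hmD
  have : (0 : ℝ) < q := by exact_mod_cast hq1
  have hchebyshev : (q ^ n * D : ℝ) * θ ^ 2 * (1 - pointFlatProb K V m θ) ≤ 1 + (D + D) * θ := by
    have := card_incidentPair_mul_sq_mul_one_sub_incidentPairProb_le _ h0.le h1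
      (fun x => (natCard_flats_through K V m x).le) (fun S => (S.2.natCard_eq.le.trans hmD))
    rw [natCard_incidentPair_point_flat] at this
    exact_mod_cast this
  calc 1 - pointFlatProb K V m θ
      ≤ (1 + (D + D) * θ) / (q ^ n * D * θ ^ 2) := by
        rw [le_div_iff₀' (by positivity)]
        exact hchebyshev
    _ = 2 / (q ^ n * θ) + 1 / (q ^ n * D * θ ^ 2) := by field_simp; ring
    _ ≤ 2 / (q ^ n * θ) + 1 / (q ^ (n + m * (n - m)) * θ ^ 2) := by
        rw [pow_add]
        gcongr
        exact_mod_cast hqD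

end PointFlat

section Exponents

variable {m n : ℕ}

theorem sub_mul_add_one_add_self (hm : m ≤ n) : (n - m) * (m + 1) + m = n + m * (n - m) := by
  obtain ⟨k, rfl⟩ := Nat.exists_eq_add_of_le hm
  rw [Nat.add_sub_cancel_left]
  ring

theorem two_mul_le_add_mul_sub (hm : 2 ≤ m) (hn : m + 2 ≤ n) : 2 * n ≤ n + m * (n - m) := by
  obtain ⟨k, rfl⟩ := Nat.exists_eq_add_of_le hn
  have : m + 2 + k - m = k + 2 := by lia
  rw [this]
  nlinarith

theorem add_mul_sub_le_two_mul (h : m = 1 ∨ m + 1 = n) : n + m * (n - m) ≤ 2 * n := by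
  rcases h with rfl | rfl
  · lia
  · rw [Nat.add_sub_cancel_left]
    lia

theorem pow_mul_sq_rpow_neg_half {q : ℝ} (hq : 0 < q) (k : ℕ) :
    q ^ k * (q ^ (-(k : ℝ) / 2)) ^ 2 = 1 := by
  rw [← Real.rpow_natCast (q ^ _), ← Real.rpow_mul hq.le, ← Real.rpow_natCast q,
    ← Real.rpow_add hq]
  simp

theorem one_le_pow_mul_rpow_neg_half {q : ℝ} (hq : 1 ≤ q) {k n : ℕ} (hk : k ≤ 2 * n) :
    1 ≤ q ^ n * q ^ (-(k : ℝ) / 2) := by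
  have : (k : ℝ) ≤ 2 * n := by exact_mod_cast hk
  rw [← Real.rpow_natCast, ← Real.rpow_add (one_pos.trans_le hq)]
  exact Real.one_le_rpow hq (by linarith)

end Exponents

section Threshold

open Topology Module

variable {ι : Type*} {l : Filter ι}

/-- `t` is a threshold function, along `l`, for a sequence of events whose probability at density
`θ` is `p i θ`. Only densities in the unit interval are tested. -/
def IsThreshold (l : Filter ι) (p : ι → ℝ → ℝ) (t : ι → ℝ) : Prop :=
  ∀ θ : ι → ℝ, (∀ i, 0 ≤ θ i ∧ θ i ≤ 1) →
    (θ =o[l] t → Tendsto (fun i => p i (θ i)) l (𝓝 0)) ∧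
      (t =o[l] θ → Tendsto (fun i => p i (θ i)) l (𝓝 1))

theorem isThreshold_of_le {p : ι → ℝ → ℝ} {t : ι → ℝ} {f g : ℝ → ℝ} (ht : ∀ i, 0 < t i)
    (hf : Tendsto f (𝓝 0) (𝓝 0)) (hg : Tendsto g (𝓝 0) (𝓝 0))
    (hp0 : ∀ i θ, 0 ≤ θ → θ ≤ 1 → 0 ≤ p i θ) (hp1 : ∀ i θ, 0 ≤ θ → θ ≤ 1 → p i θ ≤ 1)
    (hpf : ∀ i θ, 0 ≤ θ → θ ≤ 1 → p i θ ≤ f (θ / t i))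
    (hpg : ∀ i θ, 0 < θ → θ ≤ 1 → 1 - p i θ ≤ g (t i / θ)) : IsThreshold l p t := by
  refine fun θ hθ => ⟨fun h => ?_, fun h => ?_⟩
  · exact squeeze_zero (fun i => hp0 i _ (hθ i).1 (hθ i).2) (fun i => hpf i _ (hθ i).1 (hθ i).2)
      (hf.comp h.tendsto_div_nhds_zero)
  · have hlower : Tendsto (fun i => 1 - g (t i / θ i)) l (𝓝 1) := by
      simpa using (hg.comp h.tendsto_div_nhds_zero).const_sub 1
    refine tendsto_of_tendsto_of_tendsto_of_le_of_le' hlower tendsto_const_nhds ?_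
      (Eventually.of_forall fun i => hp1 i _ (hθ i).1 (hθ i).2)
    filter_upwards [h.def one_pos] with i hi
    have hne : θ i ≠ 0 := fun h0 => (ht i).ne' (by simpa [h0] using hi)
    linarith [hpg i _ ((hθ i).1.lt_of_ne' hne) (hθ i).2]

variable (F V : ι → Type*) [∀ i, Field (F i)] [∀ i, Finite (F i)] [∀ i, AddCommGroup (V i)]
  [∀ i, Module (F i) (V i)] [∀ i, Finite (V i)] {m : ι → ℕ}

theorem isThreshold_pointFlatProb {t : ι → ℝ} {f : ℝ → ℝ} (hm : ∀ i, m i < finrank (F i) (V i))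
    (hf : Tendsto f (𝓝 0) (𝓝 0))
    (hpf : ∀ i θ, 0 ≤ θ → θ ≤ 1 → pointFlatProb (F i) (V i) (m i) θ ≤ f (θ / t i))
    (hpoints : ∀ i, 1 ≤ (Nat.card (F i) : ℝ) ^ finrank (F i) (V i) * t i)
    (hpairs : ∀ i, 1 ≤ (Nat.card (F i) : ℝ) ^
      (finrank (F i) (V i) + m i * (finrank (F i) (V i) - m i)) * t i ^ 2) :
    IsThreshold l (fun i => pointFlatProb (F i) (V i) (m i)) t := by
  have hg : Tendsto (fun s : ℝ => 2 * s + s ^ 2) (𝓝 0) (𝓝 0) := by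
    have : Continuous fun s : ℝ => 2 * s + s ^ 2 := by fun_prop
    simpa using this.tendsto 0
  have hq (i : ι) : (0 : ℝ) < Nat.card (F i) := by exact_mod_cast Finite.card_pos
  have ht (i : ι) : 0 < t i :=
    (pos_iff_pos_of_mul_pos (one_pos.trans_le (hpoints i))).1 (pow_pos (hq i) _)
  refine isThreshold_of_le ht hf hg (fun i θ => incidentPairProb_nonneg _)
    (fun i θ => incidentPairProb_le_one _) hpf fun i θ h0 h1 => ?_
  have hqi := hq i
  have hti := ht i
  refine (one_sub_pointFlatProb_le (F i) (V i) (hm i) h0 h1).trans (add_le_add ?_ ?_)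
  · rw [div_le_iff₀ (by positivity)]
    calc (2 : ℝ) ≤ 2 * (Nat.card (F i) ^ finrank (F i) (V i) * t i) := by linarith [hpoints i]
      _ = _ := by field_simp
  · rw [div_le_iff₀ (by positivity)]
    refine (hpairs i).trans_eq ?_
    field_simp

theorem isThreshold_pointFlatProb_of_eq_one_or_add_one_eq (hm : ∀ i, m i < finrank (F i) (V i))
    (hcase : ∀ i, m i = 1 ∨ m i + 1 = finrank (F i) (V i)) :
    IsThreshold l (fun i => pointFlatProb (F i) (V i) (m i)) fun i => (Nat.card (F i) : ℝ) ^
      (-(((finrank (F i) (V i) - m i) * (m i + 1) + m i : ℕ) : ℝ) / 2) := by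
  have hq (i : ι) : (1 : ℝ) ≤ Nat.card (F i) := by exact_mod_cast Finite.card_pos (α := F i)
  have hpairs (i : ι) : (Nat.card (F i) : ℝ) ^
      (finrank (F i) (V i) + m i * (finrank (F i) (V i) - m i)) * ((Nat.card (F i) : ℝ) ^
        (-(((finrank (F i) (V i) - m i) * (m i + 1) + m i : ℕ) : ℝ) / 2)) ^ 2 = 1 := by
    rw [← sub_mul_add_one_add_self (hm i).le]
    exact pow_mul_sq_rpow_neg_half (one_pos.trans_le (hq i)) _
  have hf : Tendsto (fun s : ℝ => 2 * s ^ 2) (𝓝 0) (𝓝 0) := by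
    have : Continuous fun s : ℝ => 2 * s ^ 2 := by fun_prop
    simpa using this.tendsto 0
  refine isThreshold_pointFlatProb F V hm hf (fun i θ h0 h1 => ?_) (fun i => ?_)
    fun i => (hpairs i).ge
  · refine (pointFlatProb_le_of_eq_one_or_add_one_eq (F i) (V i) (hcase i) h0 h1).trans_eq ?_
    rw [eq_one_div_of_mul_eq_one_left (hpairs i), div_pow]
    ring
  · refine one_le_pow_mul_rpow_neg_half (hq i) ?_
    rw [sub_mul_add_one_add_self (hm i).le]
    exact add_mul_sub_le_two_mul (hcase i)

theorem isThreshold_pointFlatProb_of_two_le (hm : ∀ i, 2 ≤ m i)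
    (hm' : ∀ i, m i + 2 ≤ finrank (F i) (V i)) :
    IsThreshold l (fun i => pointFlatProb (F i) (V i) (m i))
      fun i => (Nat.card (F i) : ℝ) ^ (-(finrank (F i) (V i) : ℝ)) := by
  have hq (i : ι) : (1 : ℝ) ≤ Nat.card (F i) := by exact_mod_cast Finite.card_pos (α := F i)
  simp only [Real.rpow_neg (Nat.cast_nonneg _), Real.rpow_natCast]
  refine isThreshold_pointFlatProb F V (fun i => by have := hm' i; lia) tendsto_id
    (fun i θ h0 h1 => ?_) (fun i => ?_) fun i => ?_
  · rw [id, div_inv_eq_mul, mul_comm]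
    exact pointFlatProb_le (F i) (V i) (m i) h0 h1
  · have := hq i
    exact (mul_inv_cancel₀ (by positivity)).ge
  · have := hq i
    rw [inv_pow, ← div_eq_mul_inv, one_le_div (by positivity), ← pow_mul']
    exact pow_le_pow_right₀ (hq i) (two_mul_le_add_mul_sub (hm i) (hm' i))

theorem stmt10_general (hm : ∀ i, 1 ≤ m i ∧ m i < finrank (F i) (V i)) :
    ((∀ i, m i = 1 ∨ m i = finrank (F i) (V i) - 1) →
      IsThreshold l (fun i => pointFlatProb (F i) (V i) (m i)) fun i => (Nat.card (F i) : ℝ) ^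
        (-(((finrank (F i) (V i) - m i) * (m i + 1) + m i : ℕ) : ℝ) / 2)) ∧
    ((∀ i, m i ≠ 1 ∧ m i ≠ finrank (F i) (V i) - 1) →
      IsThreshold l (fun i => pointFlatProb (F i) (V i) (m i))
        fun i => (Nat.card (F i) : ℝ) ^ (-(finrank (F i) (V i) : ℝ))) := by
  refine ⟨fun h => ?_, fun h => ?_⟩
  · exact isThreshold_pointFlatProb_of_eq_one_or_add_one_eq F V (fun i => (hm i).2)
      fun i => by have := hm i; have := h i; lia
  · exact isThreshold_pointFlatProb_of_two_le F V (fun i => by have := hm i; have := h i; lia)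
      fun i => by have := hm i; have := h i; lia

end Threshold

theorem stmt10 (n m q : ℕ → ℕ) (F : ℕ → Type) [∀ i, Field (F i)] [∀ i, Fintype (F i)]
    (hm : ∀ i, 1 ≤ m i ∧ m i < n i)
    (hq : ∀ i, Fintype.card (F i) = q i) (hqpp : ∀ i, IsPrimePow (q i))
    (hnq : Tendsto (fun i => n i + q i) atTop atTop)
    (θ : ℕ → ℝ) (hθ : ∀ i, 0 ≤ θ i ∧ θ i ≤ 1) :
    ((∀ i, m i = 1 ∨ m i = n i - 1) →
      (θ =o[atTop] (fun i => (q i : ℝ) ^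
          (-((((n i - m i) * (m i + 1) + m i : ℕ) : ℝ)) / 2)) →
        Tendsto (fun i => prPairRandomSubset (β := {S : Set (Fin (n i) → F i) // IsFlat (F i) (m i) S}) (θ i)
          (fun A B => ∃ x ∈ A, ∃ S ∈ B, x ∈ (S : {S : Set (Fin (n i) → F i) // IsFlat (F i) (m i) S}).val))
          atTop (nhds 0)) ∧
      ((fun i => (q i : ℝ) ^ (-((((n i - m i) * (m i + 1) + m i : ℕ) : ℝ)) / 2)) =o[atTop] θ →
        Tendsto (fun i => prPairRandomSubset (β := {S : Set (Fin (n i) → F i) // IsFlat (F i) (m i) S}) (θ i)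
          (fun A B => ∃ x ∈ A, ∃ S ∈ B, x ∈ (S : {S : Set (Fin (n i) → F i) // IsFlat (F i) (m i) S}).val))
          atTop (nhds 1))) ∧
    ((∀ i, m i ≠ 1 ∧ m i ≠ n i - 1) →
      (θ =o[atTop] (fun i => (q i : ℝ) ^ (-(n i : ℝ))) →
        Tendsto (fun i => prPairRandomSubset (β := {S : Set (Fin (n i) → F i) // IsFlat (F i) (m i) S}) (θ i)
          (fun A B => ∃ x ∈ A, ∃ S ∈ B, x ∈ (S : {S : Set (Fin (n i) → F i) // IsFlat (F i) (m i) S}).val))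
          atTop (nhds 0)) ∧
      ((fun i => (q i : ℝ) ^ (-(n i : ℝ))) =o[atTop] θ →
        Tendsto (fun i => prPairRandomSubset (β := {S : Set (Fin (n i) → F i) // IsFlat (F i) (m i) S}) (θ i)
          (fun A B => ∃ x ∈ A, ∃ S ∈ B, x ∈ (S : {S : Set (Fin (n i) → F i) // IsFlat (F i) (m i) S}).val))
          atTop (nhds 1))) := by
  have h := stmt10_general (l := atTop) F (fun i => Fin (n i) → F i) (by simpa using hm)
  simp only [Module.finrank_fin_fun, Nat.card_eq_fintype_card, hq] at h
  exact ⟨fun hc => h.1 hc θ hθ, fun hc => h.2 hc θ hθ⟩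
end
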